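/- Let q be an odd prime power and F a finite field with q elements, and let G = PSp₄(F) be the quotient of the symplectic group Sp(4,F) by its center. Then G has a maximal subgroup H of odd index admitting a normal subgroup N ⊴ H with Nat.card N = 16, g·g = 1 for all g ∈ N, and H/N isomorphic to the alternating group A₅, if and only if q is prime and q ≡ ±3 (mod 8) (equivalently, q mod 8 ∈ {3, 5}). (Such an H is a group of shape 2⁴.A₅.) -/

import Mathlib

open scoped Quaternion

namespace PSp4

section Basics

variable {F : Type} [Field F]

/-- The `2 × 2` matrices over the quaternions, with conjugate transpose as involution. -/
abbrev M (F : Type) [Field F] := Matrix (Fin 2) (Fin 2) ℍ[F]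

/-- The quaternion with given coordinates. -/
def qm (a b c d : F) : ℍ[F] := ⟨a, b, c, d⟩

@[simp] theorem qm_re (a b c d : F) : (qm a b c d).re = a := rfl
@[simp] theorem qm_imI (a b c d : F) : (qm a b c d).imI = b := rfl
@[simp] theorem qm_imJ (a b c d : F) : (qm a b c d).imJ = c := rfl
@[simp] theorem qm_imK (a b c d : F) : (qm a b c d).imK = d := rfl

theorem qm_add (a b c d a' b' c' d' : F) :
    qm a b c d + qm a' b' c' d' = qm (a + a') (b + b') (c + c') (d + d') := by
  ext <;> simp
theorem qm_mul (a b c d a' b' c' d' : F) : qm a b c d * qm a' b' c' d' =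
    qm (a * a' - b * b' - c * c' - d * d') (a * b' + b * a' + c * d' - d * c')
      (a * c' - b * d' + c * a' + d * b') (a * d' + b * c' - c * b' + d * a') := by
  ext <;> simp
theorem smul_qm (t a b c d : F) : t • qm a b c d = qm (t * a) (t * b) (t * c) (t * d) := by
  ext <;> simp
theorem qm_neg (a b c d : F) : -qm a b c d = qm (-a) (-b) (-c) (-d) := by
  ext <;> simp
theorem star_qm (a b c d : F) : star (qm a b c d) = qm a (-b) (-c) (-d) := by
  ext <;> simp
theorem qm_one : (qm 1 0 0 0 : ℍ[F]) = 1 := by ext <;> simp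
theorem qm_zero : (qm 0 0 0 0 : ℍ[F]) = 0 := by ext <;> simp

/-- The Clifford embedding of the five-dimensional orthogonal space as trace zero self-adjoint
matrices. -/
def E : (Fin 5 → F) →ₗ[F] M F where
  toFun v := !![qm (v 0) 0 0 0, qm (v 1) (v 2) (v 3) (v 4);
    qm (v 1) (-v 2) (-v 3) (-v 4), qm (-v 0) 0 0 0]
  map_add' v w := by
    ext i j <;> fin_cases i <;> fin_cases j <;> simp <;> ring
  map_smul' c v := by
    ext i j <;> fin_cases i <;> fin_cases j <;> simp

/-- The coordinates of a matrix along `E`. -/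
def coord : M F →ₗ[F] (Fin 5 → F) where
  toFun X := ![(X 0 0).re, (X 0 1).re, (X 0 1).imI, (X 0 1).imJ, (X 0 1).imK]
  map_add' v w := by
    ext i; fin_cases i <;> simp
  map_smul' c v := by
    ext i; fin_cases i <;> simp

theorem coord_E (v : Fin 5 → F) : coord (E v) = v := by
  ext i; fin_cases i <;> simp [coord, E]

theorem E_injective : Function.Injective (E : (Fin 5 → F) →ₗ[F] M F) :=
  Function.LeftInverse.injective coord_E

theorem star_E (v : Fin 5 → F) : star (E v) = E v := by
  ext i j <;> fin_cases i <;> fin_cases j <;> simp [E, Matrix.star_apply]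

theorem E_mul_add (v w : Fin 5 → F) : E v * E w + E w * E v = (2 * (v ⬝ᵥ w)) • (1 : M F) := by
  simp only [E, LinearMap.coe_mk, AddHom.coe_mk, Matrix.mul_fin_two, Matrix.one_fin_two, dotProduct,
    Fin.sum_univ_five, qm_mul, qm_add, Matrix.smul_of, Matrix.of_add_of, ← qm_one, ← qm_zero,
    Matrix.cons_add_cons, Matrix.smul_cons, smul_qm, Matrix.empty_add_empty, Matrix.smul_empty]
  congr 5 <;> ring_nf

/-- Real part of the trace. -/
def tr : M F →ₗ[F] F where
  toFun X := (X 0 0).re + (X 1 1).re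
  map_add' v w := by simp; ring
  map_smul' c v := by simp; ring

theorem tr_mul_comm (X Y : M F) : tr (X * Y) = tr (Y * X) := by
  simp [tr, Matrix.mul_apply]; ring

@[simp] theorem tr_one : tr (1 : M F) = 2 := by simp [tr]; norm_num

theorem tr_star (X : M F) : tr (star X) = tr X := by
  simp [tr, Matrix.star_apply]

@[simp] theorem tr_E (v : Fin 5 → F) : tr (E v) = 0 := by simp [tr, E]

theorem E_mul_self (v : Fin 5 → F) [NeZero (2 : F)] : E v * E v = (v ⬝ᵥ v) • (1 : M F) := by
  have h := E_mul_add v v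
  rw [← two_smul F, mul_smul] at h
  exact smul_right_injective _ (NeZero.ne (2 : F)) h

theorem E_coord [NeZero (2 : F)] {X : M F} (hX : star X = X) (ht : tr X = 0) :
    E (coord X) = X := by
  have h2 := NeZero.ne (2 : F)
  have key : ∀ {a : F}, -a = a → a = 0 := fun {a} h => by
    have : 2 * a = 0 := by linear_combination -h
    simpa [h2] using this
  have h00 := congr_fun (congr_fun hX 0) 0
  have h01 := congr_fun (congr_fun hX 1) 0
  have h11 := congr_fun (congr_fun hX 1) 1
  simp only [Matrix.star_apply, Quaternion.ext_iff] at h00 h01 h11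
  simp at h00 h01 h11
  simp [tr] at ht
  ext i j <;> fin_cases i <;> fin_cases j <;> simp [E, coord] <;> grind

/-- The standard basis matrices. -/
def e (i : Fin 5) : M F := E (Pi.single i 1)

theorem e_mul_self [NeZero (2 : F)] (i : Fin 5) : (e i * e i : M F) = 1 := by
  simp [e, E_mul_self]

theorem e_anticomm {i j : Fin 5} (h : i ≠ j) : (e i * e j : M F) = -(e j * e i) := by
  have := E_mul_add (F := F) (Pi.single i 1) (Pi.single j 1)
  simp [h] at this
  exact eq_neg_of_add_eq_zero_left this

theorem star_e (i : Fin 5) : star (e i : M F) = e i := star_E _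

theorem e_zero : (e 0 : M F) = !![1, 0; 0, -1] := by
  ext i j <;> fin_cases i <;> fin_cases j <;> simp [e, E]
theorem e_one : (e 1 : M F) = !![0, 1; 1, 0] := by
  ext i j <;> fin_cases i <;> fin_cases j <;> simp [e, E]
theorem e_two : (e 2 : M F) = !![0, qm 0 1 0 0; qm 0 (-1) 0 0, 0] := by
  ext i j <;> fin_cases i <;> fin_cases j <;> simp [e, E]
theorem e_three : (e 3 : M F) = !![0, qm 0 0 1 0; qm 0 0 (-1) 0, 0] := by
  ext i j <;> fin_cases i <;> fin_cases j <;> simp [e, E]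
theorem e_four : (e 4 : M F) = !![0, qm 0 0 0 1; qm 0 0 0 (-1), 0] := by
  ext i j <;> fin_cases i <;> fin_cases j <;> simp [e, E]

theorem eq_smul_one_of_commute [NeZero (2 : F)] {X : M F} (h0 : X * e 0 = e 0 * X)
    (h1 : X * e 1 = e 1 * X) (h2 : X * e 2 = e 2 * X) (h3 : X * e 3 = e 3 * X) :
    ∃ c : F, X = c • 1 := by
  have hh2 := NeZero.ne (2 : F)
  have key : ∀ {a : F}, -a = a → a = 0 := fun {a} h => by
    have : 2 * a = 0 := by linear_combination -h
    simpa [hh2] using this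
  refine ⟨(X 0 0).re, ?_⟩
  rw [e_zero] at h0
  rw [e_one] at h1
  rw [e_two] at h2
  rw [e_three] at h3
  simp only [← Matrix.ext_iff, Fin.forall_fin_two] at h0 h1 h2 h3
  simp [Quaternion.ext_iff, Matrix.mul_apply] at h0 h1 h2 h3
  ext i j <;> fin_cases i <;> fin_cases j <;> simp <;> grind

end Basics

section Action

variable {F : Type} [Field F]

theorem star_smul_M (c : F) (X : M F) : star (c • X) = c • star X := by
  ext i j <;> simp [Matrix.star_apply]

theorem tr_conj {g : M F} (hg : g ∈ unitary (M F)) (X : M F) : tr (g * X * star g) = tr X := by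
  rw [mul_assoc, tr_mul_comm, mul_assoc, Unitary.star_mul_self_of_mem hg, mul_one]

variable [NeZero (2 : F)]

theorem E_coord_conj {g : M F} (hg : g ∈ unitary (M F)) (v : Fin 5 → F) :
    E (coord (g * E v * star g)) = g * E v * star g :=
  E_coord (by simp [star_E, mul_assoc]) (by simp [tr_conj hg])

/-- The action of the unitary group on the five-dimensional orthogonal space. -/
def ρ : unitary (M F) →* Module.End F (Fin 5 → F) where
  toFun g := coord ∘ₗ (LinearMap.mulLeft F g.1) ∘ₗ
    (LinearMap.mulRight F (star g.1)) ∘ₗ E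
  map_one' := by apply LinearMap.ext; intro v; simp [coord_E]
  map_mul' g h := by
    apply LinearMap.ext
    intro v
    have := E_coord_conj h.2 v
    rw [mul_assoc] at this
    simp [this, mul_assoc]

theorem E_ρ (g : unitary (M F)) (v : Fin 5 → F) : E (ρ g v) = g.1 * E v * star g.1 := by
  have := E_coord_conj g.2 v
  rw [← this]
  simp [ρ, mul_assoc]

theorem dot_ρ (g : unitary (M F)) (v w : Fin 5 → F) : ρ g v ⬝ᵥ ρ g w = v ⬝ᵥ w := by
  have h := E_mul_add (ρ g v) (ρ g w)
  have h' : E (ρ g v) * E (ρ g w) + E (ρ g w) * E (ρ g v) = (2 * (v ⬝ᵥ w)) • (1 : M F) := by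
    simp only [E_ρ]
    have e1 : ∀ X Y : M F, g.1 * X * star g.1 * (g.1 * Y * star g.1)
        = g.1 * (X * Y) * star g.1 := fun X Y => by
      simp only [mul_assoc]
      rw [← mul_assoc (star g.1) g.1, Unitary.star_mul_self_of_mem g.2, one_mul]
    rw [e1, e1, ← add_mul, ← mul_add, E_mul_add]
    simp
  rw [h'] at h
  have := congrArg tr h
  simp only [map_smul, tr_one, smul_eq_mul] at this
  have h2 := NeZero.ne (2 : F)
  have h4 : (2 * 2 : F) ≠ 0 := mul_ne_zero h2 h2
  apply mul_left_cancel₀ h4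
  linear_combination -this

theorem E_mem_unitary {v : Fin 5 → F} (hv : v ⬝ᵥ v = 1) : E v ∈ unitary (M F) := by
  rw [Unitary.mem_iff]; simp [star_E, E_mul_self, hv]

theorem e_mem_unitary (i : Fin 5) : (e i : M F) ∈ unitary (M F) := E_mem_unitary (by simp)

theorem e_ne_zero (i : Fin 5) : (e i : M F) ≠ 0 := by
  intro h
  have := e_mul_self (F := F) i
  simp [h] at this

theorem mul_left_cancel_unitary {X : M F} (hX : X ∈ unitary (M F)) {Y Z : M F}
    (h : X * Y = X * Z) : Y = Z := by
  have := congrArg (star X * ·) h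
  simpa [← mul_assoc, Unitary.star_mul_self_of_mem hX] using this

theorem unit_smul_eq_iff {u u' : ℤˣ} {X : M F} (hX : X ≠ 0) (h : u • X = u' • X) : u = u' := by
  have h2 := NeZero.ne (2 : F)
  have key : -X = X → False := fun h => by
    have : (2 : F) • X = 0 := by rw [two_smul]; nth_rewrite 1 [← h]; simp
    simp_all
  rcases Int.units_eq_one_or u with rfl | rfl <;> rcases Int.units_eq_one_or u' with rfl | rfl <;>
    simp [Units.neg_smul] at h ⊢
  · exact (key h.symm).elim
  · exact (key h).elim

/-- `X` permutes the basis matrices up to signs by conjugation. -/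
def SP (X : M F) (σ : Equiv.Perm (Fin 5)) (s : Fin 5 → ℤˣ) : Prop :=
  ∀ i, X * e i = s i • (e (σ i) * X)

theorem SP.mul {X Y : M F} {σ τ : Equiv.Perm (Fin 5)} {s t : Fin 5 → ℤˣ} (hX : SP X σ s)
    (hY : SP Y τ t) : SP (X * Y) (σ * τ) (fun i => t i * s (τ i)) := fun i => by
  rw [mul_assoc, hY, mul_smul_comm, ← mul_assoc, hX, smul_mul_assoc, smul_smul, mul_assoc]
  rfl

theorem SP.one : SP (1 : M F) 1 1 := fun i => by simp

theorem SP.smul {X : M F} {σ : Equiv.Perm (Fin 5)} {s : Fin 5 → ℤˣ} (hX : SP X σ s) (c : F) :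
    SP (c • X) σ s := fun i => by
  rw [smul_mul_assoc, hX, mul_smul_comm, smul_comm]

theorem SP.star_inv {X : M F} {σ : Equiv.Perm (Fin 5)} {s : Fin 5 → ℤˣ} (hX : SP X σ s) :
    SP (star X) σ⁻¹ (fun i => s (σ⁻¹ i)) := fun i => by
  have h := congrArg star (hX (σ⁻¹ i))
  have h1 : ∀ (u : ℤˣ) (Y : M F), star (u • Y) = u • star Y := fun u Y => by
    rcases Int.units_eq_one_or u with rfl | rfl <;> simp [Units.neg_smul]
  rw [h1] at h
  simp only [star_mul, star_e] at h
  rw [h, smul_smul, Int.units_mul_self, one_smul]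
  simp

theorem SP.perm_eq {X : M F} (hX : X ∈ unitary (M F)) {σ τ : Equiv.Perm (Fin 5)}
    {s t : Fin 5 → ℤˣ} (h : SP X σ s) (h' : SP X τ t) : σ = τ := by
  ext1 i
  by_contra hne
  have := (h i).symm.trans (h' i)
  rw [← smul_mul_assoc, ← smul_mul_assoc] at this
  have := congrArg (· * star X) this
  simp only [mul_assoc, Unitary.mul_star_self_of_mem hX, mul_one] at this
  have h1 : ∀ u : ℤˣ, u • (e (σ i) : M F) = E (u • Pi.single (σ i) 1) := fun u => by
    rcases Int.units_eq_one_or u with rfl | rfl <;> simp [e, Units.neg_smul]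
  have h2 : ∀ u : ℤˣ, u • (e (τ i) : M F) = E (u • Pi.single (τ i) 1) := fun u => by
    rcases Int.units_eq_one_or u with rfl | rfl <;> simp [e, Units.neg_smul]
  rw [h1, h2] at this
  have := congr_fun (E_injective this) (σ i)
  rcases Int.units_eq_one_or (s i) with hs | hs <;> simp [hs, Units.neg_smul, hne] at this

theorem SP.sign_eq {X : M F} (hX : X ∈ unitary (M F)) {σ : Equiv.Perm (Fin 5)}
    {s t : Fin 5 → ℤˣ} (h : SP X σ s) (h' : SP X σ t) : s = t := by
  ext1 i
  have := (h i).symm.trans (h' i)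
  refine unit_smul_eq_iff (fun h0 => ?_) this
  have h0 := congrArg (· * star X) h0
  simp only [mul_assoc, Unitary.mul_star_self_of_mem hX, mul_one, zero_mul] at h0
  exact e_ne_zero _ h0

theorem SP_e (j : Fin 5) : SP (e j : M F) 1 (fun i => if i = j then 1 else -1) := fun i => by
  beta_reduce
  split_ifs with h
  · simp [h]
  · simp [e_anticomm (F := F) (Ne.symm h), Units.neg_smul]

theorem SP_T {i j : Fin 5} (h : i ≠ j) :
    SP (1 + e i * e j : M F) (Equiv.swap i j) (fun m => if m = i then -1 else 1) := fun m => by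
  by_cases h1 : m = i
  · subst h1
    simp only [if_true, Units.neg_smul, one_smul, Equiv.swap_apply_left, add_mul, mul_add, one_mul,
      mul_one]
    rw [mul_assoc, e_anticomm h.symm, ← mul_assoc (e j), e_anticomm h.symm, mul_neg, neg_mul,
      mul_assoc (e m) (e j), ← mul_assoc (e m) (e m), e_mul_self, e_mul_self]
    simp
  by_cases h2 : m = j
  · subst h2
    simp only [h1, if_false, one_smul, Equiv.swap_apply_right, add_mul, mul_add, one_mul, mul_one]
    rw [mul_assoc, ← mul_assoc (e i) (e i), e_mul_self, e_mul_self]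
    simp [add_comm]
  · simp only [h1, if_false, one_smul, Equiv.swap_apply_of_ne_of_ne h1 h2, add_mul, mul_add,
      one_mul, mul_one]
    rw [mul_assoc, e_anticomm (Ne.symm h2), mul_neg, ← mul_assoc, e_anticomm (Ne.symm h1)]
    simp [mul_assoc]

theorem T_mul_star {i j : Fin 5} (h : i ≠ j) :
    (1 + e i * e j : M F) * star (1 + e i * e j : M F) = (2 : F) • 1 := by
  simp only [star_add, star_one, star_mul, star_e]
  have h1 : (e i * e j * (e j * e i) : M F) = 1 := by
    rw [mul_assoc, ← mul_assoc (e j), e_mul_self, one_mul, e_mul_self]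
  rw [add_mul, mul_add, mul_add, h1, e_anticomm h.symm, two_smul]
  noncomm_ring

theorem T_star_mul {i j : Fin 5} (h : i ≠ j) :
    star (1 + e i * e j : M F) * (1 + e i * e j : M F) = (2 : F) • 1 := by
  rw [← T_mul_star h]
  simp only [star_add, star_one, star_mul, star_e]
  rw [e_anticomm h.symm]
  noncomm_ring

/-- Products of pairs of basis matrices realise all sign patterns. -/
theorem exists_diag (s : Fin 4 → ℤˣ) : ∃ Z ∈ unitary (M F), ∃ t : Fin 5 → ℤˣ, SP Z 1 t ∧
    (∀ i : Fin 4, t i.castSucc = s i) ∧ ∏ i, t i = 1 := by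
  have key : ∀ (j : Fin 4) (u : ℤˣ), ∃ Z ∈ unitary (M F),
      SP Z 1 (fun i => if i = j.castSucc ∨ i = 4 then u else 1) := fun j u => by
    rcases Int.units_eq_one_or u with rfl | rfl
    · exact ⟨1, one_mem _, by simpa using! SP.one⟩
    · refine ⟨e j.castSucc * e 4, mul_mem (e_mem_unitary _) (e_mem_unitary _), ?_⟩
      have h := (SP_e (F := F) j.castSucc).mul (SP_e 4)
      have hs : (fun i : Fin 5 => (if i = 4 then (1 : ℤˣ) else -1) *
          if (1 : Equiv.Perm (Fin 5)) i = j.castSucc then 1 else -1) =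
          fun i => if i = j.castSucc ∨ i = 4 then -1 else 1 := by
        clear h
        ext i
        revert i j
        decide
      rw [hs] at h
      exact h
  choose Z hZ hS using key
  refine ⟨Z 0 (s 0) * Z 1 (s 1) * Z 2 (s 2) * Z 3 (s 3), mul_mem (mul_mem (mul_mem (hZ _ _)
    (hZ _ _)) (hZ _ _)) (hZ _ _), ![s 0, s 1, s 2, s 3, s 0 * s 1 * s 2 * s 3], ?_, ?_, ?_⟩
  · intro i
    rw [(((hS _ _).mul (hS _ _)).mul (hS _ _)).mul (hS _ _) i]
    refine congrArg₂ (· • ·) ?_ rfl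
    generalize s 0 = a, s 1 = b, s 2 = c, s 3 = d
    fin_cases i <;> simp [Fin.ext_iff]
    simp [mul_comm, mul_left_comm]
  · intro i
    fin_cases i <;> rfl
  · generalize s 0 = a, s 1 = b, s 2 = c, s 3 = d
    simp only [Fin.prod_univ_five, Matrix.cons_val]
    exact Int.units_mul_self _

theorem eq_smul_of_SP {X Z : M F} (hZ : Z ∈ unitary (M F)) {s t : Fin 5 → ℤˣ} (hX : SP X 1 s)
    (hZt : SP Z 1 t) (hst : ∀ i : Fin 4, t i.castSucc = s i.castSucc) : ∃ c : F, X = c • Z := by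
  have h := hZt.star_inv.mul hX
  have h' : ∀ i : Fin 4, (star Z * X) * e i.castSucc = e i.castSucc * (star Z * X) := fun i => by
    have := h i.castSucc
    simpa [hst] using this
  obtain ⟨c, hc⟩ := eq_smul_one_of_commute (h' 0) (h' 1) (h' 2) (h' 3)
  refine ⟨c, ?_⟩
  rw [← mul_one Z, ← mul_smul_comm, ← hc, ← mul_assoc, Unitary.mul_star_self_of_mem hZ, one_mul]

theorem SP.diag {X : M F} (h0 : X ≠ 0) {s : Fin 5 → ℤˣ} (hX : SP X 1 s) :
    (∃ c : F, ∃ Z ∈ unitary (M F), X = c • Z) ∧ ∏ i, s i = 1 := by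
  obtain ⟨Z, hZ, t, hS, hst, hp⟩ := exists_diag (F := F) (fun i => s i.castSucc)
  obtain ⟨c, rfl⟩ := eq_smul_of_SP hZ hX hS hst
  refine ⟨⟨c, Z, hZ, rfl⟩, ?_⟩
  have h4 : t 4 = s 4 := by
    refine unit_smul_eq_iff ?_ (((hS.smul c) 4).symm.trans (hX 4))
    intro h
    exact h0 (mul_left_cancel_unitary (e_mem_unitary 4) (by simpa using h))
  rw [← hp, Fin.prod_univ_castSucc s, Fin.prod_univ_castSucc t]
  exact congrArg₂ _ (Finset.prod_congr rfl fun i _ => (hst i).symm) h4.symm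

theorem exists_SP (σ : Equiv.Perm (Fin 5)) : ∃ X : M F, ∃ s : Fin 5 → ℤˣ, ∃ n : ℕ, SP X σ s ∧
    X * star X = (2 : F) ^ n • 1 ∧ star X * X = (2 : F) ^ n • 1 ∧
    Equiv.Perm.sign σ = (-1) ^ n ∧ ∏ i, s i = (-1) ^ n := by
  induction σ using Equiv.Perm.swap_induction_on with
  | one => exact ⟨1, 1, 0, SP.one, by simp⟩
  | swap_mul σ i j hij ih =>
    obtain ⟨X, s, n, hX, h1, h2, h3, h4⟩ := ih
    refine ⟨(1 + e i * e j) * X, _, n + 1, (SP_T hij).mul hX, ?_, ?_, ?_, ?_⟩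
    · rw [star_mul, mul_assoc, ← mul_assoc X, h1, smul_mul_assoc, one_mul, mul_smul_comm,
        T_mul_star hij, smul_smul, pow_succ]
    · rw [star_mul, mul_assoc, ← mul_assoc (star _) (1 + _), T_star_mul hij, smul_mul_assoc,
        one_mul, mul_smul_comm, h2, smul_smul, pow_succ']
    · rw [map_mul, Equiv.Perm.sign_swap hij, h3, pow_succ']
    · rw [Finset.prod_mul_distrib, h4, Equiv.prod_comp σ (fun m => if m = i then (-1 : ℤˣ) else 1),
        pow_succ]
      simp

theorem exists_mem_unitary_SP {σ : Equiv.Perm (Fin 5)} (hσ : Equiv.Perm.sign σ = 1) :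
    ∃ X ∈ unitary (M F), ∃ s : Fin 5 → ℤˣ, SP X σ s := by
  obtain ⟨X, s, n, hX, h1, h2, h3, h4⟩ := exists_SP (F := F) σ
  have hn : Even n := by
    rw [hσ] at h3
    rcases Nat.even_or_odd n with h | h
    · exact h
    · rw [h.neg_one_pow] at h3; exact absurd h3 (by decide)
  obtain ⟨m, rfl⟩ := hn
  have h2' := NeZero.ne (2 : F)
  have hc : ((2 : F) ^ m)⁻¹ * (2 ^ m)⁻¹ * 2 ^ (m + m) = 1 := by
    rw [pow_add]; field_simp
  refine ⟨((2 : F) ^ m)⁻¹ • X, ?_, s, hX.smul _⟩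
  rw [Unitary.mem_iff]
  have hs : star (((2 : F) ^ m)⁻¹ • X) = ((2 : F) ^ m)⁻¹ • star X := by
    exact star_smul_M _ _
  rw [hs]
  simp only [smul_mul_assoc, mul_smul_comm, h1, h2, smul_smul, ← mul_assoc]
  rw [hc, one_smul]; simp

theorem SP.sign_perm {g : M F} (hg : g ∈ unitary (M F)) {σ : Equiv.Perm (Fin 5)}
    {s : Fin 5 → ℤˣ} (h : SP g σ s) (h2 : ¬ IsSquare (2 : F)) :
    Equiv.Perm.sign σ = 1 ∧ ∏ i, s i = 1 := by
  obtain ⟨X, t, n, hX, h1, h2', h3, h4⟩ := exists_SP (F := F) σ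
  have hd := hX.star_inv.mul h
  rw [inv_mul_cancel] at hd
  have hN : (star X * g) * star (star X * g) = (2 : F) ^ n • 1 := by
    rw [star_mul, star_star, mul_assoc, ← mul_assoc g, Unitary.mul_star_self_of_mem hg, one_mul,
      h2']
  have h20 := NeZero.ne (2 : F)
  have hne : star X * g ≠ 0 := by
    intro h0
    rw [h0, zero_mul] at hN
    have := congrArg tr hN
    simp [h20] at this
  obtain ⟨⟨c, Z, hZ, hc⟩, hp⟩ := hd.diag hne
  have hc2 : c * c = 2 ^ n := by
    rw [hc, star_smul_M, smul_mul_smul_comm, Unitary.mul_star_self_of_mem hZ] at hN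
    have := congrArg tr hN
    simpa [h20] using this
  have hn : Even n := by
    by_contra hn
    rw [Nat.not_even_iff_odd] at hn
    obtain ⟨m, rfl⟩ := hn
    refine h2 ⟨c / 2 ^ m, ?_⟩
    have hp : (2 : F) ^ m ≠ 0 := pow_ne_zero _ h20
    field_simp
    rw [← pow_two] at hc2
    rw [hc2]; ring
  rw [h3, hn.neg_one_pow]
  refine ⟨rfl, ?_⟩
  rw [hn.neg_one_pow] at h4
  rw [Finset.prod_mul_distrib] at hp
  have : ∏ x, t (σ⁻¹ (σ x)) = 1 := by simpa using h4
  rwa [this, mul_one] at hp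

end Action

section Frame

variable {F : Type} [Field F] [NeZero (2 : F)]

/-- Surjections multiply cardinalities. -/
theorem card_eq_card_ker_mul {A B : Type*} [Group A] [Group B] (f : A →* B)
    (hf : Function.Surjective f) : Nat.card A = Nat.card f.ker * Nat.card B := by
  rw [← Subgroup.card_mul_index f.ker, Subgroup.index_ker, MonoidHom.range_eq_top.mpr hf,
    Subgroup.card_top]

theorem one_ne_neg_one : (1 : M F) ≠ -1 := by
  intro h
  have := congrArg tr h
  simp only [map_neg, tr_one] at this
  have h2 := NeZero.ne (2 : F)
  have : (2 : F) * 2 = 0 := by linear_combination this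
  exact mul_ne_zero h2 h2 this

theorem eq_or_neg_of_smul_mem {c : F} {Z : M F} (hZ : Z ∈ unitary (M F))
    (h : c • Z ∈ unitary (M F)) : c = 1 ∨ c = -1 := by
  have := Unitary.mul_star_self_of_mem h
  rw [star_smul_M, smul_mul_smul_comm, Unitary.mul_star_self_of_mem hZ] at this
  have := congrArg tr this
  have h2 := NeZero.ne (2 : F)
  simp only [map_smul, tr_one, smul_eq_mul] at this
  have : c * c = 1 := by apply mul_right_cancel₀ h2; linear_combination this
  exact mul_self_eq_one_iff.mp this

theorem eq_one_or_neg_one_of_commute {g : M F} (hg : g ∈ unitary (M F))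
    (h : ∀ i, g * e i = e i * g) : g = 1 ∨ g = -1 := by
  obtain ⟨c, rfl⟩ := eq_smul_one_of_commute (h 0) (h 1) (h 2) (h 3)
  rcases eq_or_neg_of_smul_mem (one_mem _) hg with rfl | rfl <;> simp

/-- The stabiliser of the standard orthonormal frame `{±e i}`. -/
def frame (F : Type) [Field F] [NeZero (2 : F)] : Subgroup (unitary (M F)) where
  carrier := {g | ∃ σ s, SP g.1 σ s}
  mul_mem' := by
    rintro a b ⟨σ, s, h⟩ ⟨τ, t, h'⟩
    exact ⟨_, _, h.mul h'⟩
  one_mem' := ⟨_, _, SP.one⟩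
  inv_mem' := by
    rintro a ⟨σ, s, h⟩
    exact ⟨_, _, h.star_inv⟩

/-- The permutation of the frame. -/
noncomputable def permHom : frame F →* Equiv.Perm (Fin 5) where
  toFun g := g.2.choose
  map_one' := SP.perm_eq (one_mem _) (1 : frame F).2.choose_spec.choose_spec SP.one
  map_mul' g h := SP.perm_eq (g * h).1.2 (g * h).2.choose_spec.choose_spec
    (g.2.choose_spec.choose_spec.mul h.2.choose_spec.choose_spec)

theorem permHom_spec (g : frame F) : ∃ s, SP g.1.1 (permHom g) s := g.2.choose_spec

theorem permHom_eq {g : frame F} {σ : Equiv.Perm (Fin 5)} {s : Fin 5 → ℤˣ} (h : SP g.1.1 σ s) :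
    permHom g = σ := by
  obtain ⟨t, ht⟩ := permHom_spec g
  exact SP.perm_eq g.1.2 ht h

theorem unit_smul_mem {Z : M F} (hZ : Z ∈ unitary (M F)) (u : ℤˣ) : u • Z ∈ unitary (M F) := by
  rcases Int.units_eq_one_or u with rfl | rfl
  · simpa
  · rw [Units.neg_smul, one_smul, Unitary.mem_iff] at *
    simpa using hZ

theorem SP.unit_smul {X : M F} {σ : Equiv.Perm (Fin 5)} {s : Fin 5 → ℤˣ} (hX : SP X σ s)
    (u : ℤˣ) : SP (u • X) σ s := fun i => by
  rw [smul_mul_assoc, hX, mul_smul_comm, smul_comm]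

theorem card_ker_permHom : Nat.card (permHom (F := F)).ker = 32 := by
  choose Z hZ t hS hst hp using exists_diag (F := F)
  have hne : ∀ s, Z s ≠ 0 := fun s h => by
    have := Unitary.mul_star_self_of_mem (hZ s)
    rw [h, zero_mul] at this
    have := congrArg tr this
    simp at this
    exact NeZero.ne (2 : F) this.symm
  let f : ℤˣ × (Fin 4 → ℤˣ) → (permHom (F := F)).ker := fun x =>
    ⟨⟨⟨x.1 • Z x.2, unit_smul_mem (hZ _) _⟩, 1, _, (hS x.2).unit_smul x.1⟩,
      permHom_eq ((hS x.2).unit_smul x.1)⟩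
  have hf : Function.Bijective f := by
    constructor
    · rintro ⟨u, s⟩ ⟨u', s'⟩ h
      have h1 : u • Z s = u' • Z s' := congrArg (fun x => x.1.1.1) h
      have h2 := (hS s).unit_smul u
      rw [h1] at h2
      have h3 := SP.sign_eq (unit_smul_mem (hZ _) _) h2 ((hS s').unit_smul u')
      have h4 : s = s' := by
        ext1 i; rw [← hst s i, ← hst s' i, h3]
      subst h4
      rw [unit_smul_eq_iff (hne s) h1]
    · rintro ⟨g, hg⟩
      obtain ⟨s, hs⟩ := permHom_spec g
      rw [hg] at hs
      obtain ⟨c, hc⟩ := eq_smul_of_SP (hZ (fun i => s i.castSucc)) hs (hS _) (hst _)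
      have hc' := g.1.2
      rw [hc] at hc'
      rcases eq_or_neg_of_smul_mem (hZ _) hc' with rfl | rfl
      · refine ⟨(1, fun i => s i.castSucc), ?_⟩
        apply Subtype.ext; apply Subtype.ext; apply Subtype.ext
        simp [f, hc]
      · refine ⟨(-1, fun i => s i.castSucc), ?_⟩
        apply Subtype.ext; apply Subtype.ext; apply Subtype.ext
        simp [f, hc, Units.neg_smul]
  rw [← Nat.card_congr (Equiv.ofBijective f hf)]
  simp

/-- When `2` is not a square only even permutations occur. -/
noncomputable def altHom (h2 : ¬ IsSquare (2 : F)) : frame F →* alternatingGroup (Fin 5) :=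
  permHom.codRestrict _ fun g => by
    obtain ⟨s, hs⟩ := permHom_spec g
    exact (hs.sign_perm g.1.2 h2).1

theorem altHom_surjective (h2 : ¬ IsSquare (2 : F)) : Function.Surjective (altHom h2) := by
  rintro ⟨σ, hσ⟩
  obtain ⟨X, hX, s, hs⟩ := exists_mem_unitary_SP (F := F) hσ
  exact ⟨⟨⟨X, hX⟩, σ, s, hs⟩, Subtype.ext (permHom_eq hs)⟩

theorem ker_altHom (h2 : ¬ IsSquare (2 : F)) : (altHom h2).ker = permHom.ker := by
  ext g; simp [altHom, MonoidHom.mem_ker]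

theorem card_A5 : Nat.card (alternatingGroup (Fin 5)) = 60 := by
  have := nat_card_alternatingGroup (α := Fin 5)
  rw [this]; simp [Nat.factorial]

theorem card_frame (h2 : ¬ IsSquare (2 : F)) : Nat.card (frame F) = 1920 := by
  rw [card_eq_card_ker_mul _ (altHom_surjective h2), ker_altHom, card_ker_permHom, card_A5]

theorem sq_of_mem_ker {g : frame F} (hg : permHom g = 1) :
    g.1.1 * g.1.1 = 1 ∨ g.1.1 * g.1.1 = -1 := by
  obtain ⟨s, hs⟩ := permHom_spec g
  rw [hg] at hs
  refine eq_one_or_neg_one_of_commute (mul_mem g.1.2 g.1.2) fun i => ?_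
  have := (hs.mul hs) i
  simpa using this

theorem frame_shape {G : Type*} [Group G] (π : unitary (M F) →* G)
    (hker : ∀ g, π g = 1 ↔ g.1 = 1 ∨ g.1 = -1) (h2 : ¬ IsSquare (2 : F)) :
    ∃ N : Subgroup ((frame F).map π), ∃ _ : N.Normal, Nat.card N = 16 ∧ (∀ g ∈ N, g * g = 1) ∧
      Nonempty ((((frame F).map π) ⧸ N) ≃* alternatingGroup (Fin 5)) := by
  let p : frame F →* (frame F).map π := π.subgroupMap (frame F)
  have hp : Function.Surjective p := π.subgroupMap_surjective _
  have hpker : ∀ g : frame F, p g = 1 ↔ g.1.1 = 1 ∨ g.1.1 = -1 := fun g => by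
    rw [← hker, Subtype.ext_iff]; rfl
  have hle : p.ker ≤ (altHom h2).ker := by
    intro g hg
    rw [ker_altHom]
    refine permHom_eq (s := 1) fun i => ?_
    rcases (hpker g).mp hg with h | h <;> simp [h]
  let σ' : (frame F).map π →* alternatingGroup (Fin 5) := p.liftOfSurjective hp ⟨altHom h2, hle⟩
  have hσ' : ∀ g, σ' (p g) = altHom h2 g := fun g =>
    MonoidHom.liftOfRightInverse_comp_apply p _ _ ⟨altHom h2, hle⟩ g
  have hsurj : Function.Surjective σ' := fun a => by
    obtain ⟨g, rfl⟩ := altHom_surjective h2 a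
    exact ⟨p g, hσ' g⟩
  refine ⟨σ'.ker, inferInstance, ?_, ?_, ⟨QuotientGroup.quotientKerEquivOfSurjective σ' hsurj⟩⟩
  · have c1 := card_eq_card_ker_mul p hp
    have c2 := card_eq_card_ker_mul σ' hsurj
    rw [card_frame h2] at c1
    rw [card_A5] at c2
    have c3 : Nat.card p.ker = 2 := by
      have : Nat.card p.ker = Nat.card ℤˣ := by
        let f : ℤˣ → p.ker := fun u => ⟨⟨⟨u • 1, unit_smul_mem (one_mem _) u⟩, 1, 1,
          SP.one.unit_smul u⟩, by
            rw [MonoidHom.mem_ker, hpker]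
            rcases Int.units_eq_one_or u with rfl | rfl <;> simp [Units.neg_smul]⟩
        refine (Nat.card_congr (Equiv.ofBijective f ⟨fun u v h => ?_, fun g => ?_⟩)).symm
        · have h1 : u • (1 : M F) = v • 1 := congrArg (fun x => x.1.1.1) h
          exact unit_smul_eq_iff one_ne_zero h1
        · rcases (hpker g.1).mp g.2 with h | h
          · refine ⟨1, ?_⟩
            apply Subtype.ext; apply Subtype.ext; apply Subtype.ext
            simp [f, h]
          · refine ⟨-1, ?_⟩
            apply Subtype.ext; apply Subtype.ext; apply Subtype.ext
            simp [f, h, Units.neg_smul]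
      simpa using this
    rw [c3, c2] at c1
    omega
  · intro g hg
    obtain ⟨h, rfl⟩ := hp g
    have : h ∈ (altHom h2).ker := by rw [MonoidHom.mem_ker, ← hσ']; exact hg
    rw [ker_altHom] at this
    rw [← map_mul, hpker]
    exact sq_of_mem_ker this

end Frame

section Quat

variable {F : Type} [Field F]

theorem normSq_eq (x : ℍ[F]) :
    Quaternion.normSq x = x.re ^ 2 + x.imI ^ 2 + x.imJ ^ 2 + x.imK ^ 2 := by
  rw [Quaternion.normSq_def']

theorem mul_star_quat (x : ℍ[F]) : x * star x = (Quaternion.normSq x : F) • 1 := by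
  rw [normSq_eq]
  ext <;> simp <;> ring

theorem star_mul_quat (x : ℍ[F]) : star x * x = (Quaternion.normSq x : F) • 1 := by
  rw [normSq_eq]
  ext <;> simp <;> ring

/-- The vector with first coordinate `r` and quaternionic part `z`. -/
def vec (r : F) (z : ℍ[F]) : Fin 5 → F := ![r, z.re, z.imI, z.imJ, z.imK]

/-- The quaternionic part of a vector. -/
def qpart (v : Fin 5 → F) : ℍ[F] := qm (v 1) (v 2) (v 3) (v 4)

theorem vec_qpart (v : Fin 5 → F) : vec (v 0) (qpart v) = v := by
  ext i; fin_cases i <;> simp [vec, qpart]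

theorem E_vec (r : F) (z : ℍ[F]) : E (vec r z) = !![r • 1, z; star z, -(r • 1)] := by
  ext i j <;> fin_cases i <;> fin_cases j <;> simp [vec, E]

theorem dot_vec (r : F) (z : ℍ[F]) : vec r z ⬝ᵥ vec r z = r ^ 2 + Quaternion.normSq z := by
  rw [normSq_eq]
  simp [vec, dotProduct, Fin.sum_univ_five]; ring

/-- Diagonal matrices. -/
def dg (x y : ℍ[F]) : M F := !![x, 0; 0, y]

theorem dg_mul (x y x' y' : ℍ[F]) : dg x y * dg x' y' = dg (x * x') (y * y') := by
  simp [dg]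

theorem star_dg (x y : ℍ[F]) : star (dg x y) = dg (star x) (star y) := by
  ext i j <;> fin_cases i <;> fin_cases j <;> simp [dg, Matrix.star_apply]

theorem dg_one : dg (1 : ℍ[F]) 1 = 1 := by simp [dg, Matrix.one_fin_two]

theorem smul_dg (c : F) (x y : ℍ[F]) : c • dg x y = dg (c • x) (c • y) := by
  ext i j <;> fin_cases i <;> fin_cases j <;> simp [dg]

theorem dg_mem {x y : ℍ[F]} (hx : Quaternion.normSq x = 1) (hy : Quaternion.normSq y = 1) :
    dg x y ∈ unitary (M F) := by
  rw [Unitary.mem_iff, star_dg, dg_mul, dg_mul]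
  simp [star_mul_quat, mul_star_quat, hx, hy, dg_one]

theorem dg_inj {x y x' y' : ℍ[F]} (h : dg x y = dg x' y') : x = x' ∧ y = y' :=
  ⟨congr_fun (congr_fun h 0) 0, congr_fun (congr_fun h 1) 1⟩

theorem normSq_of_dg_mem {x y : ℍ[F]} (h : dg x y ∈ unitary (M F)) :
    Quaternion.normSq x = 1 ∧ Quaternion.normSq y = 1 := by
  have := Unitary.mul_star_self_of_mem h
  rw [star_dg, dg_mul, ← dg_one] at this
  obtain ⟨h1, h2⟩ := dg_inj this
  rw [mul_star_quat] at h1 h2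
  exact ⟨by simpa using congrArg (fun z : ℍ[F] => z.re) h1,
    by simpa using congrArg (fun z : ℍ[F] => z.re) h2⟩

theorem dg_conj {x y : ℍ[F]} (hx : Quaternion.normSq x = 1) (hy : Quaternion.normSq y = 1)
    (r : F) (z : ℍ[F]) : dg x y * E (vec r z) * star (dg x y) = E (vec r (x * z * star y)) := by
  rw [E_vec, E_vec, star_dg]
  simp [dg, mul_star_quat, hx, hy, mul_assoc]

end Quat

section Transitive

variable {F : Type} [Field F] [NeZero (2 : F)]

theorem ρ_dg {g : unitary (M F)} {x y : ℍ[F]} (hg : g.1 = dg x y) (r : F) (z : ℍ[F]) :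
    ρ g (vec r z) = vec r (x * z * star y) := by
  apply E_injective
  obtain ⟨hx, hy⟩ := normSq_of_dg_mem (hg ▸ g.2)
  rw [E_ρ, hg, dg_conj hx hy]

theorem ρ_apply_of_SP {g : unitary (M F)} {σ : Equiv.Perm (Fin 5)} {s : Fin 5 → ℤˣ}
    (h : SP g.1 σ s) (v : Fin 5 → F) (i : Fin 5) : ρ g v (σ i) = s i • v i := by
  have h1 : ∀ i, ρ g (Pi.single i 1) = s i • (Pi.single (σ i) 1 : Fin 5 → F) := fun i => by
    apply E_injective
    rw [E_ρ]
    change g.1 * e i * star g.1 = _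
    rw [h i, smul_mul_assoc, mul_assoc, Unitary.mul_star_self_of_mem g.2, mul_one]
    rcases Int.units_eq_one_or (s i) with hs | hs <;> simp [hs, Units.neg_smul, e]
  have hv : v = ∑ i, v i • (Pi.single i 1 : Fin 5 → F) := by
    ext j; simp [Pi.single_apply]
  conv_lhs => rw [hv]
  simp only [map_sum, map_smul, h1, Finset.sum_apply]
  rw [Finset.sum_eq_single i]
  · rcases Int.units_eq_one_or (s i) with hs | hs <;> simp [hs, Units.neg_smul]
  · intro j _ hj
    have : σ i ≠ σ j := fun h => hj (σ.injective h).symm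
    rcases Int.units_eq_one_or (s j) with hs | hs <;> simp [hs, Units.neg_smul, this]
  · simp

theorem ρ_inv (g : unitary (M F)) (v : Fin 5 → F) : ρ g⁻¹ (ρ g v) = v := by
  have := map_mul ρ g⁻¹ g
  rw [inv_mul_cancel, map_one] at this
  exact (LinearMap.congr_fun this v).symm

theorem exists_frame_perm {σ : Equiv.Perm (Fin 5)} (hσ : Equiv.Perm.sign σ = 1) :
    ∃ g ∈ frame F, ∃ s, SP g.1 σ s := by
  obtain ⟨X, hX, s, hs⟩ := exists_mem_unitary_SP (F := F) hσ
  exact ⟨⟨X, hX⟩, ⟨σ, s, hs⟩, s, hs⟩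

theorem exists_sq_add_sq [Finite F] (c : F) : ∃ a b : F, a ^ 2 + b ^ 2 = c := by
  have := Fintype.ofFinite F
  have hodd : Fintype.card F % 2 = 1 := by
    refine FiniteField.odd_card_of_char_ne_two fun h => ?_
    have := CharP.cast_eq_zero F (ringChar F)
    rw [h] at this
    exact NeZero.ne (2 : F) (by exact_mod_cast this)
  open Polynomial in
  obtain ⟨a, b, h⟩ := FiniteField.exists_root_sum_quadratic (R := F) (f := X ^ 2)
    (g := X ^ 2 - C c) (by simp) (by
      rw [Polynomial.degree_X_pow_sub_C (by norm_num)]; rfl) hodd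
  refine ⟨a, b, ?_⟩
  simp at h
  linear_combination h

/-- A subgroup containing the frame group and all diagonal matrices is transitive on the unit
sphere. -/
theorem exists_ρ_eq [Finite F] {K : Subgroup (unitary (M F))} (hK : frame F ≤ K)
    (hD : ∀ g : unitary (M F), ∀ x y, g.1 = dg x y → g ∈ K) {v : Fin 5 → F}
    (hv : v ⬝ᵥ v = 1) : ∃ g ∈ K, ρ g v = Pi.single 0 1 := by
  let Q : (Fin 5 → F) → Prop := fun v => ∃ g ∈ K, ρ g v = Pi.single 0 1
  have trans : ∀ (g : unitary (M F)) (v), g ∈ K → Q (ρ g v) → Q v := by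
    rintro g v hg ⟨h, hh, e⟩
    exact ⟨h * g, mul_mem hh hg, by rw [map_mul]; exact e⟩
  have h2 := NeZero.ne (2 : F)
  have hperm : ∀ i : Fin 5, ∃ σ : Equiv.Perm (Fin 5), Equiv.Perm.sign σ = 1 ∧ σ i = 0 :=
    fun i => ⟨finRotate 5 ^ (5 - i.1), by revert i; decide, by revert i; decide⟩
  have move : ∀ (r : F) (z z' : ℍ[F]), Quaternion.normSq z = Quaternion.normSq z' →
      Quaternion.normSq z ≠ 0 → Q (vec r z') → Q (vec r z) := by
    intro r z z' h h0 hQ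
    let x : ℍ[F] := (Quaternion.normSq z : F)⁻¹ • (z' * star z)
    have hx : Quaternion.normSq x = 1 := by
      rw [Quaternion.normSq_smul, map_mul, Quaternion.normSq_star, ← h]
      field_simp
    let g : unitary (M F) := ⟨dg x 1, dg_mem hx (by simp)⟩
    refine trans g _ (hD g _ _ rfl) ?_
    rw [ρ_dg (g := g) rfl]
    have : x * z * star 1 = z' := by
      rw [star_one, mul_one, smul_mul_assoc, mul_assoc, star_mul_quat, mul_smul_comm, smul_smul,
        inv_mul_cancel₀ h0, one_smul, mul_one]
    rwa [this]
  have base : ∀ v : Fin 5 → F, v ⬝ᵥ v = 1 → v 0 = 0 → Q v := by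
    intro v hv h0
    rw [← vec_qpart v, h0] at hv ⊢
    rw [dot_vec] at hv
    have hn : Quaternion.normSq (qpart v) = 1 := by linear_combination hv
    obtain ⟨σ, hσ, hσ1⟩ := hperm 1
    obtain ⟨g, hg, s, hs⟩ := exists_frame_perm (F := F) hσ
    have hs1 : s 1 • s 1 • (1 : F) = 1 := by
      rw [smul_smul, Int.units_mul_self, one_smul]
    have hq : Quaternion.normSq (qm (s 1 • (1 : F)) 0 0 0) = 1 := by
      rw [normSq_eq]
      rcases Int.units_eq_one_or (s 1) with h1 | h1 <;> simp [h1, Units.neg_smul]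
    refine move 0 _ _ (hn.trans hq.symm) (by simp [hn]) ⟨g, hK hg, ?_⟩
    ext i
    obtain ⟨j, rfl⟩ := σ.surjective i
    rw [ρ_apply_of_SP hs, ← hσ1]
    by_cases hj : j = 1
    · subst hj; simpa [vec] using hs1
    · have : σ j ≠ σ 1 := fun h => hj (σ.injective h)
      rw [Pi.single_eq_of_ne this]
      fin_cases j <;> simp [vec] at hj ⊢
  have gen : ∀ v : Fin 5 → F, v ⬝ᵥ v = 1 → v 0 ^ 2 ≠ 1 → Q v := by
    intro v hv h0
    rw [← vec_qpart v] at hv ⊢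
    rw [dot_vec] at hv
    have hn : Quaternion.normSq (qpart v) ≠ 0 := by
      intro h; apply h0; linear_combination hv - h
    obtain ⟨a, b, hab⟩ := exists_sq_add_sq (Quaternion.normSq (qpart v))
    have hz : Quaternion.normSq (qm 0 a b 0) = Quaternion.normSq (qpart v) := by
      rw [← hab, normSq_eq]; simp
    refine move _ _ (qm 0 a b 0) hz.symm hn ?_
    obtain ⟨σ, hσ, hσ1⟩ := hperm 1
    obtain ⟨g, hg, s, hs⟩ := exists_frame_perm (F := F) hσ
    refine trans g _ (hK hg) (base _ ?_ ?_)
    · rw [dot_ρ, dot_vec, hz, hv]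
    · have := ρ_apply_of_SP hs (vec (v 0) (qm 0 a b 0)) 1
      simpa [vec, hσ1] using this
  by_cases hall : ∀ i, v i ^ 2 = 1
  · exfalso
    simp only [dotProduct, Fin.sum_univ_five, ← pow_two, hall] at hv
    have : (2 : F) * 2 = 0 := by linear_combination hv
    exact mul_ne_zero h2 h2 this
  · push Not at hall
    obtain ⟨i, hi⟩ := hall
    obtain ⟨σ, hσ, hσi⟩ := hperm i
    obtain ⟨g, hg, s, hs⟩ := exists_frame_perm (F := F) hσ
    refine trans g v (hK hg) (gen _ (by rwa [dot_ρ]) ?_)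
    have := ρ_apply_of_SP hs v i
    rw [hσi] at this
    rw [this]
    rcases Int.units_eq_one_or (s i) with h | h <;> simpa [h, Units.neg_smul] using hi

/-- The matrices commuting with `e 0` are diagonal. -/
theorem exists_dg_of_commute {g : M F} (h : g * e 0 = e 0 * g) : g = dg (g 0 0) (g 1 1) := by
  have h2 := NeZero.ne (2 : F)
  rw [e_zero] at h
  have h01 := congr_fun (congr_fun h 0) 1
  have h10 := congr_fun (congr_fun h 1) 0
  simp [Matrix.mul_apply] at h01 h10
  have key : ∀ x : ℍ[F], -x = x → x = 0 := fun x hx => by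
    have : (2 : F) • x = 0 := by rw [two_smul]; nth_rewrite 1 [← hx]; simp
    simpa [h2] using this
  ext1 i j
  fin_cases i <;> fin_cases j <;> simp [dg]
  · exact key _ h01
  · exact key _ h10.symm

theorem fixes_iff (g : unitary (M F)) :
    ρ g (Pi.single 0 1) = Pi.single 0 1 ↔ g.1 * e 0 = e 0 * g.1 := by
  rw [← E_injective.eq_iff, E_ρ]
  change g.1 * e 0 * star g.1 = e 0 ↔ _
  constructor
  · intro h
    conv_rhs => rw [← h]
    rw [mul_assoc _ (star g.1), Unitary.star_mul_self_of_mem g.2, mul_one]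
  · intro h
    rw [h, mul_assoc, Unitary.mul_star_self_of_mem g.2, mul_one]

theorem eq_top_of_dg_le [Finite F] {K : Subgroup (unitary (M F))} (hK : frame F ≤ K)
    (hD : ∀ g : unitary (M F), ∀ x y, g.1 = dg x y → g ∈ K) : K = ⊤ := by
  rw [eq_top_iff]
  intro g _
  obtain ⟨h, hh, e1⟩ := exists_ρ_eq hK hD (v := ρ g (Pi.single 0 1)) (by rw [dot_ρ]; simp)
  have : h * g ∈ K := by
    refine hD _ _ _ (exists_dg_of_commute ((fixes_iff _).mp ?_))
    rw [map_mul]; exact e1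
  simpa using mul_mem (inv_mem hh) this

end Transitive

section Bridge

variable {F : Type} [Field F] [NeZero (2 : F)]

/-- A splitting of the quaternions over a field in which `-1` is a sum of two squares. -/
def θ {a b : F} (h : a ^ 2 + b ^ 2 = -1) : ℍ[F] ≃+* Matrix (Fin 2) (Fin 2) F where
  toFun x := !![x.re + a * x.imJ + b * x.imK, x.imI + b * x.imJ - a * x.imK;
    -x.imI + b * x.imJ - a * x.imK, x.re - a * x.imJ - b * x.imK]
  invFun m := qm ((m 0 0 + m 1 1) / 2) ((m 0 1 - m 1 0) / 2)
    (-(a * ((m 0 0 - m 1 1) / 2) + b * ((m 0 1 + m 1 0) / 2)))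
    (-(b * ((m 0 0 - m 1 1) / 2) - a * ((m 0 1 + m 1 0) / 2)))
  left_inv x := by
    have h2 := NeZero.ne (2 : F)
    ext <;> simp <;> field_simp
    · linear_combination (-2 * x.imJ) * h
    · linear_combination (-2 * x.imK) * h
  right_inv m := by
    have h2 := NeZero.ne (2 : F)
    ext i j
    fin_cases i <;> fin_cases j <;> simp <;> field_simp
    · linear_combination (-m 0 0 + m 1 1) * h
    · linear_combination (-m 0 1 - m 1 0) * h
    · linear_combination (-m 0 1 - m 1 0) * h
    · linear_combination (m 0 0 - m 1 1) * h
  map_mul' x y := by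
    rw [Matrix.mul_fin_two]
    ext i j
    fin_cases i <;> fin_cases j <;> simp
    · linear_combination (-x.imJ * y.imJ - x.imK * y.imK) * h
    · linear_combination (x.imJ * y.imK - x.imK * y.imJ) * h
    · linear_combination (x.imK * y.imJ - x.imJ * y.imK) * h
    · linear_combination (-x.imJ * y.imJ - x.imK * y.imK) * h
  map_add' x y := by
    ext i j
    fin_cases i <;> fin_cases j <;> simp <;> ring

theorem det_θ {a b : F} (h : a ^ 2 + b ^ 2 = -1) (x : ℍ[F]) :
    (θ h x).det = Quaternion.normSq x := by
  rw [normSq_eq, Matrix.det_fin_two]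
  simp [θ]
  linear_combination (-x.imJ ^ 2 - x.imK ^ 2) * h

theorem θ_star {a b : F} (h : a ^ 2 + b ^ 2 = -1) (x : ℍ[F]) :
    θ h (star x) = !![θ h x 1 1, -θ h x 0 1; -θ h x 1 0, θ h x 0 0] := by
  ext i j
  fin_cases i <;> fin_cases j <;> simp [θ] <;> ring

/-- Reindexing of `Fin 2 × Fin 2` putting the second factor outermost. -/
def blockEquiv : Fin 2 × Fin 2 ≃ Fin 2 ⊕ Fin 2 where
  toFun x := if x.2 = 0 then Sum.inl x.1 else Sum.inr x.1
  invFun := Sum.elim (fun i => (i, 0)) (fun i => (i, 1))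
  left_inv := by decide
  right_inv := by decide

/-- The matrix model of the quaternionic matrices. -/
def Θ {a b : F} (h : a ^ 2 + b ^ 2 = -1) : M F ≃+* Matrix (Fin 2 ⊕ Fin 2) (Fin 2 ⊕ Fin 2) F :=
  ((θ h).mapMatrix.trans (Matrix.compRingEquiv (Fin 2) (Fin 2) F)).trans
    (Matrix.reindexRingEquiv F blockEquiv)

theorem Θ_eq {a b : F} (h : a ^ 2 + b ^ 2 = -1) (X : M F) : Θ h X = Matrix.fromBlocks
    (Matrix.of fun i j => θ h (X i j) 0 0) (Matrix.of fun i j => θ h (X i j) 0 1)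
    (Matrix.of fun i j => θ h (X i j) 1 0) (Matrix.of fun i j => θ h (X i j) 1 1) := by
  ext i j
  rcases i with i | i <;> rcases j with j | j <;> rfl

theorem Θ_star {a b : F} (h : a ^ 2 + b ^ 2 = -1) (X : M F) :
    Θ h (star X) = -Matrix.J (Fin 2) F * (Θ h X).transpose * Matrix.J (Fin 2) F := by
  rw [Θ_eq, Θ_eq, Matrix.J, Matrix.fromBlocks_transpose, Matrix.fromBlocks_neg,
    Matrix.fromBlocks_multiply, Matrix.fromBlocks_multiply]
  congr 1 <;> ext i j <;> simp [Matrix.star_apply, θ_star]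

theorem Θ_mem_iff {a b : F} (h : a ^ 2 + b ^ 2 = -1) (X : M F) :
    Θ h X ∈ Matrix.symplecticGroup (Fin 2) F ↔ X * star X = 1 := by
  rw [SymplecticGroup.mem_iff, ← (Θ h).injective.eq_iff, map_mul, Θ_star, map_one]
  have hJ := Matrix.J_squared (Fin 2) F
  constructor
  · intro H
    rw [← mul_assoc, ← mul_assoc, mul_neg, neg_mul, neg_mul, H, hJ, neg_neg]
  · intro H
    have := congrArg (· * (-Matrix.J (Fin 2) F)) H
    simp only [mul_assoc, mul_neg, neg_mul, hJ, neg_neg, one_mul, mul_one] at this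
    rw [mul_assoc]
    exact neg_injective this

theorem exists_symplectic_hom [Finite F] :
    ∃ f : unitary (M F) →* Matrix.symplecticGroup (Fin 2) F, Function.Bijective f := by
  obtain ⟨a, b, h⟩ := exists_sq_add_sq (-1 : F)
  have hmem := Θ_mem_iff h
  generalize Θ h = T at hmem
  have hT : ∀ g : unitary (M F), T g.1 ∈ Matrix.symplecticGroup (Fin 2) F := fun g =>
    (hmem g.1).mpr (Unitary.mul_star_self_of_mem g.2)
  refine ⟨⟨⟨fun g => ⟨T g.1, hT g⟩, ?_⟩, fun g g' => ?_⟩, fun g g' hg => ?_, fun A => ?_⟩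
  · exact Subtype.ext (map_one T)
  · exact Subtype.ext (map_mul T g.1 g'.1)
  · exact Subtype.ext (T.injective (congrArg Subtype.val hg))
  · have h1 : T.symm A.1 * star (T.symm A.1) = 1 := by
      rw [← hmem, RingEquiv.apply_symm_apply]; exact A.2
    have h2 : star (T.symm A.1) * T.symm A.1 = 1 := by
      have h3 : T.symm (A⁻¹).1 * T.symm A.1 = 1 := by
        rw [← map_mul]
        have := congrArg Subtype.val (inv_mul_cancel A)
        rw [show (A⁻¹).1 * A.1 = 1 from this, map_one]
      have h4 : T.symm (A⁻¹).1 = star (T.symm A.1) := left_inv_eq_right_inv h3 h1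
      rw [← h4, h3]
    exact ⟨⟨_, Unitary.mem_iff.mpr ⟨h2, h1⟩⟩, Subtype.ext (T.apply_symm_apply A.1)⟩

theorem mem_center_iff (g : unitary (M F)) :
    g ∈ Subgroup.center (unitary (M F)) ↔ g.1 = 1 ∨ g.1 = -1 := by
  rw [Subgroup.mem_center_iff]
  constructor
  · intro h
    refine eq_one_or_neg_one_of_commute g.2 fun i => ?_
    exact (congrArg Subtype.val (h ⟨e i, e_mem_unitary i⟩)).symm
  · rintro (h | h) x <;> apply Subtype.ext <;> simp [h]

theorem exists_projection [Finite F] : ∃ π : unitary (M F) →*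
    (Matrix.symplecticGroup (Fin 2) F ⧸ Subgroup.center (Matrix.symplecticGroup (Fin 2) F)),
    Function.Surjective π ∧ ∀ g, π g = 1 ↔ g.1 = 1 ∨ g.1 = -1 := by
  obtain ⟨f, hf⟩ := exists_symplectic_hom (F := F)
  refine ⟨(QuotientGroup.mk' _).comp f, (QuotientGroup.mk'_surjective _).comp hf.2, fun g => ?_⟩
  rw [← mem_center_iff, MonoidHom.comp_apply, QuotientGroup.mk'_apply, QuotientGroup.eq_one_iff,
    Subgroup.mem_center_iff, Subgroup.mem_center_iff]
  constructor
  · intro h x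
    apply hf.1
    rw [map_mul, map_mul, h]
  · intro h y
    obtain ⟨x, rfl⟩ := hf.2 y
    rw [← map_mul, ← map_mul, h]

end Bridge

section Card

variable {F : Type} [Field F] [NeZero (2 : F)] [Finite F]

instance : Finite ℍ[F] := Finite.of_equiv _ (Quaternion.equivProd F).symm

theorem card_normSq_eq {c : F} (hc : c ≠ 0) :
    Nat.card {x : ℍ[F] // Quaternion.normSq x = c} =
      Nat.card {x : ℍ[F] // Quaternion.normSq x = 1} := by
  obtain ⟨a, b, h⟩ := exists_sq_add_sq c
  have hz : Quaternion.normSq (qm a b 0 0) = c := by rw [normSq_eq, ← h]; simp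
  refine Nat.card_congr ⟨fun x => ⟨c⁻¹ • (star (qm a b 0 0) * x.1), ?_⟩,
    fun x => ⟨qm a b 0 0 * x.1, ?_⟩, fun x => ?_, fun x => ?_⟩
  · rw [Quaternion.normSq_smul, map_mul, Quaternion.normSq_star, hz, x.2]; field_simp
  · rw [map_mul, hz, x.2, mul_one]
  · apply Subtype.ext
    simp only [mul_smul_comm, ← mul_assoc, mul_star_quat, hz, smul_mul_assoc, one_mul, smul_smul]
    rw [inv_mul_cancel₀ hc, one_smul]
  · apply Subtype.ext
    simp only [← mul_assoc, star_mul_quat, hz, smul_mul_assoc, one_mul, smul_smul]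
    rw [inv_mul_cancel₀ hc, one_smul]

theorem card_normSq_one : Nat.card {x : ℍ[F] // Quaternion.normSq x = 1} =
    (Nat.card F ^ 2 - 1) * Nat.card F := by
  have := Fintype.ofFinite F
  obtain ⟨a, b, h⟩ := exists_sq_add_sq (-1 : F)
  have h1 := Matrix.card_GL_field (𝔽 := F) 2
  have hsurj : Function.Surjective
      (Matrix.GeneralLinearGroup.det : Matrix.GeneralLinearGroup (Fin 2) F →* Fˣ) := by
    classical
    intro u
    refine ⟨Matrix.GeneralLinearGroup.mkOfDetNeZero !![(u : F), 0; 0, 1] (by simp), ?_⟩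
    ext
    simp [Matrix.GeneralLinearGroup.mkOfDetNeZero]
  rw [card_eq_card_ker_mul _ hsurj, Nat.card_units] at h1
  have h2 : Nat.card (Matrix.GeneralLinearGroup.det :
      Matrix.GeneralLinearGroup (Fin 2) F →* Fˣ).ker =
      Nat.card {x : ℍ[F] // Quaternion.normSq x = 1} := by
    refine Nat.card_congr ⟨fun g => ⟨(θ h).symm g.1.1, ?_⟩, fun x =>
      ⟨Matrix.GeneralLinearGroup.mkOfDetNeZero (θ h x.1) ?_, ?_⟩, fun g => ?_, fun x => ?_⟩
    · rw [← det_θ h, RingEquiv.apply_symm_apply]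
      exact congrArg Units.val g.2
    · rw [det_θ, x.2]; exact one_ne_zero
    · rw [MonoidHom.mem_ker]
      ext
      simp [Matrix.GeneralLinearGroup.mkOfDetNeZero, det_θ, x.2]
    · apply Subtype.ext; ext; simp [Matrix.GeneralLinearGroup.mkOfDetNeZero]
    · apply Subtype.ext; simp [Matrix.GeneralLinearGroup.mkOfDetNeZero]
  rw [h2, Fin.prod_univ_two, ← Nat.card_eq_fintype_card] at h1
  have hq : 1 < Nat.card F := Finite.one_lt_card
  simp only [Fin.val_zero, Fin.val_one, pow_zero, pow_one] at h1
  have h3 : Nat.card F ^ 2 - Nat.card F = Nat.card F * (Nat.card F - 1) := by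
    rw [Nat.mul_sub, pow_two, mul_one]
  rw [h3, ← mul_assoc] at h1
  exact Nat.eq_of_mul_eq_mul_right (by omega) h1

end Card

section CardUnitary

variable {F : Type} [Field F] [NeZero (2 : F)] [Finite F]

theorem card_normSq_zero : (Nat.card {x : ℍ[F] // Quaternion.normSq x = 0} : ℤ) =
    Nat.card F ^ 3 + Nat.card F ^ 2 - Nat.card F := by
  classical
  have := Fintype.ofFinite F
  have h1 : Nat.card ℍ[F] = Nat.card F ^ 4 := by
    rw [Nat.card_congr (Quaternion.equivProd F)]
    simp only [Nat.card_prod]; ring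
  have hq : 1 < Nat.card F := Finite.one_lt_card
  have h2 : Nat.card ℍ[F] = ∑ c : F, Nat.card {x : ℍ[F] // Quaternion.normSq x = c} := by
    rw [← Nat.card_sigma]
    exact Nat.card_congr (Equiv.sigmaFiberEquiv (fun x : ℍ[F] => Quaternion.normSq x)).symm
  rw [← Finset.add_sum_erase _ _ (Finset.mem_univ (0 : F)), Finset.sum_congr rfl
    (fun c hc => card_normSq_eq (Finset.ne_of_mem_erase hc)), Finset.sum_const,
    Finset.card_erase_of_mem (Finset.mem_univ _), Finset.card_univ, ← Nat.card_eq_fintype_card,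
    card_normSq_one, h1, smul_eq_mul] at h2
  have h3 : 1 ≤ Nat.card F ^ 2 := Nat.one_le_pow _ _ (by omega)
  zify [h3, hq.le] at h2
  linarith

theorem card_sphere : Nat.card {v : Fin 5 → F // v ⬝ᵥ v = 1} =
    Nat.card F ^ 2 * (Nat.card F ^ 2 + 1) := by
  classical
  have := Fintype.ofFinite F
  have hq : 1 < Nat.card F := Finite.one_lt_card
  have h1 : Nat.card {v : Fin 5 → F // v ⬝ᵥ v = 1} =
      ∑ r : F, Nat.card {z : ℍ[F] // Quaternion.normSq z = 1 - r ^ 2} := by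
    rw [← Nat.card_sigma]
    refine Nat.card_congr ⟨fun v => ⟨v.1 0, qpart v.1, ?_⟩, fun z => ⟨vec z.1 z.2.1, ?_⟩,
      fun v => ?_,
      fun z => ?_⟩
    · have := v.2
      rw [← vec_qpart v.1, dot_vec] at this
      exact eq_sub_of_add_eq' this
    · rw [dot_vec, z.2.2]; ring
    · exact Subtype.ext (vec_qpart v.1)
    · rfl
  have h2 : ∀ r : F, (Nat.card {z : ℍ[F] // Quaternion.normSq z = 1 - r ^ 2} : ℤ) =
      (Nat.card F ^ 2 - 1) * Nat.card F + if r ∈ ({1, -1} : Finset F) then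
        (2 * Nat.card F ^ 2 - Nat.card F ^ 3 : ℤ) + Nat.card F ^ 3 - Nat.card F ^ 2 else 0 := by
    intro r
    split_ifs with h
    · have : (1 : F) - r ^ 2 = 0 := by
        simp only [Finset.mem_insert, Finset.mem_singleton] at h
        rcases h with rfl | rfl <;> simp
      rw [this, card_normSq_zero]; ring
    · have : (1 : F) - r ^ 2 ≠ 0 := by
        intro h'
        apply h
        rw [Finset.mem_insert, Finset.mem_singleton]
        exact sq_eq_one_iff.mp (sub_eq_zero.mp h').symm
      have h3 : 1 ≤ Nat.card F ^ 2 := Nat.one_le_pow _ _ (by omega)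
      rw [card_normSq_eq this, card_normSq_one]
      push_cast [h3]; ring
  have h4 : ((1 : F)) ∉ ({-1} : Finset F) := by
    rw [Finset.mem_singleton]
    intro h
    apply NeZero.ne (2 : F)
    linear_combination h
  zify
  rw [h1, Nat.cast_sum, Finset.sum_congr rfl (fun r _ => h2 r), Finset.sum_add_distrib,
    Finset.sum_ite_mem, Finset.univ_inter, Finset.sum_const, Finset.sum_const,
    Finset.card_insert_of_notMem h4, Finset.card_singleton, Finset.card_univ,
    ← Nat.card_eq_fintype_card]
  simp only [nsmul_eq_mul]
  push_cast
  ring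

theorem card_unitary : Nat.card (unitary (M F)) =
    Nat.card F ^ 4 * (Nat.card F ^ 2 + 1) * (Nat.card F ^ 2 - 1) ^ 2 := by
  let : MulAction (unitary (M F)) (Fin 5 → F) := MulAction.compHom _ (ρ (F := F))
  have hs : ∀ (g : unitary (M F)) (v : Fin 5 → F), g • v = ρ g v := fun _ _ => rfl
  have h1 : MulAction.orbit (unitary (M F)) (Pi.single 0 1 : Fin 5 → F) = {v | v ⬝ᵥ v = 1} := by
    ext v
    constructor
    · rintro ⟨g, rfl⟩
      change ρ g _ ⬝ᵥ ρ g _ = 1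
      rw [dot_ρ]; simp
    · intro hv
      obtain ⟨g, -, hg⟩ := exists_ρ_eq (K := ⊤) le_top (fun _ _ _ _ => trivial) hv
      refine ⟨g⁻¹, ?_⟩
      change ρ g⁻¹ _ = v
      rw [← hg, ρ_inv]
  have h2 : Nat.card (MulAction.stabilizer (unitary (M F)) (Pi.single 0 1 : Fin 5 → F)) =
      Nat.card ({x : ℍ[F] // Quaternion.normSq x = 1} × {x : ℍ[F] // Quaternion.normSq x = 1}) := by
    have hst : ∀ g : unitary (M F), g ∈ MulAction.stabilizer (unitary (M F))
        (Pi.single 0 1 : Fin 5 → F) ↔ g.1 * e 0 = e 0 * g.1 := fun g => by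
      rw [MulAction.mem_stabilizer_iff, hs, fixes_iff]
    have hdg : ∀ g : unitary (M F), g ∈ MulAction.stabilizer (unitary (M F))
        (Pi.single 0 1 : Fin 5 → F) → g.1 = dg (g.1 0 0) (g.1 1 1) := fun g hg =>
      exists_dg_of_commute ((hst g).mp hg)
    refine Nat.card_congr ⟨fun g => (⟨g.1.1 0 0, ?_⟩, ⟨g.1.1 1 1, ?_⟩),
      fun x => ⟨⟨dg x.1.1 x.2.1, dg_mem x.1.2 x.2.2⟩, ?_⟩, fun g => ?_, fun x => rfl⟩
    · exact (normSq_of_dg_mem (hdg g.1 g.2 ▸ g.1.2)).1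
    · exact (normSq_of_dg_mem (hdg g.1 g.2 ▸ g.1.2)).2
    · rw [hst, e_zero]
      simp [dg]
    · exact Subtype.ext (Subtype.ext (hdg g.1 g.2).symm)
  rw [← Subgroup.card_mul_index (MulAction.stabilizer (unitary (M F)) (Pi.single 0 1 : Fin 5 → F)),
    MulAction.index_stabilizer, h1, h2, Nat.card_prod, card_normSq_one, ← Nat.card_coe_set_eq]
  change _ * Nat.card {v : Fin 5 → F // v ⬝ᵥ v = 1} = _
  rw [card_sphere]
  ring

end CardUnitary

section Involutions

variable {F : Type} [Field F] [NeZero (2 : F)]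

theorem eq_re_smul_one {x : ℍ[F]} (h : star x = x) : x = x.re • 1 := by
  have key : ∀ a : F, -a = a → a = 0 := fun a ha => by
    have : (2 : F) * a = 0 := by linear_combination -ha
    exact (mul_eq_zero.mp this).resolve_left (NeZero.ne 2)
  have hI := key _ (congrArg (fun z : ℍ[F] => z.imI) h)
  have hJ := key _ (congrArg (fun z : ℍ[F] => z.imJ) h)
  have hK := key _ (congrArg (fun z : ℍ[F] => z.imK) h)
  ext <;> simp [hI, hJ, hK]

theorem tr_eq_zero_of_sq {x : M F} (hx : x ∈ unitary (M F)) (h : x * x = 1) (h1 : x ≠ 1)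
    (h1' : x ≠ -1) : star x = x ∧ tr x = 0 := by
  have hs : star x = x := left_inv_eq_right_inv (Unitary.star_mul_self_of_mem hx) h
  refine ⟨hs, ?_⟩
  have h00 := congr_fun (congr_fun h 0) 0
  have h01 := congr_fun (congr_fun h 0) 1
  have h11 := congr_fun (congr_fun h 1) 1
  have s00 := congr_fun (congr_fun hs 0) 0
  have s10 := congr_fun (congr_fun hs 1) 0
  have s11 := congr_fun (congr_fun hs 1) 1
  simp only [Matrix.star_apply] at s00 s10 s11
  have r0 : ∃ r : F, x 0 0 = r • 1 := ⟨_, eq_re_smul_one s00⟩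
  have r1 : ∃ r : F, x 1 1 = r • 1 := ⟨_, eq_re_smul_one s11⟩
  obtain ⟨r, hr⟩ := r0
  obtain ⟨t, ht⟩ := r1
  have htr : tr x = r + t := by simp [tr, hr, ht]
  simp only [Matrix.mul_apply, Fin.sum_univ_two, hr, ht, ← s10, smul_mul_assoc, mul_smul_comm,
    one_mul, mul_one, Matrix.one_apply_eq, mul_star_quat, star_mul_quat] at h00 h01 h11
  have h01' : (r + t) • x 0 1 = 0 := by rw [add_smul]; simpa using h01
  rcases smul_eq_zero.mp h01' with h0 | h0
  · rw [htr, h0]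
  · have e0 : r * r = 1 := by
      have := congrArg (fun z : ℍ[F] => z.re) h00
      simpa [h0] using this
    have e1 : t * t = 1 := by
      have := congrArg (fun z : ℍ[F] => z.re) h11
      simpa [h0] using this
    have hx : x = !![r • 1, 0; 0, t • 1] := by
      rw [Matrix.eta_fin_two x, hr, ht, ← s10, h0]; simp
    rw [htr]
    rcases mul_self_eq_one_iff.mp e0 with rfl | rfl <;>
      rcases mul_self_eq_one_iff.mp e1 with rfl | rfl
    · exact absurd (by rw [hx, Matrix.one_fin_two]; simp) h1
    · simp
    · simp
    · exact absurd (by rw [hx, Matrix.one_fin_two]; ext i j <;> fin_cases i <;> fin_cases j <;> simp) h1'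

theorem eq_or_neg_of_commute_of_sq {x y : M F} (hx : x ∈ unitary (M F)) (h : x * x = 1)
    (h1 : x ≠ 1) (h1' : x ≠ -1) (hy : y ∈ unitary (M F)) (h' : y * y = 1)
    (hc : x * y = y * x) : y = 1 ∨ y = -1 ∨ y = x ∨ y = -x := by
  by_cases k1 : y = 1
  · exact Or.inl k1
  by_cases k2 : y = -1
  · exact Or.inr (Or.inl k2)
  right; right
  obtain ⟨a1, a2⟩ := tr_eq_zero_of_sq hx h h1 h1'
  obtain ⟨b1, b2⟩ := tr_eq_zero_of_sq hy h' k1 k2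
  have := E_mul_add (coord x) (coord y)
  rw [E_coord a1 a2, E_coord b1 b2, ← hc, ← two_smul F, mul_smul] at this
  have h3 : x * y = (coord x ⬝ᵥ coord y) • 1 := smul_right_injective _ (NeZero.ne (2 : F)) this
  have h4 : y = (coord x ⬝ᵥ coord y) • x := by
    have := congrArg (x * ·) h3
    simpa [← mul_assoc, h] using this
  generalize coord x ⬝ᵥ coord y = c at h4
  subst h4
  rcases eq_or_neg_of_smul_mem hx hy with rfl | rfl <;> simp

theorem tr_eq_zero_of_sq_neg {x : M F} (hx : x ∈ unitary (M F)) (h : x * x = -1) :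
    star x = -x ∧ tr x = 0 := by
  have hs : star x = -x := left_inv_eq_right_inv (Unitary.star_mul_self_of_mem hx)
    (by rw [mul_neg, h, neg_neg])
  refine ⟨hs, ?_⟩
  have := tr_star x
  rw [hs, map_neg] at this
  have h2 := NeZero.ne (2 : F)
  have h3 : (2 : F) * tr x = 0 := by linear_combination -this
  exact (mul_eq_zero.mp h3).resolve_left h2

end Involutions

section Extraspecial

variable {F : Type} [Field F] [NeZero (2 : F)] [Finite F]

/-- Every square of an element of `K` is `1` or `-1`. -/
def SqPM (K : Subgroup (unitary (M F))) : Prop :=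
  ∀ x ∈ K, x.1 * x.1 = 1 ∨ x.1 * x.1 = -1

theorem SqPM.comm {K : Subgroup (unitary (M F))} (hK : SqPM K) {x y : unitary (M F)} (hx : x ∈ K)
    (hy : y ∈ K) : x.1 * y.1 = y.1 * x.1 ∨ x.1 * y.1 = -(y.1 * x.1) := by
  have h1 := hK x hx
  have h2 := hK y hy
  have h3 : x.1 * y.1 * (x.1 * y.1) = 1 ∨ x.1 * y.1 * (x.1 * y.1) = -1 :=
    hK (x * y) (mul_mem hx hy)
  have key : x.1 * (x.1 * y.1 * (x.1 * y.1)) * y.1 = (x.1 * x.1) * (y.1 * x.1) * (y.1 * y.1) := by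
    noncomm_ring
  rcases h1 with h1 | h1 <;> rcases h2 with h2 | h2 <;> rcases h3 with h3 | h3 <;>
    rw [h1, h2, h3] at key <;>
    simp only [mul_one, one_mul, mul_neg, neg_mul, neg_neg, neg_inj] at key <;>
    first | exact Or.inl key | exact Or.inr key | exact Or.inr (neg_eq_iff_eq_neg.mp key)

theorem SqPM.card_le {K : Subgroup (unitary (M F))} (hK : SqPM K) {x : unitary (M F)}
    (hx : x ∈ K) : Nat.card K ≤ 2 * Nat.card (K ⊓ Subgroup.centralizer {x} : Subgroup _) := by
  set C := K ⊓ Subgroup.centralizer {x}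
  have hC : ∀ y, y ∈ C ↔ y ∈ K ∧ x.1 * y.1 = y.1 * x.1 := fun y => by
    rw [Subgroup.mem_inf, Subgroup.mem_centralizer_singleton_iff]
    refine and_congr_right fun _ => ⟨fun h => (congrArg Subtype.val h).symm, fun h => ?_⟩
    exact Subtype.ext h.symm
  by_cases h : K ≤ C
  · have := Nat.card_mono (Set.toFinite (C : Set (unitary (M F)))) h
    change Nat.card K ≤ Nat.card C at this
    omega
  · obtain ⟨y, hy, hyC⟩ := SetLike.not_le_iff_exists.mp h
    have hy' : x.1 * y.1 = -(y.1 * x.1) :=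
      (hK.comm hx hy).resolve_left fun h => hyC ((hC y).mpr ⟨hy, h⟩)
    have hsub : (K : Set (unitary (M F))) ⊆ C ∪ (y * ·) '' (C : Set (unitary (M F))) := by
      intro z hz
      by_cases hzC : z ∈ C
      · exact Or.inl hzC
      right
      refine ⟨y⁻¹ * z, (hC _).mpr ⟨mul_mem (inv_mem hy) hz, ?_⟩, by simp⟩
      have hz' : x.1 * z.1 = -(z.1 * x.1) :=
        (hK.comm hx hz).resolve_left fun h => hzC ((hC z).mpr ⟨hz, h⟩)
      have hyi : x.1 * (y⁻¹).1 = -((y⁻¹).1 * x.1) := by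
        have e1 : (y⁻¹).1 * y.1 = 1 := congrArg Subtype.val (inv_mul_cancel y)
        have e2 : y.1 * (y⁻¹).1 = 1 := congrArg Subtype.val (mul_inv_cancel y)
        calc x.1 * (y⁻¹).1 = (y⁻¹).1 * y.1 * x.1 * (y⁻¹).1 := by rw [e1, one_mul]
          _ = (y⁻¹).1 * (y.1 * x.1) * (y⁻¹).1 := by noncomm_ring
          _ = (y⁻¹).1 * (-(x.1 * y.1)) * (y⁻¹).1 := by rw [hy', neg_neg]
          _ = -((y⁻¹).1 * x.1 * (y.1 * (y⁻¹).1)) := by noncomm_ring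
          _ = _ := by rw [e2, mul_one]
      change x.1 * ((y⁻¹).1 * z.1) = ((y⁻¹).1 * z.1) * x.1
      rw [← mul_assoc, hyi, neg_mul, mul_assoc, hz']
      noncomm_ring
    have h1 := Set.ncard_le_ncard hsub (Set.toFinite _)
    have h2 := Set.ncard_union_le (C : Set (unitary (M F))) ((y * ·) '' (C : Set (unitary (M F))))
    rw [Set.ncard_image_of_injective _ (mul_right_injective y)] at h2
    have h3 : (K : Set (unitary (M F))).ncard = Nat.card K := (Nat.card_coe_set_eq _).symm
    have h4 : (C : Set (unitary (M F))).ncard = Nat.card C := (Nat.card_coe_set_eq _).symm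
    omega

end Extraspecial

section Triple

variable {F : Type} [Field F] [NeZero (2 : F)] [Finite F]

theorem SqPM.exists_commute {K : Subgroup (unitary (M F))} (hK : SqPM K) (hc : Nat.card K = 32)
    {x : unitary (M F)} (hx : x ∈ K) (T : List (M F)) (hT : T.length < 16) :
    ∃ y ∈ K, x.1 * y.1 = y.1 * x.1 ∧ y.1 ∉ T := by
  classical
  by_contra! hcon
  have h1 := hK.card_le hx
  let f : (K ⊓ Subgroup.centralizer {x} : Subgroup _) → T.toFinset := fun y =>
    ⟨y.1.1, by
      rw [List.mem_toFinset]
      refine hcon y.1 y.2.1 ?_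
      have := Subgroup.mem_centralizer_singleton_iff.mp y.2.2
      exact (congrArg Subtype.val this).symm⟩
  have hf : Function.Injective f := fun y y' h =>
    Subtype.ext (Subtype.ext (congrArg (fun z : T.toFinset => z.1) h))
  have h2 := Nat.card_le_card_of_injective f hf
  have h3 := T.toFinset_card_le
  have h4 : Nat.card T.toFinset = T.toFinset.card := Nat.card_eq_card_toFinset _ |>.trans (by simp)
  omega

theorem SqPM.exists_triple {K : Subgroup (unitary (M F))} (hK : SqPM K) (hc : Nat.card K = 32) :
    ∃ s ∈ K, ∃ i ∈ K, ∃ j ∈ K, s.1 ≠ 1 ∧ s.1 ≠ -1 ∧ s.1 * s.1 = 1 ∧ i.1 * i.1 = -1 ∧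
      j.1 * j.1 = -1 ∧ j.1 * i.1 = -(i.1 * j.1) ∧ s.1 * i.1 = i.1 * s.1 ∧
      s.1 * j.1 = j.1 * s.1 := by
  obtain ⟨s, hs, hs1, hs2, hs3⟩ : ∃ s ∈ K, s.1 ≠ 1 ∧ s.1 ≠ -1 ∧ s.1 * s.1 = 1 := by
    by_contra! hcon
    have hneg : ∀ y ∈ K, y.1 ≠ 1 → y.1 ≠ -1 → y.1 * y.1 = -1 := fun y hy h h' =>
      (hK y hy).resolve_left (hcon y hy h h')
    obtain ⟨x, hx, -, hxT⟩ := hK.exists_commute hc (one_mem K) [1, -1] (by simp)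
    simp only [List.mem_cons, List.not_mem_nil, or_false, not_or] at hxT
    obtain ⟨y, hy, hxy, hyT⟩ := hK.exists_commute hc hx [1, -1, x.1, -x.1] (by simp)
    simp only [List.mem_cons, List.not_mem_nil, or_false, not_or] at hyT
    have e1 := hneg x hx hxT.1 hxT.2
    have e2 := hneg y hy hyT.1 hyT.2.1
    have e3 : x.1 * y.1 * (x.1 * y.1) = 1 := by
      calc x.1 * y.1 * (x.1 * y.1) = x.1 * (y.1 * x.1) * y.1 := by noncomm_ring
        _ = x.1 * x.1 * (y.1 * y.1) := by rw [← hxy]; noncomm_ring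
        _ = 1 := by rw [e1, e2]; simp
    refine hcon (x * y) (mul_mem hx hy) ?_ ?_ e3
    · intro h
      apply hyT.2.2.2
      have := congrArg (x.1 * ·) (show x.1 * y.1 = 1 from h)
      simp only [← mul_assoc, e1, neg_mul, one_mul, mul_one] at this
      rw [← this, neg_neg]
    · intro h
      apply hyT.2.2.1
      have := congrArg (x.1 * ·) (show x.1 * y.1 = -1 from h)
      simp only [← mul_assoc, e1, neg_mul, one_mul, mul_one, mul_neg] at this
      exact neg_injective this
  have hinv : ∀ y : unitary (M F), s.1 * y.1 = y.1 * s.1 → y.1 * y.1 = 1 →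
      y.1 = 1 ∨ y.1 = -1 ∨ y.1 = s.1 ∨ y.1 = -s.1 := fun y hy h =>
    eq_or_neg_of_commute_of_sq s.2 hs3 hs1 hs2 y.2 h hy
  obtain ⟨i, hi, hsi, hiT⟩ := hK.exists_commute hc hs [1, -1, s.1, -s.1] (by simp)
  simp only [List.mem_cons, List.not_mem_nil, or_false] at hiT
  have hi2 : i.1 * i.1 = -1 := (hK i hi).resolve_left fun h => hiT (hinv i hsi h)
  obtain ⟨j, hj, hsj, hjT⟩ := hK.exists_commute hc hs
    [1, -1, s.1, -s.1, i.1, -i.1, i.1 * s.1, -(i.1 * s.1)] (by simp)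
  simp only [List.mem_cons, List.not_mem_nil, or_false] at hjT
  have hj2 : j.1 * j.1 = -1 := (hK j hj).resolve_left fun h => hjT (by
    rcases hinv j hsj h with h | h | h | h <;> simp [h])
  refine ⟨s, hs, i, hi, j, hj, hs1, hs2, hs3, hi2, hj2, ?_, hsi, hsj⟩
  refine (hK.comm hj hi).resolve_left fun hij => hjT ?_
  have e3 : i.1 * j.1 * (i.1 * j.1) = 1 := by
    calc i.1 * j.1 * (i.1 * j.1) = i.1 * (j.1 * i.1) * j.1 := by noncomm_ring
      _ = i.1 * i.1 * (j.1 * j.1) := by rw [hij]; noncomm_ring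
      _ = 1 := by rw [hi2, hj2]; simp
  have e4 : s.1 * (i.1 * j.1) = i.1 * j.1 * s.1 := by
    rw [← mul_assoc, hsi, mul_assoc, hsj, mul_assoc]
  have e5 : ∀ c : M F, i.1 * j.1 = c → j.1 = -(i.1 * c) := fun c h => by
    rw [← h, ← mul_assoc, hi2]; simp
  rcases hinv (i * j) e4 e3 with h | h | h | h <;> rw [e5 _ h] <;> simp

end Triple

section QuaternionRelations

variable {F R : Type*} [Field F] [Ring R] [Algebra F R] {i j : R}

/-- A combination of anticommuting square roots `i`, `j`, `i * j` of `-1`. -/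
def nil (i j : R) (a b : F) : R := a • i + b • j + i * j

theorem k_relations (hi : i * i = -1) (hj : j * j = -1) (hji : j * i = -(i * j)) :
    i * (i * j) = -j ∧ i * j * i = j ∧ j * (i * j) = i ∧ i * j * j = -i ∧ i * j * (i * j) = -1 := by
  have h1 : i * (i * j) = -j := by rw [← mul_assoc, hi]; simp
  have h2 : i * j * i = j := by rw [mul_assoc, hji, mul_neg, h1, neg_neg]
  have h4 : i * j * j = -i := by rw [mul_assoc, hj]; simp
  refine ⟨h1, h2, ?_, h4, ?_⟩
  · rw [← mul_assoc, hji, neg_mul, h4, neg_neg]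
  · rw [← mul_assoc, h2, hj]

theorem nil_mul_self (hi : i * i = -1) (hj : j * j = -1) (hji : j * i = -(i * j)) {a b : F}
    (hab : a ^ 2 + b ^ 2 = -1) : nil i j a b * nil i j a b = 0 := by
  obtain ⟨h1, h2, h3, h4, h5⟩ := k_relations hi hj hji
  simp only [nil, add_mul, mul_add, smul_mul_assoc, mul_smul_comm, hi, hj, hji, h1, h2, h3, h4, h5]
  linear_combination (norm := module) (-hab) • (1 : R)

theorem nil_conj (hi : i * i = -1) (hj : j * j = -1) (hji : j * i = -(i * j)) {a b : F}
    (hab : a ^ 2 + b ^ 2 = -1) (α : F) :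
    (1 + α • nil i j a b) * i * (1 - α • nil i j a b) =
      i + (2 * α) • j - (2 * α * b) • (i * j) + (2 * a * α ^ 2) • nil i j a b := by
  obtain ⟨h1, h2, h3, h4, h5⟩ := k_relations hi hj hji
  have e1 : nil i j a b * i = j - b • (i * j) - a • 1 := by
    simp only [nil, add_mul, smul_mul_assoc, hi, hji, h2]; module
  have e2 : i * nil i j a b = -j + b • (i * j) - a • 1 := by
    simp only [nil, mul_add, mul_smul_comm, hi, h1]; module
  have e3 : nil i j a b * i * nil i j a b = -(2 * a) • nil i j a b := by
    have h0 := nil_mul_self hi hj hji hab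
    have e4 : i * nil i j a b = -(nil i j a b * i) - (2 * a) • 1 := by rw [e1, e2]; module
    rw [mul_assoc, e4, mul_sub, mul_neg, ← mul_assoc, h0, mul_smul_comm, mul_one]
    simp
  calc (1 + α • nil i j a b) * i * (1 - α • nil i j a b) =
      i + α • (nil i j a b * i) - α • (i * nil i j a b) - α ^ 2 • (nil i j a b * i * nil i j a b) := by
        simp only [add_mul, mul_sub, one_mul, mul_one, smul_mul_assoc, mul_smul_comm, mul_assoc]
        module
    _ = _ := by rw [e3, e1, e2]; module

end QuaternionRelations

section Lattice

variable {F : Type} [Field F] [NeZero (2 : F)] [Finite F]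

/-- The ring generated by a group of unitary matrices. -/
def lat (K : Subgroup (unitary (M F))) : Subring (M F) :=
  Subring.closure (Subtype.val '' (K : Set (unitary (M F))))

theorem mem_lat {K : Subgroup (unitary (M F))} {g : unitary (M F)} (hg : g ∈ K) :
    g.1 ∈ lat K := Subring.subset_closure ⟨g, hg, rfl⟩

theorem mem_lat_iff {K : Subgroup (unitary (M F))} {x : M F} :
    x ∈ lat K ↔ x ∈ AddSubgroup.closure (Subtype.val '' (K : Set (unitary (M F)))) := by
  rw [lat, Subring.mem_closure_iff]
  have : (Submonoid.closure (Subtype.val '' (K : Set (unitary (M F)))) : Set (M F)) =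
      Subtype.val '' (K : Set (unitary (M F))) :=
    congrArg SetLike.coe (Submonoid.closure_eq (K.toSubmonoid.map (unitary (M F)).subtype))
  rw [this]

theorem SqPM.tr_mem {K : Subgroup (unitary (M F))} (hK : SqPM K) {x : unitary (M F)}
    (hx : x ∈ K) : x.1 = 1 ∨ x.1 = -1 ∨ tr x.1 = 0 := by
  by_cases h1 : x.1 = 1
  · exact Or.inl h1
  by_cases h2 : x.1 = -1
  · exact Or.inr (Or.inl h2)
  right; right
  rcases hK x hx with h | h
  · exact (tr_eq_zero_of_sq x.2 h h1 h2).2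
  · exact (tr_eq_zero_of_sq_neg x.2 h).2

theorem SqPM.tr_lat {K : Subgroup (unitary (M F))} (hK : SqPM K) {x : M F} (hx : x ∈ lat K) :
    ∃ z : ℤ, tr x = z := by
  rw [mem_lat_iff] at hx
  induction hx using AddSubgroup.closure_induction with
  | mem x hx =>
    obtain ⟨g, hg, rfl⟩ := hx
    rcases hK.tr_mem hg with h | h | h
    · exact ⟨2, by rw [h, tr_one]; simp⟩
    · exact ⟨-2, by rw [h, map_neg, tr_one]; simp⟩
    · exact ⟨0, by rw [h]; simp⟩
  | zero => exact ⟨0, by simp⟩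
  | add x y _ _ hx hy =>
    obtain ⟨a, ha⟩ := hx
    obtain ⟨b, hb⟩ := hy
    exact ⟨a + b, by rw [map_add, ha, hb]; simp⟩
  | neg x _ hx =>
    obtain ⟨a, ha⟩ := hx
    exact ⟨-a, by rw [map_neg, ha]; simp⟩

/-- The stabilizer of a subring under conjugation. -/
def stab (A : Subring (M F)) : Subgroup (unitary (M F)) where
  carrier := {g | ∀ x, x ∈ A ↔ g.1 * x * star g.1 ∈ A}
  one_mem' := fun x => by simp
  mul_mem' := fun {g h} hg hh x => by
    rw [hh, hg]
    change _ ↔ (g.1 * h.1) * x * star (g.1 * h.1) ∈ A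
    rw [star_mul]
    simp only [mul_assoc]
  inv_mem' := fun {g} hg x => by
    rw [hg (_ * _ * _)]
    change _ ↔ g.1 * (star g.1 * x * star (star g.1)) * star g.1 ∈ A
    have h := Unitary.mul_star_self_of_mem g.2
    rw [star_star, ← mul_assoc, ← mul_assoc, h, one_mul, mul_assoc, h, mul_one]

theorem mem_stab_of_mem {A : Subring (M F)} {g : unitary (M F)} (h : g.1 ∈ A)
    (h' : star g.1 ∈ A) : g ∈ stab A := fun x => by
  refine ⟨fun hx => mul_mem (mul_mem h hx) h', fun hx => ?_⟩
  have := mul_mem (mul_mem h' hx) h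
  have e := Unitary.star_mul_self_of_mem g.2
  rwa [← mul_assoc, ← mul_assoc, e, one_mul, mul_assoc, e, mul_one] at this

theorem mem_stab_lat {K : Subgroup (unitary (M F))} {g : unitary (M F)}
    (hg : ∀ x ∈ K, g * x * g⁻¹ ∈ K) (hg' : ∀ x ∈ K, g⁻¹ * x * g ∈ K) : g ∈ stab (lat K) := by
  have key : ∀ g : unitary (M F), (∀ x ∈ K, g * x * g⁻¹ ∈ K) → ∀ x ∈ lat K,
      g.1 * x * star g.1 ∈ lat K := by
    intro g hg x hx
    rw [mem_lat_iff] at hx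
    induction hx using AddSubgroup.closure_induction with
    | mem x hx =>
      obtain ⟨y, hy, rfl⟩ := hx
      exact mem_lat (hg y hy)
    | zero => simp
    | add x y _ _ hx hy => rw [mul_add, add_mul]; exact add_mem hx hy
    | neg x _ hx => rw [mul_neg, neg_mul]; exact neg_mem hx
  intro x
  refine ⟨key g hg x, fun hx => ?_⟩
  have := key g⁻¹ (by simpa using hg') _ hx
  change star g.1 * (g.1 * x * star g.1) * star (star g.1) ∈ _ at this
  have e := Unitary.star_mul_self_of_mem g.2
  rwa [star_star, ← mul_assoc, ← mul_assoc, e, one_mul, mul_assoc, e, mul_one] at this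

end Lattice

section ForwardPrime

variable {F : Type} [Field F] [NeZero (2 : F)] [Finite F]

theorem card_prime_of_intCast_surjective (h : ∀ x : F, ∃ z : ℤ, x = z) : (Nat.card F).Prime := by
  obtain ⟨p, hp⟩ := CharP.exists F
  have hprime : p.Prime := CharP.char_is_prime F p
  have : Fact p.Prime := ⟨hprime⟩
  have hb : Function.Bijective (ZMod.castHom (dvd_refl p) F) := by
    refine ⟨(ZMod.castHom (dvd_refl p) F).injective, fun x => ?_⟩
    obtain ⟨z, rfl⟩ := h x
    exact ⟨z, by simp⟩
  rw [← Nat.card_congr (Equiv.ofBijective _ hb), Nat.card_zmod]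
  exact hprime

theorem not_sq_dvd_of_prime {p : ℕ} (hp : p.Prime) (h2 : p ≠ 2) : ¬ p ^ 2 ∣ 1920 := by
  intro h
  have h1 : p ^ 2 ∣ 15 := by
    have hc : Nat.Coprime (p ^ 2) (2 ^ 7) :=
      Nat.Coprime.pow _ _ ((Nat.coprime_primes hp Nat.prime_two).mpr h2)
    exact hc.dvd_of_dvd_mul_left (by simpa using h)
  have h3 : p ≤ 3 := by
    have := Nat.le_of_dvd (by norm_num) h1
    nlinarith
  have := hp.two_le
  interval_cases p <;> omega

theorem prime_of_maximal {K H : Subgroup (unitary (M F))} (hK : SqPM K) (hc : Nat.card K = 32)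
    (hH : IsCoatom H) (hHc : Nat.card H = 1920) (hn : ∀ g ∈ H, ∀ x ∈ K, g * x * g⁻¹ ∈ K) :
    (Nat.card F).Prime := by
  obtain ⟨p, hp⟩ := CharP.exists F
  have hprime : p.Prime := CharP.char_is_prime F p
  have : Fact p.Prime := ⟨hprime⟩
  have hp2 : p ≠ 2 := by
    rintro rfl
    exact NeZero.ne (2 : F) (by exact_mod_cast CharP.cast_eq_zero F 2)
  have h2 := NeZero.ne (2 : F)
  obtain ⟨s, hs, i, hi, j, hj, s1, s2, ss, ii, jj, ji, si, sj⟩ := hK.exists_triple hc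
  obtain ⟨a, b, hab⟩ := CharP.sq_add_sq F p (-1)
  rw [Int.cast_neg, Int.cast_one] at hab
  obtain ⟨h1, h2', h3, h4, h5⟩ := k_relations ii jj ji
  have nn := nil_mul_self ii jj ji hab
  have nconj := nil_conj ii jj ji hab
  have ti := tr_eq_zero_of_sq_neg i.2 ii
  have tj := tr_eq_zero_of_sq_neg j.2 jj
  have tk := tr_eq_zero_of_sq_neg (i * j).2 h5
  have ts := tr_eq_zero_of_sq s.2 ss s1 s2
  have tis := tr_eq_zero_of_sq_neg (i * s).2 (by
    change i.1 * s.1 * (i.1 * s.1) = -1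
    rw [mul_assoc, ← mul_assoc s.1, si, mul_assoc, ss, mul_one, ii])
  have tjs := tr_eq_zero_of_sq_neg (j * s).2 (by
    change j.1 * s.1 * (j.1 * s.1) = -1
    rw [mul_assoc, ← mul_assoc s.1, sj, mul_assoc, ss, mul_one, jj])
  change _ ∧ tr (i.1 * j.1) = 0 at tk
  change _ ∧ tr (i.1 * s.1) = 0 at tis
  change _ ∧ tr (j.1 * s.1) = 0 at tjs
  have hstar : star (nil i.1 j.1 (a : F) (b : F)) = -nil i.1 j.1 (a : F) (b : F) := by
    simp only [nil, star_add, star_smul_M, star_mul, ti.1, tj.1, neg_mul_neg, ji]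
    module
  have hns : s.1 * nil i.1 j.1 (a : F) (b : F) = nil i.1 j.1 (a : F) (b : F) * s.1 := by
    simp only [nil, mul_add, add_mul, smul_mul_assoc, mul_smul_comm, si, sj, mul_assoc]
    rw [← mul_assoc, si, mul_assoc, sj]
  have hnlat : nil i.1 j.1 (a : F) (b : F) ∈ lat K := by
    simp only [nil, Nat.cast_smul_eq_nsmul]
    exact add_mem (add_mem (nsmul_mem (mem_lat hi) _) (nsmul_mem (mem_lat hj) _))
      (mul_mem (mem_lat hi) (mem_lat hj))
  have tnk : tr (nil i.1 j.1 (a : F) (b : F) * (i.1 * j.1)) = -2 := by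
    simp only [nil, add_mul, smul_mul_assoc, h1, h3, h5, map_add, map_smul, map_neg, ti.2, tj.2,
      tr_one]
    simp
  have tnj : tr (nil i.1 j.1 (a : F) (b : F) * j.1) = -2 * b := by
    simp only [nil, add_mul, smul_mul_assoc, jj, h4, map_add, map_smul, map_neg, ti.2, tk.2,
      tr_one]
    simp; ring
  have tnsk : tr (nil i.1 j.1 (a : F) (b : F) * s.1 * (i.1 * j.1)) = 0 := by
    have : nil i.1 j.1 (a : F) (b : F) * s.1 * (i.1 * j.1) =
        nil i.1 j.1 (a : F) (b : F) * (i.1 * j.1) * s.1 := by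
      rw [mul_assoc, mul_assoc, ← mul_assoc s.1, si, mul_assoc, sj, mul_assoc]
    rw [this]
    simp only [nil, add_mul, smul_mul_assoc, h1, h3, h5, map_add, map_smul, map_neg, neg_mul,
      one_mul, tis.2, tjs.2, ts.2]
    simp
  generalize nil i.1 j.1 (a : F) (b : F) = n at *
  have nns : n * (n * s.1) = 0 := by rw [← mul_assoc, nn, zero_mul]
  have nsn : n * s.1 * n = 0 := by rw [mul_assoc, hns, nns]
  have nsns : n * s.1 * (n * s.1) = 0 := by rw [← mul_assoc, nsn, zero_mul]
  let u : F → F → M F := fun t r => 1 + t • n + r • (n * s.1)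
  have u_mul : ∀ t r t' r', u t r * u t' r' = u (t + t') (r + r') := by
    intro t r t' r'
    simp only [u, add_mul, mul_add, one_mul, mul_one, smul_mul_assoc, mul_smul_comm, nn, nns, nsn,
      nsns]
    module
  have u_star : ∀ t r, star (u t r) = u (-t) (-r) := by
    intro t r
    simp only [u, star_add, star_one, star_smul_M, star_mul, hstar, ts.1, mul_neg, hns]
    module
  have u_zero : u 0 0 = 1 := by simp [u]
  have u_mem : ∀ t r, u t r ∈ unitary (M F) := fun t r => by
    rw [Unitary.mem_iff, u_star, u_mul, u_mul]
    simp [u_zero]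
  have hle : H ≤ stab (lat K) := fun g hg => mem_stab_lat (hn g hg) (by
    simpa using hn g⁻¹ (inv_mem hg))
  rcases hH.le_iff.mp hle with hS | hS
  · refine card_prime_of_intCast_surjective fun x => ?_
    have key : ∀ α : F, ∃ z : ℤ, -4 * α - 4 * a * b * α ^ 2 = z := by
      intro α
      have hg : (⟨u α 0, u_mem α 0⟩ : unitary (M F)) ∈ stab (lat K) := hS ▸ Subgroup.mem_top _
      have hm := (hg i.1).mp (mem_lat hi)
      change u α 0 * i.1 * star (u α 0) ∈ lat K at hm
      rw [u_star] at hm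
      have e1 : u α 0 = 1 + α • n := by simp [u]
      have e2 : u (-α) (-0) = 1 - α • n := by simp [u, sub_eq_add_neg]
      rw [e1, e2, nconj] at hm
      obtain ⟨z, hz⟩ := hK.tr_lat (mul_mem hm (mem_lat hj))
      refine ⟨z, ?_⟩
      rw [← hz]
      simp only [add_mul, sub_mul, smul_mul_assoc, map_add, map_sub, map_smul, jj, h4, map_neg,
        tr_one, tk.2, ti.2, tnj]
      simp only [smul_eq_mul]
      ring
    obtain ⟨z, hz⟩ := key (-(x / 8))
    obtain ⟨z', hz'⟩ := key (x / 8)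
    refine ⟨z - z', ?_⟩
    have h8 : (8 : F) ≠ 0 := by
      rw [show (8 : F) = 2 * 2 * 2 by norm_num]
      exact mul_ne_zero (mul_ne_zero h2 h2) h2
    rw [Int.cast_sub, ← hz, ← hz']
    field_simp
    ring
  · exfalso
    refine not_sq_dvd_of_prime hprime hp2 ?_
    rw [← hHc, ← hS]
    let c : ZMod p →+* F := ZMod.castHom (dvd_refl p) F
    have hcn : ∀ t : ZMod p, c t = ((t.val : ℕ) : F) := fun t => by
      conv_lhs => rw [← ZMod.natCast_zmod_val t]
      rw [map_natCast]
    have u_lat : ∀ t r : ZMod p, u (c t) (c r) ∈ lat K := fun t r => by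
      simp only [u, hcn, Nat.cast_smul_eq_nsmul]
      exact add_mem (add_mem (one_mem _) (nsmul_mem hnlat _))
        (nsmul_mem (mul_mem hnlat (mem_lat hs)) _)
    let f : Multiplicative (ZMod p × ZMod p) →* stab (lat K) :=
      { toFun := fun x => ⟨⟨u (c x.toAdd.1) (c x.toAdd.2), u_mem _ _⟩, mem_stab_of_mem (u_lat _ _) (by
          change star (u _ _) ∈ _
          rw [u_star, ← map_neg, ← map_neg]
          exact u_lat _ _)⟩
        map_one' := by
          apply Subtype.ext; apply Subtype.ext
          change u (c 0) (c 0) = 1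
          rw [map_zero, u_zero]
        map_mul' := fun x y => by
          apply Subtype.ext; apply Subtype.ext
          change u (c (x.toAdd.1 + y.toAdd.1)) (c (x.toAdd.2 + y.toAdd.2)) = u _ _ * u _ _
          rw [u_mul, map_add, map_add] }
    have hf : Function.Injective f := by
      rw [injective_iff_map_eq_one]
      intro x hx
      have hx' : u (c x.toAdd.1) (c x.toAdd.2) = 1 := congrArg (fun z => z.1.1) hx
      generalize hT : c x.toAdd.1 = t at hx'
      generalize hR : c x.toAdd.2 = r at hx'
      have hx2 : t • n + r • (n * s.1) = 0 := by
        have : (1 : M F) + (t • n + r • (n * s.1)) = 1 := by rw [← add_assoc]; exact hx'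
        simpa using this
      have ht : t = 0 := by
        have := congrArg (fun z => tr (z * (i.1 * j.1))) hx2
        simp only [add_mul, smul_mul_assoc, map_add, map_smul, tnk, tnsk, zero_mul,
          map_zero] at this
        simpa [h2] using this
      have hr : r = 0 := by
        rw [ht, zero_smul, zero_add] at hx2
        have := congrArg (fun z => tr (z * s.1 * (i.1 * j.1))) hx2
        simp only [smul_mul_assoc, map_smul, zero_mul, map_zero] at this
        rw [mul_assoc n, ss, mul_one, tnk] at this
        simpa [h2] using this
      have e1 : x.toAdd.1 = 0 := c.injective (by rw [hT, ht, map_zero])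
      have e2 : x.toAdd.2 = 0 := c.injective (by rw [hR, hr, map_zero])
      exact Multiplicative.toAdd.injective (Prod.ext e1 e2)
    have := Subgroup.card_dvd_of_injective f hf
    rwa [Nat.card_eq_fintype_card, Fintype.card_multiplicative, Fintype.card_prod, ZMod.card,
      ← pow_two] at this

end ForwardPrime

section Forward

variable {F : Type} [Field F] [NeZero (2 : F)] [Finite F]

theorem odd_index_iff {K : Subgroup (unitary (M F))} (hK : Nat.card K = 1920)
    (hq : Odd (Nat.card F)) :
    Odd K.index ↔ Nat.card F % 8 = 3 ∨ Nat.card F % 8 = 5 := by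
  have h := K.card_mul_index
  rw [hK, card_unitary] at h
  generalize Nat.card F = q at *
  generalize K.index = m at *
  have hq4 : Odd (q ^ 4) := hq.pow
  have hmod : q % 8 = 1 ∨ q % 8 = 3 ∨ q % 8 = 5 ∨ q % 8 = 7 := by
    obtain ⟨k, rfl⟩ := hq; omega
  have key : q % 8 = 1 ∨ q % 8 = 7 → Even m := by
    intro hm
    have : 16 ∣ q ^ 2 - 1 := by
      obtain ⟨t, ht⟩ : ∃ t, q = 8 * t + 1 ∨ q = 8 * t + 7 := ⟨q / 8, by omega⟩
      rcases ht with rfl | rfl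
      · exact ⟨4 * t ^ 2 + t, by rw [Nat.sub_eq_iff_eq_add (Nat.one_le_pow _ _ (by omega))]; ring⟩
      · exact ⟨4 * t ^ 2 + 7 * t + 3, by rw [Nat.sub_eq_iff_eq_add (Nat.one_le_pow _ _ (by omega))]; ring⟩
    obtain ⟨d, hd⟩ := this
    rw [hd] at h
    have h1 : 15 * m = 2 * (q ^ 4 * (q ^ 2 + 1) * d ^ 2) := by
      have : 128 * (15 * m) = 128 * (2 * (q ^ 4 * (q ^ 2 + 1) * d ^ 2)) := by
        rw [show 128 * (15 * m) = 1920 * m by ring, h]; ring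
      exact Nat.eq_of_mul_eq_mul_left (by norm_num) this
    rw [Nat.even_iff]
    omega
  have key' : q % 8 = 3 ∨ q % 8 = 5 → Odd m := by
    intro hm
    have : ∃ d, q ^ 2 = 16 * d + 9 := by
      obtain ⟨t, ht⟩ : ∃ t, q = 8 * t + 3 ∨ q = 8 * t + 5 := ⟨q / 8, by omega⟩
      rcases ht with rfl | rfl
      · exact ⟨4 * t ^ 2 + 3 * t, by ring⟩
      · exact ⟨4 * t ^ 2 + 5 * t + 1, by ring⟩
    obtain ⟨d, hd⟩ := this
    rw [hd, show 16 * d + 9 - 1 = 8 * (2 * d + 1) by omega,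
      show 16 * d + 9 + 1 = 2 * (8 * d + 5) by omega] at h
    have h1 : 15 * m = q ^ 4 * (8 * d + 5) * (2 * d + 1) ^ 2 := by
      have : 128 * (15 * m) = 128 * (q ^ 4 * (8 * d + 5) * (2 * d + 1) ^ 2) := by
        rw [show 128 * (15 * m) = 1920 * m by ring, h]; ring
      exact Nat.eq_of_mul_eq_mul_left (by norm_num) this
    have h2 : Odd (15 * m) := by
      rw [h1]
      exact (hq4.mul ⟨4 * d + 2, by ring⟩).mul (Odd.pow ⟨d, rfl⟩)
    exact (Nat.odd_mul.mp h2).2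
  constructor
  · intro hodd
    by_contra hne
    exact Nat.not_even_iff_odd.mpr hodd (key (by omega))
  · exact key'

theorem forward {G : Type*} [Group G] (π : unitary (M F) →* G) (hπ : Function.Surjective π)
    (hker : ∀ g, π g = 1 ↔ g.1 = 1 ∨ g.1 = -1) (hq : Odd (Nat.card F)) {H : Subgroup G}
    (hH : IsCoatom H) (hodd : Odd H.index) {N : Subgroup H} [N.Normal] (hN : Nat.card N = 16)
    (hN2 : ∀ g ∈ N, g * g = 1) (hA : Nonempty ((H ⧸ N) ≃* alternatingGroup (Fin 5))) :
    (Nat.card F).Prime ∧ (Nat.card F % 8 = 3 ∨ Nat.card F % 8 = 5) := by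
  have cker : Nat.card π.ker = 2 := by
    have hk : ∀ g, g ∈ π.ker ↔ g.1 = 1 ∨ g.1 = -1 := fun g => by rw [MonoidHom.mem_ker, hker]
    have h1 : (π.ker : Set (unitary (M F))) = {1, -1} := by
      ext g
      rw [SetLike.mem_coe, hk]
      exact or_congr ⟨fun h => Subtype.ext h, fun h => congrArg Subtype.val h⟩
        ⟨fun h => Subtype.ext h, fun h => congrArg Subtype.val h⟩
    rw [← SetLike.coe_sort_coe, Nat.card_coe_set_eq, h1, Set.ncard_pair]
    intro h
    exact one_ne_neg_one (congrArg Subtype.val h)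
  have card_comap : ∀ L : Subgroup G, Nat.card (L.comap π) = 2 * Nat.card L := by
    intro L
    have e1 := (L.comap π).card_mul_index
    rw [L.index_comap_of_surjective hπ, card_eq_card_ker_mul π hπ, cker, ← L.card_mul_index,
      ← mul_assoc] at e1
    have : Finite G := Finite.of_surjective π hπ
    exact Nat.eq_of_mul_eq_mul_right (Nat.pos_of_ne_zero L.index_ne_zero_of_finite) e1
  have cH : Nat.card H = 960 := by
    rw [← N.card_mul_index, hN, Subgroup.index, Nat.card_congr hA.some.toEquiv, card_A5]
  have cHt : Nat.card (H.comap π) = 1920 := by rw [card_comap, cH]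
  have cK : Nat.card ((N.map H.subtype).comap π) = 32 := by
    rw [card_comap, Subgroup.card_map_of_injective H.subtype_injective, hN]
  have hK : SqPM ((N.map H.subtype).comap π) := by
    rintro x ⟨y, hy, hyx⟩
    refine (hker (x * x)).mp ?_
    rw [map_mul, ← hyx, ← map_mul, hN2 y hy, map_one]
  refine ⟨prime_of_maximal hK cK (Subgroup.isCoatom_comap_of_surjective hπ hH) cHt ?_, ?_⟩
  · rintro g hg x ⟨y, hy, hyx⟩
    refine ⟨⟨π g, hg⟩ * y * ⟨π g, hg⟩⁻¹, Subgroup.Normal.conj_mem inferInstance y hy _, ?_⟩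
    simpa using hyx
  · rw [← odd_index_iff cHt hq, H.index_comap_of_surjective hπ]
    exact hodd

end Forward

section Overgroups

variable {F : Type} [Field F] [NeZero (2 : F)]

/-- The matrices belonging to a group of unitary matrices. -/
def mats (K : Subgroup (unitary (M F))) : Submonoid (M F) :=
  K.toSubmonoid.map (unitary (M F)).subtype

variable {K : Subgroup (unitary (M F))}

theorem coe_mem_mats {g : unitary (M F)} : g.1 ∈ mats K ↔ g ∈ K := by
  refine ⟨?_, fun h => ⟨g, h, rfl⟩⟩
  rintro ⟨h, hh, e⟩
  rwa [← Subtype.ext e]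

theorem unitary_of_mem {X : M F} (h : X ∈ mats K) : X ∈ unitary (M F) := by
  obtain ⟨g, -, rfl⟩ := h
  exact g.2

theorem star_mem_mats {X : M F} (h : X ∈ mats K) : star X ∈ mats K := by
  obtain ⟨g, hg, rfl⟩ := h
  exact ⟨g⁻¹, K.inv_mem hg, rfl⟩

theorem mem_mats_of_SP (hK : frame F ≤ K) {X : M F} (hX : X ∈ unitary (M F))
    {σ : Equiv.Perm (Fin 5)} {s : Fin 5 → ℤˣ} (h : SP X σ s) : X ∈ mats K :=
  ⟨⟨X, hX⟩, hK ⟨σ, s, h⟩, rfl⟩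

theorem e_mem_mats (hK : frame F ≤ K) (i : Fin 5) : e i ∈ mats K :=
  mem_mats_of_SP hK (e_mem_unitary i) (SP_e i)

theorem neg_mem_mats (hK : frame F ≤ K) {X : M F} (h : X ∈ mats K) : -X ∈ mats K := by
  rw [← neg_one_mul]
  refine mul_mem (mem_mats_of_SP hK (σ := 1) (s := 1) ?_ fun i => by simp) h
  rw [Unitary.mem_iff]; simp

theorem T_mul_T_mem_mats (hK : frame F ≤ K) {i j k l : Fin 5} (h : i ≠ j) (h' : k ≠ l) :
    (2⁻¹ : F) • ((1 + e i * e j) * (1 + e k * e l)) ∈ mats K := by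
  refine mem_mats_of_SP hK ?_ (((SP_T h).mul (SP_T h')).smul _)
  have h2 := NeZero.ne (2 : F)
  rw [Unitary.mem_iff, star_smul_M, star_mul]
  simp only [smul_mul_assoc, mul_smul_comm]
  constructor
  · rw [mul_assoc, ← mul_assoc (star (1 + e i * e j)), T_star_mul h]
    simp only [smul_mul_assoc, mul_smul_comm, one_mul, T_star_mul h', smul_smul]
    rw [show (2⁻¹ * (2⁻¹ * (2 * 2)) : F) = 1 by field_simp, one_smul]
  · rw [mul_assoc, ← mul_assoc (1 + e k * e l), T_mul_star h']
    simp only [smul_mul_assoc, mul_smul_comm, one_mul, T_mul_star h, smul_smul]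
    rw [show (2⁻¹ * (2⁻¹ * (2 * 2)) : F) = 1 by field_simp, one_smul]

/-- Products of the frame generators. -/
theorem e_mul_e : (e 0 * e 1 : M F) = !![0, 1; -1, 0] ∧
    (e 2 * e 3 : M F) = dg (qm 0 0 0 (-1)) (qm 0 0 0 (-1)) ∧
    (e 3 * e 4 : M F) = dg (qm 0 (-1) 0 0) (qm 0 (-1) 0 0) ∧
    (e 4 * e 2 : M F) = dg (qm 0 0 (-1) 0) (qm 0 0 (-1) 0) ∧
    (e 1 * e 2 : M F) = dg (qm 0 (-1) 0 0) (qm 0 1 0 0) ∧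
    (e 1 * e 3 : M F) = dg (qm 0 0 (-1) 0) (qm 0 0 1 0) ∧
    (e 1 * e 4 : M F) = dg (qm 0 0 0 (-1)) (qm 0 0 0 1) := by
  refine ⟨?_, ?_, ?_, ?_, ?_, ?_, ?_⟩ <;>
    simp only [e_zero, e_one, e_two, e_three, e_four, dg, Matrix.mul_fin_two] <;>
    simp [qm_mul, qm_neg, qm_zero]

theorem dg_self_mem (hK : frame F ≤ K) :
    dg (qm 0 1 0 0) (qm 0 1 0 0) ∈ mats K ∧ dg (qm 0 0 1 0) (qm 0 0 1 0) ∈ mats K ∧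
      dg (qm 0 0 0 1) (qm 0 0 0 1) ∈ mats K := by
  obtain ⟨-, h1, h2, h3, -, -, -⟩ := e_mul_e (F := F)
  have key : ∀ (i j : Fin 5) (x : ℍ[F]), e i * e j = dg (star x) (star x) → dg x x ∈ mats K := by
    intro i j x h
    have := star_mem_mats (mul_mem (e_mem_mats hK i) (e_mem_mats hK j))
    rwa [h, star_dg, star_star] at this
  exact ⟨key 3 4 _ (by rw [h2, star_qm, neg_zero]), key 4 2 _ (by rw [h3, star_qm, neg_zero]),
    key 2 3 _ (by rw [h1, star_qm, neg_zero])⟩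

theorem e_one_conj_dg (x y : ℍ[F]) : e 1 * dg x y * e 1 = dg y x := by
  rw [e_one, dg, dg, Matrix.mul_fin_two, Matrix.mul_fin_two]; simp

theorem dg_add (x y x' y' : ℍ[F]) : dg x y + dg x' y' = dg (x + x') (y + y') := by
  simp [dg]

theorem dg_one_mem (hK : frame F ≤ K) : dg 1 (qm 0 1 0 0) ∈ mats K ∧
    dg 1 (qm 0 0 1 0) ∈ mats K ∧ dg 1 (qm 0 0 0 1) ∈ mats K := by
  obtain ⟨-, h23, h34, h42, h12, h13, h14⟩ := e_mul_e (F := F)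
  have h2 := NeZero.ne (2 : F)
  have key : ∀ {j k l : Fin 5} (x : ℍ[F]), 1 ≠ j → k ≠ l → e 1 * e j = dg (star x) x →
      e k * e l = dg (star x) (star x) → star x = -x → x * x = -1 → dg 1 x ∈ mats K := by
    intro j k l x hj hkl h h' hs hx
    have hT := T_mul_T_mem_mats hK hj hkl
    have : (2⁻¹ : F) • ((1 + dg (-x) x) * (1 + dg (-x) (-x))) = dg (-x) 1 := by
      rw [← dg_one, dg_add, dg_add, dg_mul, smul_dg]
      simp only [add_mul, mul_add, one_mul, mul_one, mul_neg, neg_mul, neg_neg, hx]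
      congr 1
      · rw [show (1 : ℍ[F]) + -x + -(x + 1) = (2 : F) • (-x) by module, inv_smul_smul₀ h2]
      · rw [show (1 : ℍ[F]) + x + -(x + -1) = (2 : F) • 1 by module, inv_smul_smul₀ h2]
    rw [h, h', hs, this] at hT
    have h' := star_mem_mats (mul_mem (mul_mem (e_mem_mats hK 1) hT) (e_mem_mats hK 1))
    rwa [e_one_conj_dg, star_dg, star_one, star_neg, hs, neg_neg] at h'
  refine ⟨key (j := 2) (k := 3) (l := 4) _ ?_ ?_ ?_ ?_ ?_ ?_,
    key (j := 3) (k := 4) (l := 2) _ ?_ ?_ ?_ ?_ ?_ ?_,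
    key (j := 4) (k := 2) (l := 3) _ ?_ ?_ ?_ ?_ ?_ ?_⟩ <;>
    first
    | decide
    | simp only [star_qm, qm_neg, neg_zero, h23, h34, h42, h12, h13, h14]
    | (rw [← qm_one]; simp [star_qm, qm_neg, qm_mul])

end Overgroups

section Generation

variable {F : Type} [Field F]

theorem add_star_eq {x : ℍ[F]} : x + star x = (2 * x.re) • 1 := by
  ext <;> simp; ring

/-- Two nilpotents pairing to `1` generate all norm one quaternions. -/
theorem forall_of_nilpotents {P : Submonoid ℍ[F]} {β γ : ℍ[F]} (hβ : β * β = 0) (hγ : γ * γ = 0)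
    (sβ : star β = -β) (sγ : star γ = -γ) (hβγ : β * γ + γ * β = 1)
    (Pβ : ∀ t : F, 1 + t • β ∈ P) (Pγ : ∀ t : F, 1 + t • γ ∈ P) {z : ℍ[F]}
    (hz : Quaternion.normSq z = 1) : z ∈ P := by
  have hf : γ * β = 1 - β * γ := by rw [← hβγ]; abel
  have b1 : β * γ * β = β := by rw [mul_assoc, hf, mul_sub, ← mul_assoc, hβ]; simp
  have g1 : γ * β * γ = γ := by rw [hf, sub_mul, mul_assoc, hγ]; simp
  have sand : ∀ w z : ℍ[F], w * star w = 0 → w * z * w = (2 * (z * w).re) • w := by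
    intro w z hw
    have := congrArg (w * ·) (add_star_eq (x := z * w))
    simp only [mul_add, star_mul, mul_smul_comm, mul_one] at this
    rw [← this, ← mul_assoc w (star w), hw, zero_mul, add_zero, mul_assoc]
  have βl : ∀ x, β * (β * x) = 0 := fun x => by rw [← mul_assoc, hβ, zero_mul]
  have γl : ∀ x, γ * (γ * x) = 0 := fun x => by rw [← mul_assoc, hγ, zero_mul]
  have βγβ : ∀ x, β * (γ * (β * x)) = β * x := fun x => by rw [← mul_assoc, ← mul_assoc, b1]
  have γβγ : ∀ x, γ * (β * (γ * x)) = γ * x := fun x => by rw [← mul_assoc, ← mul_assoc, g1]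
  rw [mul_assoc] at b1 g1
  have exp : ∃ A B C D : F, z = A • (β * γ) + B • β + C • γ + D • (γ * β) := by
    refine ⟨2 * (z * (β * γ)).re, 2 * (z * γ).re, 2 * (z * β).re, 2 * (z * (γ * β)).re, ?_⟩
    calc z = (β * γ + γ * β) * z * (β * γ + γ * β) := by rw [hβγ]; simp
      _ = (β * γ) * z * (β * γ) + β * (γ * z * γ) * β + γ * (β * z * β) * γ +
          (γ * β) * z * (γ * β) := by simp only [add_mul, mul_add, mul_assoc]; abel
      _ = _ := by
        rw [sand (β * γ) z, sand γ z, sand β z, sand (γ * β) z]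
        · simp only [mul_smul_comm, smul_mul_assoc, mul_assoc, b1, g1]
        all_goals simp [sβ, sγ, mul_assoc, hβ, hγ]
        all_goals simp [βl, γl]
  have hne : (1 : ℍ[F]) ≠ 0 := one_ne_zero
  have main : ∀ A B C D : F, C ≠ 0 → A * D - B * C = 1 →
      A • (β * γ) + B • β + C • γ + D • (γ * β) ∈ P := by
    intro A B C D hC hdet
    have : A • (β * γ) + B • β + C • γ + D • (γ * β) =
        (1 + ((A - 1) / C) • β) * (1 + C • γ) * (1 + ((D - 1) / C) • β) := by
      obtain ⟨a, rfl⟩ : ∃ a, A = 1 + a * C := ⟨(A - 1) / C, by field_simp; ring⟩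
      obtain ⟨d, rfl⟩ : ∃ d, D = 1 + d * C := ⟨(D - 1) / C, by field_simp; ring⟩
      obtain rfl : B = a + d + a * d * C := by
        apply mul_right_cancel₀ hC; linear_combination -hdet
      rw [show (1 + a * C - 1) / C = a by field_simp; ring,
        show (1 + d * C - 1) / C = d by field_simp; ring]
      simp only [add_mul, mul_add, one_mul, mul_one, smul_mul_assoc, mul_smul_comm, smul_smul,
        mul_assoc, b1, hβ, smul_zero, smul_add, add_zero]
      linear_combination (norm := module) hβγ
    rw [this]
    exact mul_mem (mul_mem (Pβ _) (Pγ _)) (Pβ _)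
  obtain ⟨A, B, C, D, rfl⟩ := exp
  have hdet : A * D - B * C = 1 := by
    have := mul_star_quat (A • (β * γ) + B • β + C • γ + D • (γ * β))
    rw [hz, one_smul, ← hβγ] at this
    simp only [star_add, star_mul, Quaternion.star_smul, sβ, sγ, add_mul, mul_add, smul_mul_assoc,
      mul_smul_comm, mul_neg, neg_mul, neg_neg, mul_assoc, smul_smul, smul_neg, b1, g1, βγβ, γβγ,
      hβ, hγ, βl, γl, smul_zero, mul_zero, neg_zero] at this
    have h2 : (A * D - B * C - 1) • (1 : ℍ[F]) = 0 := by
      rw [← hβγ]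
      linear_combination (norm := module) this
    rcases smul_eq_zero.1 h2 with h | h
    · exact sub_eq_zero.1 h
    · exact absurd h hne
  by_cases hC : C = 0
  · have hA : A ≠ 0 := by rintro rfl; simp [hC] at hdet
    have h := main A B A (B + D) hA (by rw [hC] at hdet; linear_combination hdet)
    have h' := mul_mem (Pγ (-1)) h
    convert h' using 1
    rw [hC]
    simp only [add_mul, mul_add, one_mul, smul_mul_assoc, mul_smul_comm, smul_smul, g1, γl, hγ,
      smul_zero]
    module
  · exact main A B C D hC hdet

end Generation

section Unipotent

variable {F : Type} [Field F]

/-- The scalar embedding `x ↦ diag(x, x)` of the quaternions. -/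
def diagHom : ℍ[F] →* M F where
  toFun x := dg x x
  map_one' := dg_one
  map_mul' x y := (dg_mul x x y y).symm

/-- The embedding `y ↦ diag(1, y)` of the quaternions. -/
def cornerHom : ℍ[F] →* M F where
  toFun x := dg 1 x
  map_one' := dg_one
  map_mul' x y := by rw [dg_mul, mul_one]

theorem one_add_pow_of_sq_zero {R : Type*} [Ring R] {β : R} (h : β * β = 0) (n : ℕ) :
    (1 + β) ^ n = 1 + n • β := by
  induction n with
  | zero => simp
  | succ n ih =>
    rw [pow_succ, ih, add_mul, mul_add, smul_mul_assoc, mul_add, h, succ_nsmul]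
    simp only [mul_one, one_mul, smul_zero, add_zero]; abel

theorem one_add_smul_mem (hp : ∀ t : F, ∃ n : ℕ, (n : F) = t) {P : Submonoid ℍ[F]} {β : ℍ[F]}
    (h : β * β = 0) (hβ : 1 + β ∈ P) (t : F) : 1 + t • β ∈ P := by
  obtain ⟨n, rfl⟩ := hp t
  rw [Nat.cast_smul_eq_nsmul, ← one_add_pow_of_sq_zero h]
  exact pow_mem hβ n

theorem star_eq_neg_of_re {β : ℍ[F]} (h : β.re = 0) : star β = -β := by
  ext <;> simp [h]

variable [NeZero (2 : F)] {K : Subgroup (unitary (M F))}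

/-- A nonzero nilpotent quaternion is not orthogonal to one of the three imaginary units. -/
theorem exists_unit_of_nilpotent (hK : frame F ≤ K) {β : ℍ[F]} (h0 : β ≠ 0) (hre : β.re = 0)
    (hβ : β * β = 0) : ∃ (u : ℍ[F]) (b : F), b ≠ 0 ∧ u * u = -1 ∧ star u = -u ∧
      β + u * β * star u = (2 * b) • u ∧ dg u u ∈ mats K ∧ dg 1 u ∈ mats K := by
  obtain ⟨b, b', b'', rfl⟩ : ∃ b b' b'', β = qm 0 b b' b'' :=
    ⟨β.imI, β.imJ, β.imK, by ext <;> simp [hre]⟩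
  obtain ⟨s1, s2, s3⟩ := dg_self_mem hK
  obtain ⟨c1, c2, c3⟩ := dg_one_mem hK
  have : b ≠ 0 ∨ b' ≠ 0 ∨ b'' ≠ 0 := by
    by_contra! h
    exact h0 (by rw [h.1, h.2.1, h.2.2, qm_zero])
  rcases this with h | h | h
  · refine ⟨_, b, h, ?_, ?_, ?_, s1, c1⟩
    · rw [← qm_one]; simp [qm_mul, qm_neg]
    · simp [star_qm, qm_neg]
    · simp only [star_qm, qm_mul, qm_add, smul_qm]; congr 1 <;> ring
  · refine ⟨_, b', h, ?_, ?_, ?_, s2, c2⟩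
    · rw [← qm_one]; simp [qm_mul, qm_neg]
    · simp [star_qm, qm_neg]
    · simp only [star_qm, qm_mul, qm_add, smul_qm]; congr 1 <;> ring
  · refine ⟨_, b'', h, ?_, ?_, ?_, s3, c3⟩
    · rw [← qm_one]; simp [qm_mul, qm_neg]
    · simp [star_qm, qm_neg]
    · simp only [star_qm, qm_mul, qm_add, smul_qm]; congr 1 <;> ring

theorem conj_pair {β u : ℍ[F]} {b : F} (hre : β.re = 0) (hβ : β * β = 0)
    (hu : u * u = -1) (su : star u = -u) (h : β + u * β * star u = (2 * b) • u) :
    (u * β * star u) * (u * β * star u) = 0 ∧ star (u * β * star u) = -(u * β * star u) ∧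
      β * (u * β * star u) + (u * β * star u) * β = (-(4 * b ^ 2) : F) • 1 := by
  have uu : star u * u = 1 := by rw [su, neg_mul, hu, neg_neg]
  have h1 : (u * β * star u) * (u * β * star u) = 0 := by
    calc _ = u * β * (star u * u) * β * star u := by simp only [mul_assoc]
      _ = u * (β * β) * star u := by rw [uu, mul_one, mul_assoc u β β]
      _ = 0 := by rw [hβ]; simp
  refine ⟨h1, ?_, ?_⟩
  · rw [star_mul, star_mul, star_star, star_eq_neg_of_re hre]
    simp [mul_assoc]
  · have := congrArg (fun x => x * x) h
    simp only [mul_add, add_mul, hβ, h1, smul_mul_assoc, mul_smul_comm, hu] at this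
    linear_combination (norm := module) this

theorem eq_top_of_corner_unipotent [Finite F] (hK : frame F ≤ K)
    (hp : ∀ t : F, ∃ n : ℕ, (n : F) = t)
    {β : ℍ[F]} (h0 : β ≠ 0) (hre : β.re = 0) (hβ : β * β = 0)
    (h : dg 1 (1 + β) ∈ mats K) : K = ⊤ := by
  obtain ⟨u, b, hb, hu, su, hub, mu, -⟩ := exists_unit_of_nilpotent hK h0 hre hβ
  obtain ⟨h1, h2, h3⟩ := conj_pair hre hβ hu su hub
  have h2' := NeZero.ne (2 : F)
  have hc : (-(4 * b ^ 2) : F) ≠ 0 := by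
    rw [neg_ne_zero, show (4 : F) = 2 * 2 by norm_num]; positivity
  set P : Submonoid ℍ[F] := (mats K).comap cornerHom with hP
  have Pβ : ∀ t : F, 1 + t • β ∈ P := one_add_smul_mem hp hβ h
  have uu : u * star u = 1 := by rw [su, mul_neg, hu, neg_neg]
  have Pβ' : ∀ t : F, 1 + t • (u * β * star u) ∈ P := by
    intro t
    have := mul_mem (mul_mem mu (Pβ t)) (star_mem_mats mu)
    change dg u u * dg 1 (1 + t • β) * star (dg u u) ∈ mats K at this
    change dg 1 (1 + t • (u * β * star u)) ∈ mats K
    rw [star_dg, dg_mul, dg_mul, mul_one, uu, mul_add, add_mul, mul_one, uu] at this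
    simpa only [mul_smul_comm, smul_mul_assoc] using this
  have main : ∀ z : ℍ[F], Quaternion.normSq z = 1 → dg 1 z ∈ mats K := by
    intro z hz
    refine forall_of_nilpotents (P := P) (β := β)
      (γ := (-(4 * b ^ 2) : F)⁻¹ • (u * β * star u)) hβ ?_ (star_eq_neg_of_re hre) ?_ ?_ Pβ ?_ hz
    · rw [smul_mul_assoc, mul_smul_comm, h1]; simp
    · rw [Quaternion.star_smul, h2, smul_neg]
    · rw [mul_smul_comm, smul_mul_assoc, ← smul_add, h3, inv_smul_smul₀ hc]
    · intro t; rw [smul_smul]; exact Pβ' _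
  apply eq_top_of_dg_le hK
  intro g x y hg
  have hx := normSq_of_dg_mem (hg ▸ g.2)
  rw [← coe_mem_mats, hg]
  have e1 := e_mem_mats hK 1
  have := mul_mem (mul_mem (mul_mem e1 (main x hx.1)) e1) (main y hx.2)
  rwa [e_one_conj_dg, dg_mul, mul_one, one_mul] at this

end Unipotent

section Unipotent

theorem conj_of_nilpotents {F R : Type*} [Field F] [NeZero (2 : F)] [Ring R] [Algebra F R]
    {B B' : R} (h : B * B = 0) (h' : B' * B' = 0) (hB : B * B' + B' * B = (-4 : F) • 1) :
    (1 - (4⁻¹ : F) • B) * ((1 - (2⁻¹ : F) • B') * ((2⁻¹ : F) • (B + B')) *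
      (1 + (2⁻¹ : F) • B')) * (1 + (4⁻¹ : F) • B) = (4⁻¹ : F) • B + B' := by
  have h2 := NeZero.ne (2 : F)
  have h4 : (4⁻¹ : F) = 2⁻¹ * 2⁻¹ := by rw [← mul_inv]; norm_num
  have e1 : B' * B = (-4 : F) • 1 - B * B' := by rw [← hB]; abel
  have e2 : B * B' * B = (-4 : F) • B := by
    rw [mul_assoc, e1, mul_sub, ← mul_assoc, h]; simp
  have e3 : B' * B * B' = (-4 : F) • B' := by
    rw [e1, sub_mul, mul_assoc, h']; simp
  rw [mul_assoc] at e2 e3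
  have inner : (1 - (2⁻¹ : F) • B') * ((2⁻¹ : F) • (B + B')) * (1 + (2⁻¹ : F) • B') =
      (2⁻¹ : F) • B + B' + (4⁻¹ : F) • (B * B' - B' * B) := by
    simp only [sub_mul, mul_add, add_mul, mul_sub, one_mul, mul_one, smul_mul_assoc,
      mul_smul_comm, smul_add, smul_sub, mul_assoc, h', e3, smul_zero, add_zero, smul_smul, h4,
      zero_mul]
    match_scalars <;> field_simp <;> ring
  rw [inner]
  simp only [sub_mul, mul_add, mul_sub, add_mul, one_mul, mul_one, smul_mul_assoc, mul_smul_comm,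
    smul_add, smul_sub, mul_assoc, h, e2, smul_zero, add_zero, smul_smul, h4]
  have e4 : B * (B * B') = 0 := by rw [← mul_assoc, h, zero_mul]
  have e5 : B' * (B * B) = 0 := by rw [h, mul_zero]
  simp only [e4, e5, mul_zero, zero_mul, smul_zero, mul_smul_comm, smul_smul, h]
  match_scalars <;> field_simp <;> ring

variable {F : Type} [Field F] [NeZero (2 : F)] {K : Subgroup (unitary (M F))}

theorem eq_top_of_diag_unipotent [Finite F] (hK : frame F ≤ K)
    (hp : ∀ t : F, ∃ n : ℕ, (n : F) = t) (h3 : (3 : F) ≠ 0)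
    {β : ℍ[F]} (h0 : β ≠ 0) (hre : β.re = 0) (hβ : β * β = 0)
    (h : dg (1 + β) (1 + β) ∈ mats K) : K = ⊤ := by
  obtain ⟨u, b, hb, hu, su, hub, mu, mu'⟩ := exists_unit_of_nilpotent hK h0 hre hβ
  obtain ⟨h1, h2, hc⟩ := conj_pair hre hβ hu su hub
  have h2' := NeZero.ne (2 : F)
  have h4' : (4 : F) ≠ 0 := by rw [show (4 : F) = 2 * 2 by norm_num]; positivity
  have sβ := star_eq_neg_of_re hre
  have uu : u * star u = 1 := by rw [su, mul_neg, hu, neg_neg]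
  set β' := u * β * star u with hβ'
  set P : Submonoid ℍ[F] := (mats K).comap diagHom with hP
  have Pβ : ∀ t : F, 1 + t • β ∈ P := one_add_smul_mem hp hβ h
  have Pβ' : ∀ t : F, 1 + t • β' ∈ P := by
    have h' : 1 + β' ∈ P := by
      have := mul_mem (mul_mem mu h) (star_mem_mats mu)
      rw [star_dg, dg_mul, dg_mul, mul_add, add_mul, mul_one, uu] at this
      exact this
    exact one_add_smul_mem hp h1 h'
  set B := b⁻¹ • β with hB
  set B' := b⁻¹ • β' with hB'
  have BB : B * B = 0 := by rw [hB, smul_mul_assoc, mul_smul_comm, hβ]; simp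
  have BB' : B' * B' = 0 := by rw [hB', smul_mul_assoc, mul_smul_comm, h1]; simp
  have Bc : B * B' + B' * B = (-4 : F) • 1 := by
    simp only [hB, hB', smul_mul_assoc, mul_smul_comm]
    rw [← smul_add, ← smul_add, hc, smul_smul, smul_smul]
    congr 1; field_simp
  have Bu : (2⁻¹ : F) • (B + B') = u := by
    rw [hB, hB', ← smul_add, hub, smul_smul, smul_smul]
    convert one_smul F u; field_simp
  have key := conj_of_nilpotents BB BB' Bc
  rw [Bu] at key
  set u' := (4⁻¹ : F) • B + B' with hu'
  have su' : star u' = -u' := by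
    rw [hu', star_add, Quaternion.star_smul, hB, hB', Quaternion.star_smul, Quaternion.star_smul,
      sβ, h2]
    module
  have inv : ∀ {B : ℍ[F]} (s : F), B * B = 0 → (1 - s • B) * (1 + s • B) = 1 := by
    intro B s h
    simp [sub_mul, mul_add, h]
  have inv1 : (1 - (4⁻¹ : F) • B) * (1 + (4⁻¹ : F) • B) = 1 := inv _ BB
  have inv2 : (1 - (2⁻¹ : F) • B') * (1 + (2⁻¹ : F) • B') = 1 := inv _ BB'
  have mB : ∀ t : F, dg (1 + t • B) (1 + t • B) ∈ mats K := fun t => by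
    rw [hB, smul_smul]; exact Pβ _
  have mB' : ∀ t : F, dg (1 + t • B') (1 + t • B') ∈ mats K := fun t => by
    rw [hB', smul_smul]; exact Pβ' _
  have m1 : dg 1 u' ∈ mats K := by
    have := mul_mem (mul_mem (mB (-4⁻¹)) (mul_mem (mul_mem (mB' (-2⁻¹)) mu') (mB' 2⁻¹))) (mB 4⁻¹)
    rw [dg_mul, dg_mul, dg_mul, dg_mul, mul_one] at this
    simp only [neg_smul, ← sub_eq_add_neg] at this
    rwa [key, inv2, mul_one, inv1] at this
  have m2 := mul_mem m1 mu'
  rw [dg_mul, mul_one] at m2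
  have conj : u' * u * β * star (u' * u) = (4⁻¹ : F) • β := by
    have b1 : B * B' * B = (-4 : F) • B := by
      have e1 : B' * B = (-4 : F) • 1 - B * B' := by rw [← Bc]; abel
      rw [mul_assoc, e1, mul_sub, ← mul_assoc, BB]; simp
    have bB : β' = b • B' := by rw [hB', smul_inv_smul₀ hb]
    have bB2 : β = b • B := by rw [hB, smul_inv_smul₀ hb]
    calc u' * u * β * star (u' * u) = u' * (u * β * star u) * star u' := by
          rw [star_mul]; simp only [mul_assoc]
      _ = u' * β' * star u' := by rw [← hβ']
      _ = b • (-(4⁻¹ * 4⁻¹ : F) • (B * B' * B)) := by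
          rw [su', bB, hu']
          simp only [add_mul, mul_add, smul_mul_assoc, mul_smul_comm, BB', mul_neg, neg_add,
            mul_assoc, smul_zero, mul_zero, zero_add, add_zero, neg_zero]
          module
      _ = (4⁻¹ : F) • β := by
          rw [b1, bB2]
          match_scalars; field_simp
  have mst := star_mem_mats m2
  have final := mul_mem (mul_mem (mul_mem m2 (Pβ 1 : dg (1 + (1 : F) • β) (1 + (1 : F) • β) ∈ _))
    mst) (Pβ (-1) : dg (1 + (-1 : F) • β) (1 + (-1 : F) • β) ∈ _)
  have un := (normSq_of_dg_mem (unitary_of_mem m2)).2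
  have c1 : (1 + β) * (1 + (-1 : F) • β) = 1 := by
    simp only [add_mul, mul_add, mul_smul_comm, hβ, one_mul, mul_one, smul_zero]; module
  have c2 : (1 + (4⁻¹ : F) • β) * (1 + (-1 : F) • β) = 1 + (4⁻¹ - 1 : F) • β := by
    simp only [add_mul, mul_add, mul_smul_comm, smul_mul_assoc, hβ, one_mul, mul_one, smul_zero]
    module
  have c3 : u' * u * (1 + β) * star (u' * u) = 1 + (4⁻¹ : F) • β := by
    rw [mul_add, mul_one, add_mul, mul_star_quat, un, one_smul, conj]
  rw [star_dg, dg_mul, dg_mul, dg_mul, star_one, one_mul, mul_one, one_smul, c1, c3, c2] at final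
  refine eq_top_of_corner_unipotent hK hp (β := (4⁻¹ - 1 : F) • β) ?_ ?_ ?_ final
  · refine smul_ne_zero ?_ h0
    intro h
    apply h3
    field_simp at h
    linear_combination -h
  · simp [hre]
  · rw [smul_mul_assoc, mul_smul_comm, hβ]; simp

end Unipotent

section Counting

open scoped Classical in
theorem sum_sub_card_orbit {G α : Type*} [Group G] [MulAction G α] [Finite G] [Fintype α]
    (hfix : ∀ g : G, g ≠ 1 → Nat.card (MulAction.fixedBy α g) = 2) :
    ∑ ω : MulAction.orbitRel.Quotient G α, (Nat.card G - Nat.card ω.orbit : ℤ) =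
      2 * (Nat.card G - 1) := by
  have := Fintype.ofFinite G
  have hb := MulAction.sum_card_fixedBy_eq_card_orbits_mul_card_group G α
  have h1 : ∑ g : G, (Fintype.card (MulAction.fixedBy α g) : ℤ) =
      Fintype.card α + 2 * (Nat.card G - 1) := by
    rw [← Finset.add_sum_erase _ _ (Finset.mem_univ 1)]
    congr 1
    · rw [← Nat.card_eq_fintype_card, ← Nat.card_eq_fintype_card]
      simp [MulAction.fixedBy]
    · rw [Finset.sum_congr rfl (g := fun _ => 2)]
      · simp [Finset.card_erase_of_mem, Nat.cast_sub Fintype.card_pos]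
        ring
      · intro g hg
        rw [← Nat.card_eq_fintype_card, hfix g (Finset.ne_of_mem_erase hg)]
        rfl
  have h2 : (Fintype.card α : ℤ) =
      ∑ ω : MulAction.orbitRel.Quotient G α, (Nat.card ω.orbit : ℤ) := by
    rw [← Nat.card_eq_fintype_card, Nat.card_congr (MulAction.selfEquivSigmaOrbits' G α),
      Nat.card_sigma]
    push_cast
    rfl
  have h3 : ∑ g : G, (Fintype.card (MulAction.fixedBy α g) : ℤ) =
      Fintype.card (MulAction.orbitRel.Quotient G α) * Nat.card G := by
    rw [Nat.card_eq_fintype_card]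
    exact_mod_cast hb
  rw [Finset.sum_sub_distrib, ← h2, Finset.sum_const, Finset.card_univ, nsmul_eq_mul]
  linarith

/-- The arithmetic behind the classification of finite rotation groups. -/
theorem eq_six_of_orbit_sum {n s₀ s₁ s₂ : ℕ} (h₀ : 3 ≤ s₀) (d₀ : 4 * s₀ ∣ n) (d₁ : s₁ ∣ n)
    (d₂ : s₂ ∣ n) (n₁ : s₁ ≠ n) (n₂ : s₂ ≠ n) (hn : 0 < n) (h : s₀ + s₁ + s₂ = n + 2) :
    s₀ = 6 := by
  have key : ∀ {s₁ s₂ : ℕ}, s₁ ∣ n → s₂ ∣ n → s₁ ≠ n → s₂ ≠ n → s₀ + s₁ + s₂ = n + 2 →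
      s₂ ≤ s₁ → s₀ = 6 := by
    intro s₁ s₂ d₁ d₂ n₁ n₂ h hle
    obtain ⟨k, hk⟩ := d₀
    obtain ⟨k₁, hk₁⟩ := d₁
    obtain ⟨k₂, hk₂⟩ := d₂
    have hkp : 1 ≤ k := Nat.pos_of_ne_zero (by rintro rfl; simp at hk; omega)
    have hn4 : 4 * s₀ ≤ n := by nlinarith
    have hk₁' : k₁ = 2 := by
      have a : k₁ ≠ 1 := by rintro rfl; omega
      have b : k₁ ≠ 0 := by rintro rfl; omega
      by_contra hne
      have : 3 ≤ k₁ := by omega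
      nlinarith
    subst hk₁'
    have hk₂' : k₂ = 3 := by
      have a : k₂ ≠ 1 := by rintro rfl; omega
      have b : k₂ ≠ 0 := by rintro rfl; omega
      have c : k₂ ≠ 2 := by rintro rfl; omega
      by_contra hne
      have : 4 ≤ k₂ := by omega
      nlinarith
    subst hk₂'
    have : k = 1 := by
      by_contra hne
      have : 2 ≤ k := by omega
      nlinarith
    subst this
    omega
  rcases le_total s₁ s₂ with hle | hle
  · exact key d₂ d₁ n₂ n₁ (by omega) hle
  · exact key d₁ d₂ n₁ n₂ h hle

theorem card_orbit_mul_card_stabilizer {G α : Type*} [Group G] [MulAction G α] (x : α) :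
    Nat.card (MulAction.orbit G x) * Nat.card (MulAction.stabilizer G x) = Nat.card G := by
  rw [Nat.card_congr (MulAction.orbitEquivQuotientStabilizer G x), mul_comm]
  exact Subgroup.card_mul_index _

open scoped Classical in
theorem card_orbit_eq_six {G α : Type*} [Group G] [MulAction G α] [Finite G] [Finite α]
    (hfix : ∀ g : G, g ≠ 1 → Nat.card (MulAction.fixedBy α g) = 2) {x : α}
    (hx : 3 ≤ Nat.card (MulAction.orbit G x)) (hs : 4 ∣ Nat.card (MulAction.stabilizer G x)) :
    Nat.card (MulAction.orbit G x) = 6 := by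
  have := Fintype.ofFinite α
  have hsum := sum_sub_card_orbit hfix
  set n := Nat.card G with hn
  have hn0 : 0 < n := Nat.card_pos
  have hdvd : ∀ ω : MulAction.orbitRel.Quotient G α, Nat.card ω.orbit ∣ n := by
    intro ω
    induction ω using Quotient.inductionOn' with
    | h y =>
      exact ⟨_, (card_orbit_mul_card_stabilizer (G := G) y).symm⟩
  set ω₀ : MulAction.orbitRel.Quotient G α := Quotient.mk'' x with hω₀
  have hω : Nat.card ω₀.orbit = Nat.card (MulAction.orbit G x) := rfl
  obtain ⟨k, hk⟩ := hs
  have hn4 := card_orbit_mul_card_stabilizer (G := G) x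
  rw [← hω] at hx hn4 ⊢
  rw [hk] at hn4
  set s₀ := Nat.card ω₀.orbit with hs₀
  have hd4 : 4 * s₀ ∣ n := ⟨k, by rw [hn, ← hn4]; ring⟩
  have hle4 := Nat.le_of_dvd hn0 hd4
  rw [← Finset.add_sum_erase _ _ (Finset.mem_univ ω₀), ← Finset.sum_filter_ne_zero] at hsum
  set T := (Finset.univ.erase ω₀).filter fun ω => (n - Nat.card ω.orbit : ℤ) ≠ 0 with hT
  have hne : ∀ ω ∈ T, Nat.card ω.orbit ≠ n := by
    intro ω hω h
    exact (Finset.mem_filter.1 hω).2 (by rw [h, sub_self])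
  have hlow : ∀ ω ∈ T, (n : ℤ) ≤ 2 * (n - Nat.card ω.orbit) := by
    intro ω hω
    obtain ⟨m, hm⟩ := hdvd ω
    have h1 := hne ω hω
    have : 2 * Nat.card ω.orbit ≤ n := by
      have a : m ≠ 0 := by rintro rfl; omega
      have b : m ≠ 1 := by rintro rfl; omega
      have c : 2 ≤ m := by omega
      rw [hm]; nlinarith
    omega
  have hup : ∀ ω ∈ T, (n - Nat.card ω.orbit : ℤ) ≤ n - 1 := by
    intro ω hω
    have := Nat.pos_of_dvd_of_pos (hdvd ω) hn0
    omega
  have h1 := Finset.sum_le_card_nsmul T _ _ hup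
  have h2 := Finset.card_nsmul_le_sum T _ _ hlow
  rw [← Finset.mul_sum] at h2
  rw [nsmul_eq_mul] at h1 h2
  have hT2 : T.card = 2 := by
    have a : T.card < 3 := by
      by_contra hcon
      have : (3 : ℤ) ≤ T.card := by exact_mod_cast not_lt.1 hcon
      have : (3 : ℤ) * n ≤ T.card * n := by gcongr
      omega
    have b : 1 < T.card := by
      by_contra hcon
      have : (T.card : ℤ) ≤ 1 := by exact_mod_cast not_lt.1 hcon
      have : (T.card : ℤ) * (n - 1) ≤ 1 * (n - 1) := by
        apply mul_le_mul_of_nonneg_right this; omega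
      omega
    omega
  obtain ⟨ω₁, ω₂, h12, hT'⟩ := Finset.card_eq_two.1 hT2
  rw [hT', Finset.sum_pair h12] at hsum
  refine eq_six_of_orbit_sum hx hd4 (hdvd ω₁) (hdvd ω₂) (hne ω₁ ?_) (hne ω₂ ?_) hn0 (by omega) <;>
    simp [hT']

end Counting

section LineStabilizer

variable {F : Type} [Field F]

/-- The matrix `x (c + d J)` where `J = e 0 * e 1`. -/
def fm (x : ℍ[F]) (c d : F) : M F := !![c • x, d • x; -(d • x), c • x]

theorem fm_mul (x x' : ℍ[F]) (c d c' d' : F) :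
    fm x c d * fm x' c' d' = fm (x * x') (c * c' - d * d') (c * d' + d * c') := by
  simp only [fm, Matrix.mul_fin_two, smul_mul_assoc, mul_smul_comm, smul_smul, mul_neg, neg_mul]
  congr 1
  funext i j
  fin_cases i <;> fin_cases j <;> simp <;> module

theorem star_fm (x : ℍ[F]) (c d : F) : star (fm x c d) = fm (star x) c (-d) := by
  ext i j <;> fin_cases i <;> fin_cases j <;> simp [fm, Matrix.star_apply]

theorem fm_smul (t : F) (x : ℍ[F]) (c d : F) : fm (t • x) c d = fm x (t * c) (t * d) := by
  simp only [fm, smul_smul, mul_comm]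

theorem fm_one_zero (x : ℍ[F]) : fm x 1 0 = dg x x := by simp [fm, dg]

theorem fm_one : fm (1 : ℍ[F]) 1 0 = 1 := by rw [fm_one_zero, dg_one]

theorem E_vec_eq_fm {z : ℍ[F]} (h : z.re = 0) : E (vec 0 z) = fm z 0 1 := by
  rw [E_vec, fm, star_eq_neg_of_re h]; simp

theorem fm_norm {x : ℍ[F]} {c d : F} (h : fm x c d ∈ unitary (M F)) :
    (c ^ 2 + d ^ 2) * Quaternion.normSq x = 1 := by
  have := Unitary.mul_star_self_of_mem h
  rw [star_fm, fm_mul, mul_star_quat, fm_smul, ← fm_one] at this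
  have := congrArg QuaternionAlgebra.re (congr_fun (congr_fun this 0) 0)
  simp [fm] at this
  linear_combination this

variable [NeZero (2 : F)]

theorem ρ_fm {g : unitary (M F)} {x : ℍ[F]} {c d : F} (hg : g.1 = fm x c d) {z : ℍ[F]}
    (hz : z.re = 0) : ρ g (vec 0 z) = vec 0 ((c ^ 2 + d ^ 2) • (x * z * star x)) := by
  have hre : ((c ^ 2 + d ^ 2) • (x * z * star x)).re = 0 := by
    simp [hz]; right; ring
  apply E_injective
  rw [E_ρ, hg, E_vec_eq_fm hz, E_vec_eq_fm hre, star_fm, fm_mul, fm_mul, fm_smul]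
  congr 1 <;> ring

/-- The elements of `K` acting on the first two basis vectors through a rotation. -/
def lineGroup (K : Subgroup (unitary (M F))) : Subgroup (unitary (M F)) where
  carrier := {g | g ∈ K ∧ ∃ x c d, g.1 = fm x c d}
  one_mem' := ⟨one_mem _, 1, 1, 0, fm_one.symm⟩
  mul_mem' := by
    rintro g h ⟨hg, x, c, d, e⟩ ⟨hh, x', c', d', e'⟩
    refine ⟨mul_mem hg hh, _, _, _, Eq.trans ?_ (fm_mul x x' c d c' d')⟩
    rw [← e, ← e']; rfl
  inv_mem' := by
    rintro g ⟨hg, x, c, d, e⟩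
    exact ⟨inv_mem hg, _, _, _, by rw [← star_fm, ← e]; rfl⟩

/-- Vectors of length `1` or `2` orthogonal to the first two basis vectors. -/
def Poles (F : Type) [Field F] : Type :=
  {v : Fin 5 → F // (v 0 = 0 ∧ v 1 = 0) ∧ (v ⬝ᵥ v = 1 ∨ v ⬝ᵥ v = 2)}

theorem Poles.eq_iff {v w : Poles F} : v = w ↔ v.1 = w.1 := Subtype.ext_iff

instance [Finite F] : Finite (Poles F) := Subtype.finite

theorem eq_vec {v : Fin 5 → F} (h : v 0 = 0 ∧ v 1 = 0) :
    v = vec 0 (qm 0 (v 2) (v 3) (v 4)) := by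
  funext i; fin_cases i <;> simp [vec, h.1, h.2]

variable {K : Subgroup (unitary (M F))}

theorem ρ_lineGroup {g : unitary (M F)} (hg : g ∈ lineGroup K) {v : Fin 5 → F}
    (h : v 0 = 0 ∧ v 1 = 0) : ρ g v 0 = 0 ∧ ρ g v 1 = 0 := by
  obtain ⟨-, x, c, d, e⟩ := hg
  rw [eq_vec h, ρ_fm e (by simp)]
  constructor
  · simp [vec]
  · simp [vec]; right; ring

instance : MulAction (lineGroup K) (Poles F) where
  smul g v := ⟨ρ g.1 v.1, ρ_lineGroup g.2 v.2.1, by rw [dot_ρ]; exact v.2.2⟩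
  one_smul v := Subtype.ext (by change ρ 1 v.1 = v.1; rw [map_one]; rfl)
  mul_smul g h v := Subtype.ext (by
    change ρ (g.1 * h.1) v.1 = ρ g.1 (ρ h.1 v.1); rw [map_mul]; rfl)

theorem smul_poles_val (g : lineGroup K) (v : Poles F) : (g • v).1 = ρ g.1 v.1 := rfl

theorem smul_poles_eq_iff {g : lineGroup K} {x : ℍ[F]} {c d : F} (hg : g.1.1 = fm x c d)
    (v : Poles F) : g • v = v ↔
      x * qm 0 (v.1 2) (v.1 3) (v.1 4) = qm 0 (v.1 2) (v.1 3) (v.1 4) * x := by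
  have hn := fm_norm (hg ▸ g.1.2)
  have hv := eq_vec v.2.1
  set z := qm 0 (v.1 2) (v.1 3) (v.1 4) with hz
  rw [Poles.eq_iff, smul_poles_val, hv, ρ_fm hg (by simp [hz])]
  constructor
  · intro h
    have h' : (c ^ 2 + d ^ 2) • (x * z * star x) = z := by
      ext
      · exact congr_fun h 1
      · exact congr_fun h 2
      · exact congr_fun h 3
      · exact congr_fun h 4
    conv_rhs => rw [← h']
    rw [smul_mul_assoc, mul_assoc, star_mul_quat, mul_smul_comm, smul_smul, hn, one_smul, mul_one]
  · intro h
    rw [h, mul_assoc, mul_star_quat, mul_smul_comm, smul_smul, hn, one_smul, mul_one]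

theorem commute_pure_iff {x : ℍ[F]} (hx : x.imI ≠ 0 ∨ x.imJ ≠ 0 ∨ x.imK ≠ 0) {a b c : F} :
    x * qm 0 a b c = qm 0 a b c * x ↔
      ∃ t : F, a = t * x.imI ∧ b = t * x.imJ ∧ c = t * x.imK := by
  constructor
  · intro h
    have h2 := NeZero.ne (2 : F)
    have h1 := congrArg QuaternionAlgebra.imI h
    have h3 := congrArg QuaternionAlgebra.imJ h
    have h4 := congrArg QuaternionAlgebra.imK h
    simp at h1 h3 h4
    replace h1 : x.imJ * c - x.imK * b = 0 := by
      apply mul_left_cancel₀ h2; linear_combination h1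
    replace h3 : x.imK * a - x.imI * c = 0 := by
      apply mul_left_cancel₀ h2; linear_combination h3
    replace h4 : x.imI * b - x.imJ * a = 0 := by
      apply mul_left_cancel₀ h2; linear_combination h4
    rcases hx with hx | hx | hx
    · refine ⟨a / x.imI, ?_, ?_, ?_⟩ <;> field_simp
      · linear_combination h4
      · linear_combination -h3
    · refine ⟨b / x.imJ, ?_, ?_, ?_⟩ <;> field_simp
      · linear_combination -h4
      · linear_combination h1
    · refine ⟨c / x.imK, ?_, ?_, ?_⟩ <;> field_simp
      · linear_combination h3
      · linear_combination -h1
  · rintro ⟨t, rfl, rfl, rfl⟩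
    ext <;> simp <;> ring

theorem exists_sq_mul [Finite F] (h2 : ¬IsSquare (2 : F)) {N : F} (hN : N ≠ 0) :
    ∃ t : F, t ≠ 0 ∧ (t ^ 2 * N = 1 ∨ t ^ 2 * N = 2) := by
  have := Fintype.ofFinite F
  have hF : ringChar F ≠ 2 := by
    intro h
    apply NeZero.ne (2 : F)
    have := CharP.cast_eq_zero F (ringChar F)
    rw [h] at this
    exact_mod_cast this
  have h20 := NeZero.ne (2 : F)
  by_cases hs : IsSquare N
  · obtain ⟨r, rfl⟩ := hs
    have : r ≠ 0 := by rintro rfl; simp at hN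
    exact ⟨r⁻¹, inv_ne_zero this, Or.inl (by field_simp)⟩
  · have : IsSquare (N * 2) := by
      classical
      have a := quadraticChar_neg_one_iff_not_isSquare.2 hs
      have b := quadraticChar_neg_one_iff_not_isSquare.2 h2
      have : quadraticChar F (N * 2) = 1 := by rw [map_mul, a, b]; norm_num
      exact (quadraticChar_one_iff_isSquare (mul_ne_zero hN h20)).1 this
    obtain ⟨r, hr⟩ := this
    have hr0 : r ≠ 0 := by
      rintro rfl
      rw [mul_zero] at hr
      exact mul_ne_zero hN h20 hr
    refine ⟨2 * r⁻¹, mul_ne_zero h20 (inv_ne_zero hr0), Or.inr ?_⟩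
    field_simp
    linear_combination hr

theorem card_fixedBy [Finite F] (h2 : ¬IsSquare (2 : F)) {g : lineGroup K} {x : ℍ[F]} {c d : F}
    (hg : g.1.1 = fm x c d) (hN : x.imI ^ 2 + x.imJ ^ 2 + x.imK ^ 2 ≠ 0) :
    Nat.card (MulAction.fixedBy (Poles F) g) = 2 := by
  have hx : x.imI ≠ 0 ∨ x.imJ ≠ 0 ∨ x.imK ≠ 0 := by
    by_contra! h
    simp [h] at hN
  obtain ⟨t, ht, htN⟩ := exists_sq_mul h2 hN
  have h20 := NeZero.ne (2 : F)
  have hd : ∀ a b c : F, vec 0 (qm 0 a b c) ⬝ᵥ vec 0 (qm 0 a b c) = a ^ 2 + b ^ 2 + c ^ 2 := by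
    intro a b c
    rw [dot_vec, normSq_eq]; simp
  let pt : (s : F) → (s = t ∨ s = -t) → Poles F := fun s hs =>
    ⟨vec 0 (qm 0 (s * x.imI) (s * x.imJ) (s * x.imK)), by simp [vec], by
      rw [hd]
      have : s ^ 2 = t ^ 2 := by rcases hs with rfl | rfl <;> ring
      convert htN using 2 <;> linear_combination (x.imI ^ 2 + x.imJ ^ 2 + x.imK ^ 2) * this⟩
  have hset : MulAction.fixedBy (Poles F) g = {pt t (Or.inl rfl), pt (-t) (Or.inr rfl)} := by
    ext v
    rw [MulAction.mem_fixedBy, smul_poles_eq_iff hg, commute_pure_iff hx, Set.mem_insert_iff,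
      Set.mem_singleton_iff, Poles.eq_iff, Poles.eq_iff]
    constructor
    · rintro ⟨s, e1, e3, e4⟩
      have hv := eq_vec v.2.1
      rw [e1, e3, e4] at hv
      have hs : s ^ 2 = t ^ 2 := by
        have hN' := v.2.2
        rw [hv, hd] at hN'
        have e : (s * x.imI) ^ 2 + (s * x.imJ) ^ 2 + (s * x.imK) ^ 2 =
          s ^ 2 * (x.imI ^ 2 + x.imJ ^ 2 + x.imK ^ 2) := by ring
        rw [e] at hN'
        have hs0 : s ≠ 0 := by
          rintro rfl
          rcases hN' with h | h
          · simp at h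
          · exact h20 (by simpa using h.symm)
        apply mul_right_cancel₀ hN
        rcases hN' with h | h <;> rcases htN with h' | h' <;> rw [h, h']
        · exfalso; apply h2; refine ⟨t / s, ?_⟩
          field_simp
          apply mul_right_cancel₀ hN
          linear_combination 2 * h - h'
        · exfalso; apply h2; refine ⟨s / t, ?_⟩
          field_simp
          apply mul_right_cancel₀ hN
          linear_combination 2 * h' - h
      rcases sq_eq_sq_iff_eq_or_eq_neg.1 hs with rfl | rfl
      · exact Or.inl hv
      · exact Or.inr hv
    · rintro (h | h) <;> rw [h]
      · exact ⟨t, rfl, rfl, rfl⟩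
      · exact ⟨-t, rfl, rfl, rfl⟩
  rw [hset]
  refine Set.ncard_pair ?_
  intro h
  have h' : ∀ i, (pt t (Or.inl rfl)).1 i = (pt (-t) (Or.inr rfl)).1 i := fun i => by rw [h]
  have a1 : t * x.imI = -t * x.imI := h' 2
  have a2 : t * x.imJ = -t * x.imJ := h' 3
  have a3 : t * x.imK = -t * x.imK := h' 4
  have key : ∀ y : F, t * y = -t * y → y = 0 := by
    intro y h
    have : 2 * t * y = 0 := by linear_combination h
    simpa [h20, ht] using this
  rcases hx with hx | hx | hx
  · exact hx (key _ a1)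
  · exact hx (key _ a2)
  · exact hx (key _ a3)

end LineStabilizer

section LineUnipotent

variable {F : Type} [Field F] [NeZero (2 : F)] {K : Subgroup (unitary (M F))}

theorem fm_one_pow [Finite F] (hp : (Nat.card F).Prime) (C D : F) :
    fm (1 : ℍ[F]) C D ^ Nat.card F ^ 2 = fm 1 C D := by
  have := Fintype.ofFinite F
  set p := Nat.card F with hpF
  have hcard : Fintype.card F = p := by rw [hpF, Nat.card_eq_fintype_card]
  have : Fact p.Prime := ⟨hp⟩
  have : CharP F p := by
    have := FiniteField.cast_card_eq_zero F
    rw [hcard] at this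
    rw [CharP.cast_eq_zero_iff F (ringChar F)] at this
    have h : ringChar F = p := (Nat.prime_dvd_prime_iff_eq (CharP.char_is_prime F _) hp).1 this
    rw [← h]; exact ringChar.charP F
  have : CharP (M F) p := charP_of_injective_algebraMap (algebraMap F (M F)).injective p
  have hodd : p ≠ 2 := by
    intro h
    apply NeZero.ne (2 : F)
    have := CharP.cast_eq_zero F p
    rw [h] at this
    exact_mod_cast this
  have hpow : ∀ x : F, x ^ p ^ 2 = x := fun x => by
    rw [← hcard]; exact FiniteField.pow_card_pow 2 x
  have hsplit : fm (1 : ℍ[F]) C D = C • 1 + D • fm 1 0 1 := by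
    rw [← fm_one]
    ext i j <;> fin_cases i <;> fin_cases j <;> simp [fm]
  have hJ : (fm (1 : ℍ[F]) 0 1) ^ p ^ 2 = fm 1 0 1 := by
    have h4 : (fm (1 : ℍ[F]) 0 1) ^ 4 = 1 := by
      rw [show 4 = 2 * 2 by norm_num, pow_mul, pow_two (fm _ _ _), fm_mul, pow_two, fm_mul,
        ← fm_one]
      simp
    obtain ⟨m, hm⟩ : ∃ m, p ^ 2 = 4 * m + 1 := by
      obtain ⟨k, hk⟩ := hp.odd_of_ne_two hodd
      exact ⟨k ^ 2 + k, by rw [hk]; ring⟩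
    rw [hm, pow_add, pow_mul, h4]; simp
  have hcomm : Commute (C • (1 : M F)) (D • fm 1 0 1) :=
    ((Commute.one_left _).smul_left _).smul_right _
  rw [hsplit, add_pow_char_pow_of_commute p 2 hcomm, smul_pow, smul_pow, one_pow, hJ, hpow, hpow]

theorem eq_top_of_line_unipotent [Finite F] (hK : frame F ≤ K) (hp : (Nat.card F).Prime)
    (hc : ∀ t : F, ∃ n : ℕ, (n : F) = t) (h3 : (3 : F) ≠ 0) {g : unitary (M F)} (hg : g ∈ K)
    {x : ℍ[F]} {c d : F} (hx : g.1 = fm x c d) (h0 : x.imI ≠ 0 ∨ x.imJ ≠ 0 ∨ x.imK ≠ 0)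
    (hN : x.imI ^ 2 + x.imJ ^ 2 + x.imK ^ 2 = 0) : K = ⊤ := by
  have hn := fm_norm (hx ▸ g.2)
  have hre : x.re ≠ 0 := by
    intro h
    rw [normSq_eq, h] at hn
    apply zero_ne_one (α := F)
    linear_combination hn - (c ^ 2 + d ^ 2) * hN
  set β : ℍ[F] := qm 0 (x.re⁻¹ * x.imI) (x.re⁻¹ * x.imJ) (x.re⁻¹ * x.imK) with hβ
  have hxβ : x = x.re • (1 + β) := by
    ext <;> simp [hβ, hre]
  have hβ0 : β ≠ 0 := by
    intro h
    rw [h] at hxβ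
    rw [hxβ] at h0
    simp at h0
  have hββ : β * β = 0 := by
    rw [hβ, qm_mul, ← qm_zero]
    congr 1
    · linear_combination -(x.re⁻¹) ^ 2 * hN
    all_goals ring
  have hX : fm x c d = dg (1 + β) (1 + β) * fm 1 (x.re * c) (x.re * d) := by
    conv_lhs => rw [hxβ]
    rw [fm_smul, ← fm_one_zero, fm_mul]
    simp
  have hcomm : Commute (dg (1 + β) (1 + β)) (fm 1 (x.re * c) (x.re * d)) := by
    rw [Commute, SemiconjBy, ← fm_one_zero, fm_mul, fm_mul]; simp
  have hpow : (dg (1 + β) (1 + β)) ^ Nat.card F ^ 2 = 1 := by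
    change diagHom (1 + β) ^ Nat.card F ^ 2 = 1
    have := Fintype.ofFinite F
    rw [← map_pow, one_add_pow_of_sq_zero hββ, ← Nat.cast_smul_eq_nsmul F, Nat.card_eq_fintype_card,
      Nat.cast_pow, FiniteField.cast_card_eq_zero]
    simp
  have hgm : fm x c d ∈ mats K := hx ▸ coe_mem_mats.2 hg
  have hY : fm 1 (x.re * c) (x.re * d) ∈ mats K := by
    have := pow_mem hgm (Nat.card F ^ 2)
    rwa [hX, hcomm.mul_pow, hpow, one_mul, fm_one_pow hp] at this
  have := mul_mem hgm (star_mem_mats hY)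
  rw [hX, mul_assoc, Unitary.mul_star_self_of_mem (unitary_of_mem hY), mul_one] at this
  exact eq_top_of_diag_unipotent hK hc h3 hβ0 (by simp [hβ]) hββ this

end LineUnipotent

section RootVectors

variable {F : Type} [Field F] [NeZero (2 : F)] {K : Subgroup (unitary (M F))}

theorem dot_of_mem {v : Fin 5 → F} (h : E v ∈ mats K) : v ⬝ᵥ v = 1 := by
  have := Unitary.mul_star_self_of_mem (unitary_of_mem h)
  rw [star_E, E_mul_self] at this
  have := congrArg tr this
  rw [map_smul, tr_one, smul_eq_mul] at this
  exact mul_right_cancel₀ (NeZero.ne (2 : F)) (by rw [this, one_mul])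

theorem E_ρ_mem {g : unitary (M F)} (hg : g ∈ K) {v : Fin 5 → F} (h : E v ∈ mats K) :
    E (ρ g v) ∈ mats K := by
  rw [E_ρ]
  have hm := coe_mem_mats.2 hg
  exact mul_mem (mul_mem hm h) (star_mem_mats hm)

theorem ρ_of_eq_E {g : unitary (M F)} {v : Fin 5 → F} (hg : g.1 = E v) (w : Fin 5 → F) :
    ρ g w = (2 * (v ⬝ᵥ w)) • v - w := by
  apply E_injective
  have hv : E v * E v = 1 := by
    have := Unitary.mul_star_self_of_mem (hg ▸ g.2)
    rwa [star_E] at this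
  have h1 : E v * E w = (2 * (v ⬝ᵥ w)) • (1 : M F) - E w * E v := by
    rw [← E_mul_add]; abel
  rw [E_ρ, hg, star_E, h1, sub_mul, mul_assoc, hv, map_sub, map_smul, smul_mul_assoc, one_mul,
    mul_one]

theorem exists_perm_mem (hK : frame F ≤ K) {σ : Equiv.Perm (Fin 5)} (hσ : Equiv.Perm.sign σ = 1)
    {v : Fin 5 → F} (h : E v ∈ mats K) :
    ∃ w : Fin 5 → F, E w ∈ mats K ∧ ∃ s : Fin 5 → ℤˣ, ∀ i, w (σ i) = s i • v i := by
  obtain ⟨g, hg, s, hs⟩ := exists_frame_perm (F := F) hσ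
  exact ⟨ρ g v, E_ρ_mem (hK hg) h, s, fun i => ρ_apply_of_SP hs v i⟩

theorem exists_even_perm {i j : Fin 5} (h : i ≠ j) :
    ∃ σ : Equiv.Perm (Fin 5), Equiv.Perm.sign σ = 1 ∧ σ i = 0 ∧ σ j = 1 := by
  have : ∃ τ : Equiv.Perm (Fin 5), τ i = 0 ∧ τ j = 1 := by
    refine ⟨Equiv.swap 1 (Equiv.swap 0 i j) * Equiv.swap 0 i, ?_, ?_⟩
    · rw [Equiv.Perm.mul_apply, Equiv.swap_apply_right]
      refine Equiv.swap_apply_of_ne_of_ne (by decide) fun h' => h ?_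
      exact (Equiv.swap 0 i).injective ((Equiv.swap_apply_right 0 i).trans h')
    · rw [Equiv.Perm.mul_apply, Equiv.swap_apply_right]
  obtain ⟨τ, h0, h1⟩ := this
  rcases Int.units_eq_one_or (Equiv.Perm.sign τ) with hs | hs
  · exact ⟨τ, hs, h0, h1⟩
  · refine ⟨Equiv.swap 2 3 * τ, ?_, ?_, ?_⟩
    · rw [map_mul, hs, Equiv.Perm.sign_swap (by decide)]; rfl
    · rw [Equiv.Perm.mul_apply, h0]; decide
    · rw [Equiv.Perm.mul_apply, h1]; decide

theorem exists_rotation (hK : frame F ≤ K) {k l : Fin 5} (hkl : k ≠ l) {u : ℍ[F]}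
    (hu : e k * e l = dg u u) : ∃ g : lineGroup K, SP g.1.1 (Equiv.swap 0 1 * Equiv.swap k l)
      (fun i => (if i = k then -1 else 1) * (if Equiv.swap k l i = 0 then -1 else 1)) := by
  have h := T_mul_T_mem_mats hK (i := 0) (j := 1) (by decide) hkl
  obtain ⟨g, hg, hgX⟩ := h
  have hg' : g.1 = (2⁻¹ : F) • ((1 + e 0 * e 1) * (1 + e k * e l)) := hgX
  refine ⟨⟨g, hg, 1 + u, 2⁻¹, 2⁻¹, ?_⟩, ?_⟩
  · rw [hg', hu, e_mul_e.1, ← dg_one, dg_add]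
    rw [dg, dg]
    ext i j <;> fin_cases i <;> fin_cases j <;> simp [fm, Matrix.mul_apply, Fin.sum_univ_two]
  · change SP g.1 _ _
    rw [hg']
    exact ((SP_T (by decide)).mul (SP_T hkl)).smul _

end RootVectors

section AxisPoles

variable {F : Type} [Field F] [NeZero (2 : F)] {K : Subgroup (unitary (M F))}

/-- The action of `lineGroup K` on the poles, as a permutation group. -/
abbrev poleGroup (K : Subgroup (unitary (M F))) : Subgroup (Equiv.Perm (Poles F)) :=
  (MulAction.toPermHom (lineGroup K) (Poles F)).range

theorem exists_quarter_turns (hK : frame F ≤ K) :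
    (∃ g : lineGroup K, ∀ v : Poles F, (g • v).1 = ![0, 0, v.1 2, v.1 4, -v.1 3]) ∧
    (∃ g : lineGroup K, ∀ v : Poles F, (g • v).1 = ![0, 0, -v.1 4, v.1 3, v.1 2]) ∧
    (∃ g : lineGroup K, ∀ v : Poles F, (g • v).1 = ![0, 0, v.1 3, -v.1 2, v.1 4]) := by
  obtain ⟨-, h23, h34, h42, -⟩ := e_mul_e (F := F)
  refine ⟨?_, ?_, ?_⟩
  · obtain ⟨g, hg⟩ := exists_rotation hK (k := 3) (l := 4) (by decide) h34
    refine ⟨g, fun v => ?_⟩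
    have h := ρ_apply_of_SP hg v.1
    have h2 := h 2
    have h3 := h 3
    have h4 := h 4
    rw [show (Equiv.swap 0 1 * Equiv.swap 3 4 : Equiv.Perm (Fin 5)) 2 = 2 by decide] at h2
    rw [show (Equiv.swap 0 1 * Equiv.swap 3 4 : Equiv.Perm (Fin 5)) 3 = 4 by decide] at h3
    rw [show (Equiv.swap 0 1 * Equiv.swap 3 4 : Equiv.Perm (Fin 5)) 4 = 3 by decide] at h4
    funext i
    have h01 := (g • v).2.1
    rw [smul_poles_val] at h01 ⊢
    fin_cases i
    · exact h01.1
    · exact h01.2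
    · exact h2.trans (by simp [show Equiv.swap (3 : Fin 5) 4 2 = 2 by decide])
    · exact h4.trans (by simp)
    · exact h3.trans (by simp)
  · obtain ⟨g, hg⟩ := exists_rotation hK (k := 4) (l := 2) (by decide) h42
    refine ⟨g, fun v => ?_⟩
    have h := ρ_apply_of_SP hg v.1
    have h2 := h 2
    have h3 := h 3
    have h4 := h 4
    rw [show (Equiv.swap 0 1 * Equiv.swap 4 2 : Equiv.Perm (Fin 5)) 2 = 4 by decide] at h2
    rw [show (Equiv.swap 0 1 * Equiv.swap 4 2 : Equiv.Perm (Fin 5)) 3 = 3 by decide] at h3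
    rw [show (Equiv.swap 0 1 * Equiv.swap 4 2 : Equiv.Perm (Fin 5)) 4 = 2 by decide] at h4
    funext i
    have h01 := (g • v).2.1
    rw [smul_poles_val] at h01 ⊢
    fin_cases i
    · exact h01.1
    · exact h01.2
    · exact h4.trans (by simp)
    · exact h3.trans (by simp [show Equiv.swap (4 : Fin 5) 2 3 = 3 by decide])
    · exact h2.trans (by simp)
  · obtain ⟨g, hg⟩ := exists_rotation hK (k := 2) (l := 3) (by decide) h23
    refine ⟨g, fun v => ?_⟩
    have h := ρ_apply_of_SP hg v.1
    have h2 := h 2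
    have h3 := h 3
    have h4 := h 4
    rw [show (Equiv.swap 0 1 * Equiv.swap 2 3 : Equiv.Perm (Fin 5)) 2 = 3 by decide] at h2
    rw [show (Equiv.swap 0 1 * Equiv.swap 2 3 : Equiv.Perm (Fin 5)) 3 = 2 by decide] at h3
    rw [show (Equiv.swap 0 1 * Equiv.swap 2 3 : Equiv.Perm (Fin 5)) 4 = 4 by decide] at h4
    funext i
    have h01 := (g • v).2.1
    rw [smul_poles_val] at h01 ⊢
    fin_cases i
    · exact h01.1
    · exact h01.2
    · exact h3.trans (by simp)
    · exact h2.trans (by simp)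
    · exact h4.trans (by simp [show Equiv.swap (2 : Fin 5) 3 4 = 4 by decide])

theorem scalar_one_ne_neg_one : (1 : F) ≠ -1 := fun h =>
  NeZero.ne (2 : F) (by linear_combination h)

theorem sign_cast_sq (s : ℤˣ) : (((s : ℤ) : F)) * ((s : ℤ) : F) = 1 := by
  rcases Int.units_eq_one_or s with rfl | rfl <;> simp

/-- The six poles on the coordinate axes. -/
def axisPole (a : Fin 3 × ℤˣ) : Poles F :=
  ⟨Pi.single (Fin.natAdd 2 a.1) ((a.2 : ℤ) : F), by
    constructor
    · constructor <;> exact Pi.single_eq_of_ne (by simp [Fin.ext_iff]; try omega) _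
    · left; rw [single_dotProduct, Pi.single_eq_same, sign_cast_sq]⟩

theorem axisPole_injective : Function.Injective (axisPole (F := F)) := by
  rintro ⟨k, s⟩ ⟨l, t⟩ h
  rw [Poles.eq_iff] at h
  have hs : ((s : ℤ) : F) ≠ 0 := left_ne_zero_of_mul_eq_one (sign_cast_sq s)
  have h1 := congr_fun h (Fin.natAdd 2 k)
  simp only [axisPole, Pi.single_eq_same] at h1
  by_cases hkl : Fin.natAdd 2 k = Fin.natAdd 2 l
  · have : k = l := by simpa [Fin.ext_iff] using hkl
    subst this
    rw [Pi.single_eq_same] at h1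
    refine Prod.ext rfl ?_
    rcases Int.units_eq_one_or s with rfl | rfl <;>
      rcases Int.units_eq_one_or t with rfl | rfl <;> first | rfl | exfalso
    · exact scalar_one_ne_neg_one (F := F) (by simpa using h1)
    · exact scalar_one_ne_neg_one (F := F) (by simpa using h1.symm)
  · rw [Pi.single_eq_of_ne hkl] at h1
    exact absurd h1 hs

theorem poleGroup_fixedBy [Finite F] (hK : frame F ≤ K) (hp : (Nat.card F).Prime)
    (hc : ∀ t : F, ∃ n : ℕ, (n : F) = t) (h2 : ¬IsSquare (2 : F)) (h3 : (3 : F) ≠ 0)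
    (htop : K ≠ ⊤) {σ : poleGroup K} (hσ : σ ≠ 1) :
    Nat.card (MulAction.fixedBy (Poles F) σ) = 2 := by
  obtain ⟨σ, g, rfl⟩ := σ
  obtain ⟨hgK, x, c, d, hx⟩ := g.2
  have h0 : x.imI ≠ 0 ∨ x.imJ ≠ 0 ∨ x.imK ≠ 0 := by
    by_contra! h
    apply hσ
    ext1
    refine Equiv.ext fun v => ?_
    change g • v = v
    rw [smul_poles_eq_iff hx]
    ext <;> simp [h] <;> ring
  exact card_fixedBy h2 hx fun hN => htop (eq_top_of_line_unipotent hK hp hc h3 hgK hx h0 hN)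

theorem axisPole_mem_orbit (hK : frame F ≤ K) (a : Fin 3 × ℤˣ) :
    axisPole a ∈ MulAction.orbit (poleGroup K) (axisPole (F := F) (0, 1)) := by
  obtain ⟨-, ⟨B, hB⟩, ⟨C, hC⟩⟩ := exists_quarter_turns hK
  have step : ∀ (g : lineGroup K) (v w : Poles F),
      v ∈ MulAction.orbit (poleGroup K) (axisPole (F := F) (0, 1)) → (g • v).1 = w.1 →
      w ∈ MulAction.orbit (poleGroup K) (axisPole (F := F) (0, 1)) := by
    rintro g v w ⟨σ, rfl⟩ h
    refine ⟨⟨_, g, rfl⟩ * σ, ?_⟩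
    exact Poles.eq_iff.2 h
  have h01 := MulAction.mem_orbit_self (M := poleGroup K) (axisPole (F := F) (0, 1))
  have h11 : axisPole (1, -1) ∈ MulAction.orbit (poleGroup K) (axisPole (F := F) (0, 1)) :=
    step C _ _ h01 (by rw [hC]; funext i; fin_cases i <;> simp [axisPole, Pi.single_apply])
  have h02 : axisPole (0, -1) ∈ MulAction.orbit (poleGroup K) (axisPole (F := F) (0, 1)) :=
    step C _ _ h11 (by rw [hC]; funext i; fin_cases i <;> simp [axisPole, Pi.single_apply])
  have h12 : axisPole (1, 1) ∈ MulAction.orbit (poleGroup K) (axisPole (F := F) (0, 1)) :=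
    step C _ _ h02 (by rw [hC]; funext i; fin_cases i <;> simp [axisPole, Pi.single_apply])
  have h21 : axisPole (2, 1) ∈ MulAction.orbit (poleGroup K) (axisPole (F := F) (0, 1)) :=
    step B _ _ h01 (by rw [hB]; funext i; fin_cases i <;> simp [axisPole, Pi.single_apply])
  have h22 : axisPole (2, -1) ∈ MulAction.orbit (poleGroup K) (axisPole (F := F) (0, 1)) :=
    step B _ _ h02 (by rw [hB]; funext i; fin_cases i <;> simp [axisPole, Pi.single_apply])
  obtain ⟨k, s⟩ := a
  rcases Int.units_eq_one_or s with rfl | rfl <;> fin_cases k <;> assumption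

theorem four_dvd_card_stabilizer [Finite F] (hK : frame F ≤ K) :
    4 ∣ Nat.card (MulAction.stabilizer (poleGroup K) (axisPole (F := F) (0, 1))) := by
  obtain ⟨⟨A, hA⟩, -⟩ := exists_quarter_turns hK
  let σ : poleGroup K := ⟨_, A, rfl⟩
  have hσ : ∀ v : Poles F, (σ • v).1 = ![0, 0, v.1 2, v.1 4, -v.1 3] := hA
  let τ : MulAction.stabilizer (poleGroup K) (axisPole (F := F) (0, 1)) :=
    ⟨σ, by
      rw [MulAction.mem_stabilizer_iff, Poles.eq_iff, hσ]
      funext i; fin_cases i <;> simp [axisPole, Pi.single_apply]⟩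
  have hτ : orderOf τ = 2 ^ (1 + 1) := by
    apply orderOf_eq_prime_pow
    · intro h
      have h1 : σ ^ 2 = 1 := congrArg Subtype.val h
      have h2 : (σ • σ • axisPole (F := F) (1, 1)).1 = (axisPole (F := F) (1, 1)).1 := by
        rw [← mul_smul, ← pow_two, h1, one_smul]
      have h3 := congr_fun h2 3
      rw [hσ, hσ] at h3
      exact scalar_one_ne_neg_one (F := F) (by simpa [axisPole, Pi.single_apply] using h3.symm)
    · apply Subtype.ext
      change σ ^ 4 = 1
      apply Subtype.ext
      refine Equiv.ext fun v => ?_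
      rw [Poles.eq_iff]
      change (σ • σ • σ • σ • v).1 = v.1
      rw [hσ, hσ, hσ, hσ]
      funext i; fin_cases i <;> simp [v.2.1]
  have h4 := orderOf_dvd_natCard τ
  rwa [hτ] at h4

theorem mul_eq_zero_of_mem_orbit [Finite F] (hK : frame F ≤ K) (hp : (Nat.card F).Prime)
    (hc : ∀ t : F, ∃ n : ℕ, (n : F) = t) (h2 : ¬IsSquare (2 : F)) (h3 : (3 : F) ≠ 0)
    (htop : K ≠ ⊤) {v : Poles F} (a : Fin 3 × ℤˣ) (g : lineGroup K) (hv : g • axisPole a = v)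
    {i j : Fin 5} (hij : i ≠ j) : v.1 i * v.1 j = 0 := by
  have hsub : Set.range axisPole ⊆ MulAction.orbit (poleGroup K) (axisPole (F := F) (0, 1)) := by
    rintro _ ⟨b, rfl⟩
    exact axisPole_mem_orbit hK b
  have hcard : (Set.range (axisPole (F := F))).ncard = 6 := by
    rw [← Set.image_univ, Set.ncard_image_of_injective _ axisPole_injective, Set.ncard_univ]
    simp
  have hfin := Set.toFinite (MulAction.orbit (poleGroup K) (axisPole (F := F) (0, 1)))
  have h6 := card_orbit_eq_six (G := poleGroup K) (x := axisPole (F := F) (0, 1))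
    (fun σ hσ => poleGroup_fixedBy hK hp hc h2 h3 htop hσ)
    (by
      have := Set.ncard_le_ncard hsub hfin
      rw [hcard, ← Nat.card_coe_set_eq] at this
      omega)
    (four_dvd_card_stabilizer hK)
  rw [Nat.card_coe_set_eq] at h6
  have heq := Set.eq_of_subset_of_ncard_le hsub (by rw [h6, hcard]) hfin
  have hmem : v ∈ MulAction.orbit (poleGroup K) (axisPole (F := F) (0, 1)) := by
    obtain ⟨σ, hσ⟩ := axisPole_mem_orbit hK a
    exact ⟨⟨_, g, rfl⟩ * σ, by rw [← hv, ← hσ]; rfl⟩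
  rw [← heq] at hmem
  obtain ⟨b, rfl⟩ := hmem
  simp only [axisPole, Pi.single_apply]
  grind

end AxisPoles

section AxisVectors

variable {F : Type} [Field F] [NeZero (2 : F)] {K : Subgroup (unitary (M F))}

theorem exists_eq_single {u : Fin 5 → F} (h : ∀ i j, i ≠ j → u i * u j = 0) (hu : u ⬝ᵥ u = 1) :
    ∃ (k : Fin 5) (s : ℤˣ), u = s • Pi.single k 1 := by
  have hne : ∃ k, u k ≠ 0 := by
    by_contra! h0
    rw [show u = 0 from funext h0] at hu
    simp at hu
  obtain ⟨k, hk⟩ := hne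
  have h0 : ∀ i, i ≠ k → u i = 0 := fun i hi =>
    (mul_eq_zero.1 (h i k hi)).resolve_right hk
  have hu' : u = Pi.single k (u k) := by
    funext i
    by_cases hi : i = k
    · subst hi; simp
    · rw [h0 i hi, Pi.single_eq_of_ne hi]
  have hsq : u k * u k = 1 := by
    rw [hu', single_dotProduct] at hu
    simpa using hu
  rcases mul_self_eq_one_iff.1 hsq with h1 | h1
  · exact ⟨k, 1, by rw [one_smul, ← h1]; exact hu'⟩
  · exact ⟨k, -1, by rw [Units.neg_smul, one_smul, ← Pi.single_neg, ← h1]; exact hu'⟩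

theorem mem_frame_of_axes {g : unitary (M F)}
    (h : ∀ i, ∃ (k : Fin 5) (s : ℤˣ), ρ g (Pi.single i 1) = s • Pi.single k 1) : g ∈ frame F := by
  choose k s hs using h
  have hk : Function.Injective k := by
    intro i j hij
    by_contra hne
    have h1 := dot_ρ g (Pi.single i 1) (Pi.single j 1)
    rw [hs, hs, hij, single_dotProduct, Pi.single_eq_of_ne hne] at h1
    rcases Int.units_eq_one_or (s i) with h2 | h2 <;>
      rcases Int.units_eq_one_or (s j) with h3 | h3 <;> simp [h2, h3] at h1
  refine ⟨Equiv.ofBijective k (Finite.injective_iff_bijective.1 hk), s, fun i => ?_⟩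
  have h1 := E_ρ g (Pi.single i 1)
  have h2 : star g.1 * g.1 = 1 := Unitary.star_mul_self_of_mem g.2
  have h3 : g.1 * e i = E (ρ g (Pi.single i 1)) * g.1 := by
    rw [h1, mul_assoc, h2, mul_one]; rfl
  rw [h3, hs]
  rcases Int.units_eq_one_or (s i) with h4 | h4 <;>
    simp [h4, e]

theorem eq_zero_or_sq_eq_one (hc : ∀ t : F, ∃ n : ℕ, (n : F) = t) (h3 : (3 : F) = 0) (x : F) :
    x = 0 ∨ x ^ 2 = 1 := by
  obtain ⟨n, rfl⟩ := hc x
  have h : (n : F) = ((n % 3 : ℕ) : F) := by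
    conv_lhs => rw [← Nat.mod_add_div n 3]
    push_cast
    rw [h3, zero_mul, add_zero]
  rw [h]
  have hlt := Nat.mod_lt n (show 3 > 0 by decide)
  interval_cases n % 3
  · left; simp
  · right; simp
  · right; push_cast; linear_combination h3

variable [Finite F]

theorem mul_eq_zero_of_first_two (hK : frame F ≤ K) (hp : (Nat.card F).Prime)
    (hc : ∀ t : F, ∃ n : ℕ, (n : F) = t) (h2 : ¬IsSquare (2 : F)) (htop : K ≠ ⊤)
    {v : Fin 5 → F} (hv : E v ∈ mats K) (h0 : v 0 = 0) (h1 : v 1 = 0) {i j : Fin 5} (hij : i ≠ j) :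
    v i * v j = 0 := by
  have hn := dot_of_mem hv
  simp only [dotProduct, Fin.sum_univ_five, h0, h1, mul_zero, zero_add] at hn
  suffices v 2 * v 3 = 0 ∧ v 2 * v 4 = 0 ∧ v 3 * v 4 = 0 by
    obtain ⟨ha, hb, hd⟩ := this
    have ha' := mul_comm (v 2) (v 3) ▸ ha
    have hb' := mul_comm (v 2) (v 4) ▸ hb
    have hd' := mul_comm (v 3) (v 4) ▸ hd
    fin_cases i <;> fin_cases j <;> first | exact absurd rfl hij | simp_all
  by_cases h3 : (3 : F) = 0
  · have hz := eq_zero_or_sq_eq_one hc h3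
    have h10 : (1 : F) ≠ 0 := one_ne_zero
    have h20 := NeZero.ne (2 : F)
    rcases hz (v 2) with ha | ha <;> rcases hz (v 3) with hb | hb <;>
      rcases hz (v 4) with hd | hd <;> grind
  · have key : ∀ k : Fin 3, ∀ i j, i ≠ j → (2 * v (Fin.natAdd 2 k) * v i
        - (Pi.single (Fin.natAdd 2 k) 1 : Fin 5 → F) i) * (2 * v (Fin.natAdd 2 k) * v j
        - (Pi.single (Fin.natAdd 2 k) 1 : Fin 5 → F) j) = 0 := by
      intro k i j hij
      obtain ⟨g, hg, hgv⟩ := hv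
      have hgv' : g.1 = E v := hgv
      have hl : g ∈ lineGroup K := by
        refine ⟨hg, qm 0 (v 2) (v 3) (v 4), 0, 1, ?_⟩
        rw [hgv', ← E_vec_eq_fm (by simp), ← eq_vec ⟨h0, h1⟩]
      have := mul_eq_zero_of_mem_orbit hK hp hc h2 h3 htop (k, 1) ⟨g, hl⟩ rfl hij
      rw [smul_poles_val, ρ_of_eq_E hgv'] at this
      simpa [axisPole] using this
    have hsq : ∀ x : F, 2 * x * x - 1 ≠ 0 := by
      intro x hx
      apply h2
      refine ⟨2 * x, ?_⟩
      linear_combination -2 * hx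
    have h20 := NeZero.ne (2 : F)
    have k1 := key 0 2 3 (by decide)
    have k2 := key 0 2 4 (by decide)
    have k3 := key 1 3 4 (by decide)
    simp [Pi.single_apply, hsq, h20] at k1 k2 k3
    simp [k1, k2, k3]

theorem mul_eq_zero_of_two_zeros (hK : frame F ≤ K) (hp : (Nat.card F).Prime)
    (hc : ∀ t : F, ∃ n : ℕ, (n : F) = t) (h2 : ¬IsSquare (2 : F)) (htop : K ≠ ⊤)
    {v : Fin 5 → F} (hv : E v ∈ mats K) {k l : Fin 5} (hkl : k ≠ l) (h0 : v k = 0) (h1 : v l = 0)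
    {i j : Fin 5} (hij : i ≠ j) : v i * v j = 0 := by
  obtain ⟨σ, hσ, hk, hl⟩ := exists_even_perm hkl
  obtain ⟨w, hw, s, hs⟩ := exists_perm_mem hK hσ hv
  have := mul_eq_zero_of_first_two hK hp hc h2 htop hw (by rw [← hk, hs, h0, smul_zero])
    (by rw [← hl, hs, h1, smul_zero]) (σ.injective.ne hij)
  rw [hs, hs] at this
  rcases Int.units_eq_one_or (s i) with h4 | h4 <;>
    rcases Int.units_eq_one_or (s j) with h5 | h5 <;> simpa [h4, h5] using this

theorem exists_eq_single_of_two_zeros (hK : frame F ≤ K) (hp : (Nat.card F).Prime)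
    (hc : ∀ t : F, ∃ n : ℕ, (n : F) = t) (h2 : ¬IsSquare (2 : F)) (htop : K ≠ ⊤)
    {v : Fin 5 → F} (hv : E v ∈ mats K) {k l : Fin 5} (hkl : k ≠ l) (h0 : v k = 0)
    (h1 : v l = 0) : ∃ (m : Fin 5) (s : ℤˣ), v = s • Pi.single m 1 :=
  exists_eq_single (fun _ _ hij => mul_eq_zero_of_two_zeros hK hp hc h2 htop hv hkl h0 h1 hij)
    (dot_of_mem hv)

end AxisVectors

section ZeroCoordinate

theorem conj_or_exists_central {G : Type*} [Group G] {A B : G} (hA : A * A = 1) (hB : B * B = 1)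
    (hfin : IsOfFinOrder (A * B)) :
    (∃ k : ℕ, (A * B) ^ k * A = B * (A * B) ^ k) ∨
    ∃ m : ℕ, (A * B) ^ m ≠ 1 ∧ (A * B) ^ m * (A * B) ^ m = 1 ∧ Commute ((A * B) ^ m) A ∧
      Commute ((A * B) ^ m) B := by
  have hA' : A⁻¹ = A := inv_eq_of_mul_eq_one_left hA
  have hB' : B⁻¹ = B := inv_eq_of_mul_eq_one_left hB
  have hinv : (A * B)⁻¹ = B * A := by rw [mul_inv_rev, hA', hB']
  have hsA : SemiconjBy A (A * B) (A * B)⁻¹ := by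
    rw [hinv]; change A * (A * B) = B * A * A
    rw [← mul_assoc, hA, mul_assoc, hA, one_mul, mul_one]
  have hsB : SemiconjBy B (A * B) (A * B)⁻¹ := by
    rw [hinv]; exact (mul_assoc _ _ _).symm
  have hpos := hfin.orderOf_pos
  set n := orderOf (A * B) with hn
  have hone : (A * B) ^ n = 1 := pow_orderOf_eq_one _
  rcases Nat.even_or_odd' n with ⟨m, hm | hm⟩
  · right
    have hmm : (A * B) ^ m * (A * B) ^ m = 1 := by
      rw [← pow_add, ← two_mul, ← hm, hone]
    have hi : ((A * B)⁻¹) ^ m = (A * B) ^ m := by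
      rw [inv_pow]; exact inv_eq_of_mul_eq_one_left hmm
    refine ⟨m, pow_ne_one_of_lt_orderOf (by omega) (by omega), hmm, ?_, ?_⟩
    · have := hsA.pow_right m
      rw [hi] at this
      exact this.symm
    · have := hsB.pow_right m
      rw [hi] at this
      exact this.symm
  · left
    refine ⟨m, ?_⟩
    have h1 : (A * B) ^ m * (A * B) ^ m * (A * B) = 1 := by
      rw [← pow_add, ← pow_succ, ← two_mul, ← hm, hone]
    have h2 := hsB.pow_right m
    have h3 : B * (A * B) ^ m = ((A * B) ^ m)⁻¹ * B := by rw [← inv_pow]; exact h2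
    rw [h3, eq_inv_mul_iff_mul_eq, ← mul_assoc]
    calc (A * B) ^ m * (A * B) ^ m * A
        = (A * B) ^ m * (A * B) ^ m * (A * B) * B := by
          rw [mul_assoc _ (A * B) B, mul_assoc A, hB, mul_one]
      _ = B := by rw [h1, one_mul]

theorem perm_swap_cases : ∀ σ : Equiv.Perm (Fin 5), σ 0 = 1 → σ 1 = 0 → Equiv.Perm.sign σ = 1 →
    (σ 2 = 3 ∧ σ 3 = 2 ∧ σ 4 = 4) ∨ (σ 2 = 4 ∧ σ 4 = 2 ∧ σ 3 = 3) ∨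
      (σ 3 = 4 ∧ σ 4 = 3 ∧ σ 2 = 2) := by
  decide +kernel

theorem perm_fix_cases : ∀ σ : Equiv.Perm (Fin 5), σ 0 = 0 → σ 1 = 1 → Equiv.Perm.sign σ = 1 →
    σ (σ 2) = 2 → σ (σ 3) = 3 → σ 2 = 2 ∧ σ 3 = 3 ∧ σ 4 = 4 := by
  decide +kernel

variable {F : Type} [Field F] [NeZero (2 : F)] {K : Subgroup (unitary (M F))}

theorem unit_smul_eq (s : ℤˣ) (x : F) : s • x = ((s : ℤ) : F) * x := by
  rcases Int.units_eq_one_or s with rfl | rfl <;> simp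

theorem unit_smul_self_eq_one {s : ℤˣ} {x : F} (hx : x ≠ 0) (h : s • x = x) : s = 1 := by
  rcases Int.units_eq_one_or s with rfl | rfl
  · rfl
  · rw [Units.neg_smul, one_smul, neg_eq_iff_add_eq_zero, ← two_mul] at h
    exact absurd h (mul_ne_zero (NeZero.ne _) hx)

theorem not_swap_of_eigenvector (h2 : ¬IsSquare (2 : F)) {z : unitary (M F)}
    {σ : Equiv.Perm (Fin 5)} {s : Fin 5 → ℤˣ} (hz : SP z.1 σ s) {v : Fin 5 → F}
    (hv : ∀ i, v i ≠ 0) {ε : F} (hε : ρ z v = ε • v)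
    (hx : ρ z ![-v 1, v 0, 0, 0, 0] = ![-v 1, v 0, 0, 0, 0]) (h01 : σ 0 = 1) (h10 : σ 1 = 0) :
    False := by
  obtain ⟨hsign, hprod⟩ := SP.sign_perm z.2 hz h2
  have hv' : ∀ i, ε * v (σ i) = ((s i : ℤ) : F) * v i := fun i => by
    rw [← unit_smul_eq, ← ρ_apply_of_SP hz v i, hε]; rfl
  have hx' : ∀ i, (![-v 1, v 0, 0, 0, 0] : Fin 5 → F) (σ i) =
      ((s i : ℤ) : F) * (![-v 1, v 0, 0, 0, 0] : Fin 5 → F) i := fun i => by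
    rw [← unit_smul_eq, ← ρ_apply_of_SP hz _ i, hx]
  have hsq : ∀ i, (((s i : ℤ) : F)) * ((s i : ℤ) : F) = 1 := fun i => sign_cast_sq (s i)
  have hprod' : (((s 0 : ℤ) : F)) * ((s 1 : ℤ) : F) * ((s 2 : ℤ) : F) * ((s 3 : ℤ) : F) *
      ((s 4 : ℤ) : F) = 1 := by
    rw [Fin.prod_univ_five] at hprod
    have := congrArg (fun u : ℤˣ => ((u : ℤ) : F)) hprod
    simpa using this
  have hx0 := hx' 0
  have hx1 := hx' 1
  have hv0 := hv' 0
  have hv1 := hv' 1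
  rw [h01] at hx0 hv0
  rw [h10] at hx1 hv1
  simp only [Matrix.cons_val_zero, Matrix.cons_val_one] at hx0 hx1
  have hε1 : ε = -1 := by
    apply mul_right_cancel₀ (hv 1)
    linear_combination hv0 + ((s 0 : ℤ) : F) * hx0 - v 1 * hsq 0
  have hs01 : ((s 0 : ℤ) : F) * ((s 1 : ℤ) : F) = 1 := by
    apply mul_right_cancel₀ (hv 1)
    linear_combination ((s 1 : ℤ) : F) * hx0 + hx1
  have hfix : ∀ l, σ l = l → ((s l : ℤ) : F) = -1 := fun l hl => by
    have := hv' l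
    rw [hl, hε1] at this
    exact (mul_right_cancel₀ (hv l) this).symm
  have hpair : ∀ j k, σ j = k → σ k = j → ((s j : ℤ) : F) * ((s k : ℤ) : F) = 1 := by
    intro j k hj hk
    have h1 := hv' j
    have h2 := hv' k
    rw [hj, hε1] at h1
    rw [hk, hε1] at h2
    apply mul_right_cancel₀ (hv j)
    linear_combination -((s k : ℤ) : F) * h1 + h2
  apply scalar_one_ne_neg_one (F := F)
  rcases perm_swap_cases σ h01 h10 hsign with ⟨ha, hb, hc⟩ | ⟨ha, hb, hc⟩ | ⟨ha, hb, hc⟩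
  · have p1 := hpair 2 3 ha hb
    have p2 := hfix 4 hc
    rw [hs01, one_mul, p1, one_mul, p2] at hprod'
    exact hprod'.symm
  · have p1 := hpair 2 4 ha hb
    have p2 := hfix 3 hc
    rw [hs01, one_mul, mul_right_comm, p1, one_mul, p2] at hprod'
    exact hprod'.symm
  · have p1 := hpair 3 4 ha hb
    have p2 := hfix 2 hc
    rw [hs01, one_mul, mul_assoc, p1, mul_one, p2] at hprod'
    exact hprod'.symm

theorem eq_id_of_eigenvector (h2 : ¬IsSquare (2 : F)) {z : unitary (M F)}
    {σ : Equiv.Perm (Fin 5)} {s : Fin 5 → ℤˣ} (hz : SP z.1 σ s) {v : Fin 5 → F}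
    (hv : ∀ i, v i ≠ 0) {ε : F} (hε : ρ z v = ε • v)
    (hx : ρ z ![-v 1, v 0, 0, 0, 0] = ![-v 1, v 0, 0, 0, 0]) (h00 : σ 0 = 0) (h11 : σ 1 = 1)
    (hzz : ∀ w, ρ z (ρ z w) = w) (w : Fin 5 → F) : ρ z w = w := by
  obtain ⟨hsign, -⟩ := SP.sign_perm z.2 hz h2
  have hσσ : ∀ i, σ (σ i) = i := by
    intro i
    by_contra h
    have h1 := congr_fun (hzz (Pi.single i 1)) (σ (σ i))
    rw [ρ_apply_of_SP hz, ρ_apply_of_SP hz, Pi.single_eq_same, Pi.single_eq_of_ne h, unit_smul_eq,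
      unit_smul_eq, mul_one] at h1
    exact mul_ne_zero (left_ne_zero_of_mul_eq_one (sign_cast_sq _))
      (left_ne_zero_of_mul_eq_one (sign_cast_sq _)) h1
  obtain ⟨h22, h33, h44⟩ := perm_fix_cases σ h00 h11 hsign (hσσ 2) (hσσ 3)
  have hσ : ∀ i, σ i = i := by intro i; fin_cases i <;> assumption
  have hs1 : s 1 = 1 := by
    have := ρ_apply_of_SP hz ![-v 1, v 0, 0, 0, 0] 1
    rw [hx, h11] at this
    exact unit_smul_self_eq_one (hv 0) this.symm
  have hv' : ∀ i, ε * v i = s i • v i := fun i => by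
    rw [← ρ_apply_of_SP hz v i, hε, hσ]; rfl
  have hε1 : ε = 1 := by
    have := hv' 1
    rw [hs1, one_smul] at this
    exact mul_right_cancel₀ (hv 1) (by rw [this, one_mul])
  funext i
  have h1 := ρ_apply_of_SP hz w i
  have h3 : s i = 1 := unit_smul_self_eq_one (hv i) (by rw [← hv' i, hε1, one_mul])
  rwa [hσ, h3, one_smul] at h1

theorem exists_quarter_turn (hK : frame F ≤ K) : ∃ a ∈ K, ∀ w : Fin 5 → F,
    ρ a w = ![-w 0, -w 1, w 2, w 3, w 4] := by
  obtain ⟨a, ha, haX⟩ := mul_mem (e_mem_mats hK 0) (e_mem_mats hK 1)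
  have hs := (SP_e (F := F) 0).mul (SP_e 1)
  rw [← show a.1 = e 0 * e 1 from haX] at hs
  refine ⟨a, ha, fun w => ?_⟩
  funext i
  have := ρ_apply_of_SP hs w i
  rw [one_mul, Equiv.Perm.one_apply] at this
  rw [this]
  fin_cases i <;> simp

theorem ρ_pow_eq_self {g : unitary (M F)} {x : Fin 5 → F} (h : ρ g x = x) (n : ℕ) :
    ρ (g ^ n) x = x := by
  induction n with
  | zero => rw [pow_zero, map_one]; rfl
  | succ n ih =>
    rw [pow_succ, map_mul]
    change ρ (g ^ n) (ρ g x) = x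
    rw [h, ih]

theorem exists_coord_eq_zero [Finite F] (hK : frame F ≤ K) (hp : (Nat.card F).Prime)
    (hc : ∀ t : F, ∃ n : ℕ, (n : F) = t) (h2 : ¬IsSquare (2 : F)) (htop : K ≠ ⊤)
    {v : Fin 5 → F} (hv : E v ∈ mats K) : ∃ i, v i = 0 := by
  by_contra! hne
  have h20 := NeZero.ne (2 : F)
  have hvv := dot_of_mem hv
  obtain ⟨a, haK, ha⟩ := exists_quarter_turn hK
  obtain ⟨b, hbK, hbX⟩ := hv
  have hb := ρ_of_eq_E (g := b) hbX
  let R := (ρ (F := F)).toHomUnits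
  have hR : ∀ (g h : unitary (M F)), (∀ w, ρ g w = ρ h w) → R g = R h := fun g h hgh =>
    Units.ext (LinearMap.ext hgh)
  have hR' : ∀ (g h : unitary (M F)), R g = R h → ∀ w, ρ g w = ρ h w := fun g h hgh w =>
    congrArg (fun u : (Module.End F (Fin 5 → F))ˣ => u.1 w) hgh
  have hmul : ∀ (g h : unitary (M F)) w, ρ (g * h) w = ρ g (ρ h w) := fun g h w => by
    rw [map_mul]; rfl
  have hone : ∀ w, ρ (1 : unitary (M F)) w = w := fun w => by rw [map_one]; rfl
  have hA : R a * R a = 1 := by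
    rw [← map_mul, ← map_one R]
    refine hR _ _ fun w => ?_
    rw [hmul, ha, ha, hone]
    funext i; fin_cases i <;> simp
  have hB : R b * R b = 1 := by
    rw [← map_mul, ← map_one R]
    refine hR _ _ fun w => ?_
    rw [hmul, hb, hb, hone, dotProduct_sub, dotProduct_smul, hvv, smul_eq_mul]
    module
  have hfin : IsOfFinOrder (R a * R b) := by
    rw [← map_mul]
    have : Finite (M F) := inferInstance
    exact R.isOfFinOrder (isOfFinOrder_of_finite (a * b))
  have hbv : ρ b v = v := by rw [hb, hvv]; module
  rcases conj_or_exists_central hA hB hfin with ⟨k, hk⟩ | ⟨m, hm1, hm2, hmA, hmB⟩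
  · rw [← map_mul, ← map_pow, ← map_mul, ← map_mul] at hk
    set C := (a * b) ^ k
    have hC := hR' _ _ hk
    have key : ∀ x, ρ a x = x → ρ C x = (v ⬝ᵥ ρ C x) • v := by
      intro x hx
      have h1 := hC x
      rw [hmul, hmul, hx, hb] at h1
      have h3 : (2 : F) • ρ C x = (2 : F) • ((v ⬝ᵥ ρ C x) • v) := by
        linear_combination (norm := module) h1
      exact smul_right_injective _ h20 h3
    have k2 := key (Pi.single 2 1) (by rw [ha]; funext i; fin_cases i <;> simp)
    have k3 := key (Pi.single 3 1) (by rw [ha]; funext i; fin_cases i <;> simp)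
    have d22 := dot_ρ C (Pi.single 2 1) (Pi.single 2 1)
    have d33 := dot_ρ C (Pi.single 3 1) (Pi.single 3 1)
    have d23 := dot_ρ C (Pi.single 2 1) (Pi.single 3 1)
    rw [k2, smul_dotProduct, dotProduct_smul, hvv] at d22
    rw [k3, smul_dotProduct, dotProduct_smul, hvv] at d33
    rw [k2, k3, smul_dotProduct, dotProduct_smul, hvv] at d23
    simp at d22 d33 d23
    rcases d23 with h | h
    · simp [h] at d22
    · simp [h] at d33
  · rw [← map_mul, ← map_pow] at hm1 hm2 hmA hmB
    set z := (a * b) ^ m with hzdef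
    have hzK : z ∈ K := pow_mem (mul_mem haK hbK) m
    have hzz : ∀ w, ρ z (ρ z w) = w := fun w => by
      rw [← map_mul, ← map_one R] at hm2
      rw [← hmul, hR' _ _ hm2, hone]
    have hza : ∀ w, ρ z (ρ a w) = ρ a (ρ z w) := fun w => by
      have : R z * R a = R a * R z := hmA
      rw [← map_mul, ← map_mul] at this
      rw [← hmul, ← hmul, hR' _ _ this]
    have hzb : ∀ w, ρ z (ρ b w) = ρ b (ρ z w) := fun w => by
      have : R z * R b = R b * R z := hmB
      rw [← map_mul, ← map_mul] at this
      rw [← hmul, ← hmul, hR' _ _ this]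
    have hε : ρ z v = (v ⬝ᵥ ρ z v) • v := by
      have h1 := hzb v
      rw [hbv, hb] at h1
      have h3 : (2 : F) • ρ z v = (2 : F) • ((v ⬝ᵥ ρ z v) • v) := by
        linear_combination (norm := module) h1
      exact smul_right_injective _ h20 h3
    have hx : ρ z ![-v 1, v 0, 0, 0, 0] = ![-v 1, v 0, 0, 0, 0] := by
      apply ρ_pow_eq_self
      rw [hmul, hb, ha]
      have : v ⬝ᵥ ![-v 1, v 0, 0, 0, 0] = 0 := by
        simp [dotProduct, Fin.sum_univ_five]; ring
      rw [this]
      funext i; fin_cases i <;> simp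
    have hzero : ∀ x : F, -x = x → x = 0 := fun x h => by
      rw [neg_eq_iff_add_eq_zero, ← two_mul] at h
      exact (mul_eq_zero.1 h).resolve_left h20
    have hin : ∀ i : Fin 5, i = 0 ∨ i = 1 → ∀ j : Fin 5, j ≠ 0 → j ≠ 1 →
        ρ z (Pi.single i 1) j = 0 := by
      intro i hi j hj0 hj1
      have h1 := hza (Pi.single i 1)
      have h3 : ρ a (Pi.single i 1) = -Pi.single i (1 : F) := by
        rw [ha]
        rcases hi with rfl | rfl <;> (funext l; fin_cases l <;> simp)
      rw [h3, map_neg, ha] at h1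
      have h4 := congr_fun h1 j
      apply hzero
      fin_cases j <;> first | exact absurd rfl hj0 | exact absurd rfl hj1 | exact h4
    have hout : ∀ i : Fin 5, i ≠ 0 → i ≠ 1 → ρ z (Pi.single i 1) 0 = 0 ∧
        ρ z (Pi.single i 1) 1 = 0 := by
      intro i hi0 hi1
      have h1 := hza (Pi.single i 1)
      have h3 : ρ a (Pi.single i 1) = Pi.single i (1 : F) := by
        rw [ha]
        funext l
        fin_cases i <;> first | exact absurd rfl hi0 | exact absurd rfl hi1 | fin_cases l <;> simp
      rw [h3, ha] at h1
      exact ⟨hzero _ (congr_fun h1 0).symm, hzero _ (congr_fun h1 1).symm⟩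
    have hframe : z ∈ frame F := by
      refine mem_frame_of_axes fun i => ?_
      have hmem : E (ρ z (Pi.single i 1)) ∈ mats K := E_ρ_mem hzK (e_mem_mats hK i)
      by_cases hi : i = 0 ∨ i = 1
      · exact exists_eq_single_of_two_zeros hK hp hc h2 htop hmem (k := 2) (l := 3) (by decide)
          (hin i hi 2 (by decide) (by decide)) (hin i hi 3 (by decide) (by decide))
      · push Not at hi
        exact exists_eq_single_of_two_zeros hK hp hc h2 htop hmem (k := 0) (l := 1) (by decide)
          (hout i hi.1 hi.2).1 (hout i hi.1 hi.2).2
    obtain ⟨σ, s, hs⟩ := hframe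
    have hσ : ∀ i : Fin 5, i = 0 ∨ i = 1 → σ i = 0 ∨ σ i = 1 := by
      intro i hi
      by_contra! h
      have h1 := hin i hi _ h.1 h.2
      rw [ρ_apply_of_SP hs, Pi.single_eq_same, unit_smul_eq, mul_one] at h1
      exact left_ne_zero_of_mul_eq_one (sign_cast_sq _) h1
    rcases hσ 0 (Or.inl rfl) with h00 | h01
    · have h11 : σ 1 = 1 := (hσ 1 (Or.inr rfl)).resolve_left fun h =>
        absurd (σ.injective (h.trans h00.symm)) (by decide)
      apply hm1
      rw [← map_one R]
      exact hR _ _ fun w => by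
        rw [hone, eq_id_of_eigenvector h2 hs hne hε hx h00 h11 hzz]
    · have h10 : σ 1 = 0 := (hσ 1 (Or.inr rfl)).resolve_right fun h =>
        absurd (σ.injective (h.trans h01.symm)) (by decide)
      exact not_swap_of_eigenvector h2 hs hne hε hx h01 h10

end ZeroCoordinate

section OneZeroCoordinate

variable {F : Type} [Field F] [NeZero (2 : F)] {K : Subgroup (unitary (M F))}

theorem flip_mem (hK : frame F ≤ K) {v : Fin 5 → F} (h : E v ∈ mats K) (j : Fin 5) :
    E (Function.update v j (-v j)) ∈ mats K := by
  obtain ⟨g, hg, hgX⟩ := e_mem_mats hK j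
  have hs := SP_e (F := F) j
  rw [← show g.1 = e j from hgX] at hs
  have hm := neg_mem_mats hK (E_ρ_mem hg h)
  rw [← map_neg] at hm
  convert hm using 2
  funext i
  have := ρ_apply_of_SP hs v i
  rw [Equiv.Perm.one_apply] at this
  rw [Pi.neg_apply, this]
  by_cases hi : i = j
  · subst hi; simp
  · simp [hi]

theorem exists_mem_update (hK : frame F ≤ K) {v : Fin 5 → F} (h : E v ∈ mats K) {j : Fin 5} {c : F}
    (hj : v j ^ 2 = c ^ 2) : E (Function.update v j c) ∈ mats K := by
  rcases sq_eq_sq_iff_eq_or_eq_neg.1 hj with h1 | h1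
  · rwa [← h1, Function.update_eq_self]
  · have := flip_mem hK h j
    rwa [h1, neg_neg] at this

/-- The vector with a zero in position `k` and `1 / 2` elsewhere. -/
def halfVec (F : Type) [Field F] (k : Fin 5) : Fin 5 → F := fun i => if i = k then 0 else 2⁻¹

theorem halfVec_mem (hK : frame F ≤ K) {v : Fin 5 → F} (h : E v ∈ mats K) {k : Fin 5}
    (hv : ∀ i, v i ^ 2 = halfVec F k i ^ 2) : E (halfVec F k) ∈ mats K := by
  have key : ∀ S : Finset (Fin 5), E (S.piecewise (halfVec F k) v) ∈ mats K := by
    intro S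
    induction S using Finset.induction_on with
    | empty => simpa using h
    | insert j S hj ih =>
      rw [Finset.piecewise_insert]
      exact exists_mem_update hK ih (by rw [Finset.piecewise_eq_of_notMem _ _ _ hj, hv])
  simpa using key Finset.univ

theorem dg_star_mem (hK : frame F ≤ K) {x : ℍ[F]} (h : E (vec 0 x) ∈ mats K) :
    dg x (star x) ∈ mats K := by
  have h1 := mul_mem h (e_mem_mats hK 1)
  have h2 : E (vec 0 x) * e 1 = dg x (star x) := by
    rw [E_vec, e_one, dg]
    ext i j <;> fin_cases i <;> fin_cases j <;> simp [Matrix.mul_apply, Fin.sum_univ_two]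
  rwa [h2] at h1

theorem dg_one_conj_mem {x y : ℍ[F]} (hx : x * star x = 1) (h : dg x (star x) ∈ mats K)
    (hy : dg 1 y ∈ mats K) : dg 1 (star x * y * x) ∈ mats K := by
  have := mul_mem (mul_mem h hy) (star_mem_mats h)
  rwa [star_dg, star_star, dg_mul, dg_mul, mul_one, hx] at this

theorem vec_star_mem (hK : frame F ≤ K) {y : ℍ[F]} (h : dg 1 y ∈ mats K) :
    E (vec 0 (star y)) ∈ mats K := by
  obtain ⟨g, hg, hgX⟩ := h
  have h1 := E_ρ_mem hg (e_mem_mats hK 1)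
  have h2 : (Pi.single 1 1 : Fin 5 → F) = vec 0 1 := by
    funext i; fin_cases i <;> simp [vec]
  rwa [h2, ρ_dg (g := g) hgX, one_mul, one_mul] at h1

theorem halfVec_zero : halfVec F 0 = vec 0 (qm 2⁻¹ 2⁻¹ 2⁻¹ 2⁻¹) := by
  funext i; fin_cases i <;> simp [halfVec, vec]

theorem eq_top_of_halfVec_mem [Finite F] (hK : frame F ≤ K)
    (hc : ∀ t : F, ∃ n : ℕ, (n : F) = t) (h3 : (3 : F) = 0) (h : E (halfVec F 0) ∈ mats K) :
    K = ⊤ := by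
  have h20 := NeZero.ne (2 : F)
  rw [halfVec_zero] at h
  have h1 := dg_star_mem hK h
  have h2 := T_mul_T_mem_mats hK (i := 4) (j := 2) (k := 3) (l := 4) (by decide) (by decide)
  obtain ⟨-, -, h34, h42, -⟩ := e_mul_e (F := F)
  rw [h34, h42, ← dg_one, dg_add, dg_add, dg_mul, smul_dg, ← qm_one, qm_add, qm_add, qm_mul,
    smul_qm] at h2
  have h4 := mul_mem h1 h2
  rw [star_qm, dg_mul, qm_mul, qm_mul] at h4
  refine eq_top_of_corner_unipotent hK hc (β := qm 0 (-2⁻¹) (-2⁻¹) (-2⁻¹)) ?_ (by simp) ?_ ?_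
  · intro h
    have := congrArg QuaternionAlgebra.imI h
    simp [h20] at this
  · rw [qm_mul, ← qm_zero]
    congr 1
    · field_simp; linear_combination -h3
    all_goals ring
  · convert h4 using 2
    · rw [← qm_one]; congr 1 <;> field_simp <;> ring
    · rw [← qm_one, qm_add]
      congr 1 <;> field_simp
      · linear_combination 2 * h3
      all_goals ring

theorem three_eq_zero_of_halfVec_mem [Finite F] (hK : frame F ≤ K) (hp : (Nat.card F).Prime)
    (hc : ∀ t : F, ∃ n : ℕ, (n : F) = t) (h2 : ¬IsSquare (2 : F)) (htop : K ≠ ⊤)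
    (h : E (halfVec F 0) ∈ mats K) : (3 : F) = 0 := by
  have h20 := NeZero.ne (2 : F)
  obtain ⟨σ, hσ, h1, h0⟩ := exists_even_perm (i := 1) (j := 0) (by decide)
  obtain ⟨w, hw, s, hs⟩ := exists_perm_mem hK hσ h
  have h' : E (halfVec F 1) ∈ mats K := by
    refine halfVec_mem hK hw fun i => ?_
    obtain ⟨j, rfl⟩ := σ.surjective i
    have hj : σ j = 1 ↔ j = 0 := by rw [← h0, σ.injective.eq_iff]
    rw [hs, unit_smul_eq, mul_pow, pow_two ((s j : ℤ) : F), sign_cast_sq, one_mul]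
    simp only [halfVec, hj]
  obtain ⟨g, hg, hgX⟩ := h
  have hm := E_ρ_mem hg h'
  rw [ρ_of_eq_E (g := g) hgX] at hm
  obtain ⟨i, hi⟩ := exists_coord_eq_zero hK hp hc h2 htop hm
  have h40 : (4 : F) ≠ 0 := by
    rw [show (4 : F) = 2 * 2 by norm_num]; exact mul_ne_zero h20 h20
  have hd : halfVec F 0 ⬝ᵥ halfVec F 1 = 3 / 4 := by
    simp [halfVec, dotProduct, Fin.sum_univ_five]
    field_simp; norm_num
  rw [hd] at hi
  by_contra h3
  have e1 : (2⁻¹ : F) ≠ 0 := inv_ne_zero h20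
  fin_cases i
  · simp [halfVec, h20] at hi
  · simp [halfVec, h20, h40, h3] at hi
  all_goals
    simp [halfVec] at hi
    field_simp at hi
    apply h20
    linear_combination hi

theorem sq_eq_of_pairwise_zero {a b c d : F} (hb : b ≠ 0) (hc : c ≠ 0) (hd : d ≠ 0)
    (ha : a ≠ 0) (hn : a ^ 2 + b ^ 2 + c ^ 2 + d ^ 2 = 1)
    (h1 : ∀ w : Fin 3 → F, (w = ![a ^ 2 + b ^ 2 - c ^ 2 - d ^ 2, 2 * (b * c - a * d),
        2 * (b * d + a * c)] ∨ w = ![a ^ 2 + c ^ 2 - b ^ 2 - d ^ 2, 2 * (b * c + a * d),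
        2 * (c * d - a * b)] ∨ w = ![a ^ 2 + d ^ 2 - b ^ 2 - c ^ 2, 2 * (b * d - a * c),
        2 * (c * d + a * b)]) → w 0 * w 1 = 0 ∧ w 0 * w 2 = 0) :
    a ^ 2 = 2⁻¹ ^ 2 ∧ b ^ 2 = 2⁻¹ ^ 2 ∧ c ^ 2 = 2⁻¹ ^ 2 ∧ d ^ 2 = 2⁻¹ ^ 2 := by
  have h20 := NeZero.ne (2 : F)
  have key : ∀ {x y u v : F}, u ≠ 0 → x ≠ 0 →
      (x ^ 2 + y ^ 2 - u ^ 2 - v ^ 2) * (2 * (y * u - x * v)) = 0 →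
      (x ^ 2 + y ^ 2 - u ^ 2 - v ^ 2) * (2 * (y * v + x * u)) = 0 →
      x ^ 2 + y ^ 2 - u ^ 2 - v ^ 2 = 0 := by
    intro x y u v hu hx p1 p2
    by_contra hne
    have q1 := (mul_eq_zero.1 ((mul_eq_zero.1 p1).resolve_left hne)).resolve_left h20
    have q2 := (mul_eq_zero.1 ((mul_eq_zero.1 p2).resolve_left hne)).resolve_left h20
    have r1 : x * (u ^ 2 + v ^ 2) = 0 := by linear_combination u * q2 - v * q1
    have r2 : u * (x ^ 2 + y ^ 2) = 0 := by linear_combination y * q1 + x * q2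
    apply hne
    linear_combination (mul_eq_zero.1 r2).resolve_left hu - (mul_eq_zero.1 r1).resolve_left hx
  have k1 := h1 _ (Or.inl rfl)
  have k2 := h1 _ (Or.inr (Or.inl rfl))
  have k3 := h1 _ (Or.inr (Or.inr rfl))
  simp only [Matrix.cons_val_zero, Matrix.cons_val_one, Matrix.cons_val] at k1 k2 k3
  have m1 := key hc ha k1.1 k1.2
  have m2 := key (x := a) (y := c) (u := d) (v := b) hd ha (by linear_combination k2.2)
    (by linear_combination k2.1)
  have m3 := key (x := a) (y := d) (u := b) (v := c) hb ha (by linear_combination k3.1)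
    (by linear_combination k3.2)
  refine ⟨?_, ?_, ?_, ?_⟩ <;> field_simp
  · linear_combination hn + m1 + m2 + m3
  · linear_combination hn + m1 - m2 - m3
  · linear_combination hn - m1 + m2 - m3
  · linear_combination hn - m1 - m2 + m3

theorem halfVec_mem_of_vec_mem [Finite F] (hK : frame F ≤ K) (hp : (Nat.card F).Prime)
    (hc : ∀ t : F, ∃ n : ℕ, (n : F) = t) (h2 : ¬IsSquare (2 : F)) (htop : K ≠ ⊤)
    {a b c d : F} (ha : a ≠ 0) (hb : b ≠ 0) (hc' : c ≠ 0) (hd : d ≠ 0)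
    (h : E (vec 0 (qm a b c d)) ∈ mats K) : E (halfVec F 0) ∈ mats K := by
  have hn := dot_of_mem h
  rw [dot_vec, zero_pow two_ne_zero, zero_add] at hn
  have hx : qm a b c d * star (qm a b c d) = 1 := by rw [mul_star_quat, hn, one_smul]
  rw [normSq_eq] at hn
  have hdg := dg_star_mem hK h
  obtain ⟨mi, mj, mk⟩ := dg_one_mem hK
  have key : ∀ {y : ℍ[F]}, dg 1 y ∈ mats K → y.re = 0 → ∀ i j : Fin 5, i ≠ j →
      vec 0 (star (star (qm a b c d) * y * qm a b c d)) i *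
        vec 0 (star (star (qm a b c d) * y * qm a b c d)) j = 0 := by
    intro y hy hre i j hij
    refine mul_eq_zero_of_two_zeros hK hp hc h2 htop
      (vec_star_mem hK (dg_one_conj_mem hx hdg hy)) (k := 0) (l := 1) (by decide) rfl ?_ hij
    simp [vec, hre]; ring
  have ki := key mi (by simp)
  have kj := key mj (by simp)
  have kk := key mk (by simp)
  rw [star_qm, qm_mul, qm_mul, star_qm] at ki kj kk
  have hsq := sq_eq_of_pairwise_zero hb hc' hd ha (by simpa using hn) (by
    rintro w (rfl | rfl | rfl)
    · have i1 := ki 2 3 (by decide)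
      have i2 := ki 2 4 (by decide)
      simp only [vec, Matrix.cons_val, qm_re, qm_imI, qm_imJ, qm_imK] at i1 i2 ⊢
      constructor
      · linear_combination i1
      · linear_combination i2
    · have i1 := kj 3 2 (by decide)
      have i2 := kj 3 4 (by decide)
      simp only [vec, Matrix.cons_val, qm_re, qm_imI, qm_imJ, qm_imK] at i1 i2 ⊢
      constructor
      · linear_combination i1
      · linear_combination i2
    · have i1 := kk 4 2 (by decide)
      have i2 := kk 4 3 (by decide)
      simp only [vec, Matrix.cons_val, qm_re, qm_imI, qm_imJ, qm_imK] at i1 i2 ⊢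
      constructor
      · linear_combination i1
      · linear_combination i2)
  obtain ⟨e1, e2, e3, e4⟩ := hsq
  refine halfVec_mem hK h fun i => ?_
  rw [halfVec_zero]
  fin_cases i
  · rfl
  · exact e1
  · exact e2
  · exact e3
  · exact e4

theorem exists_eq_single_of_mem [Finite F] (hK : frame F ≤ K) (hp : (Nat.card F).Prime)
    (hc : ∀ t : F, ∃ n : ℕ, (n : F) = t) (h2 : ¬IsSquare (2 : F)) (htop : K ≠ ⊤)
    {v : Fin 5 → F} (hv : E v ∈ mats K) : ∃ (m : Fin 5) (s : ℤˣ), v = s • Pi.single m 1 := by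
  obtain ⟨k, hk⟩ := exists_coord_eq_zero hK hp hc h2 htop hv
  by_cases hl : ∃ l, k ≠ l ∧ v l = 0
  · obtain ⟨l, hkl, hl⟩ := hl
    exact exists_eq_single_of_two_zeros hK hp hc h2 htop hv hkl hk hl
  · push Not at hl
    exfalso
    obtain ⟨l, hlk⟩ := exists_ne k
    obtain ⟨σ, hσ, hσk, -⟩ := exists_even_perm hlk.symm
    obtain ⟨w, hw, s, hs⟩ := exists_perm_mem hK hσ hv
    have hw0 : w 0 = 0 := by rw [← hσk, hs, hk, smul_zero]
    have hwne : ∀ i, i ≠ 0 → w i ≠ 0 := by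
      intro i hi
      obtain ⟨j, rfl⟩ := σ.surjective i
      rw [hs, unit_smul_eq]
      refine mul_ne_zero (left_ne_zero_of_mul_eq_one (sign_cast_sq _)) (hl j ?_)
      rintro rfl
      exact hi hσk
    rw [← vec_qpart w, hw0] at hw
    have hh := halfVec_mem_of_vec_mem hK hp hc h2 htop (hwne 1 (by decide)) (hwne 2 (by decide))
      (hwne 3 (by decide)) (hwne 4 (by decide)) hw
    exact htop (eq_top_of_halfVec_mem hK hc
      (three_eq_zero_of_halfVec_mem hK hp hc h2 htop hh) hh)

theorem le_frame_or_eq_top [Finite F] (hK : frame F ≤ K) (hp : (Nat.card F).Prime)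
    (hc : ∀ t : F, ∃ n : ℕ, (n : F) = t) (h2 : ¬IsSquare (2 : F)) : K ≤ frame F ∨ K = ⊤ := by
  by_cases htop : K = ⊤
  · exact Or.inr htop
  · exact Or.inl fun g hg => mem_frame_of_axes fun i =>
      exists_eq_single_of_mem hK hp hc h2 htop (E_ρ_mem hg (e_mem_mats hK i))

end OneZeroCoordinate

section Maximality

variable {F : Type} [Field F] [NeZero (2 : F)] [Finite F]

theorem exists_natCast_eq (hp : (Nat.card F).Prime) (t : F) : ∃ n : ℕ, (n : F) = t := by
  have := Fintype.ofFinite F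
  have : Fact (Nat.card F).Prime := ⟨hp⟩
  have : NeZero (Nat.card F) := ⟨hp.ne_zero⟩
  have : CharP F (Nat.card F) := charP_of_card_eq_prime (Nat.card_eq_fintype_card).symm
  obtain ⟨z, rfl⟩ := (ZMod.castHom_bijective F (Nat.card_eq_fintype_card (α := F)).symm).2 t
  exact ⟨z.val, by
    rw [← map_natCast (ZMod.castHom (dvd_refl (Nat.card F)) F), ZMod.natCast_zmod_val]⟩

theorem frame_ne_top (h2 : ¬IsSquare (2 : F)) (hq : Odd (Nat.card F)) : frame F ≠ ⊤ := by
  intro h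
  have h1 := card_frame h2
  rw [h, Subgroup.card_top, card_unitary] at h1
  have h3 : 3 ≤ Nat.card F := by
    have : 1 < Nat.card F := Finite.one_lt_card
    obtain ⟨k, hk⟩ := hq
    omega
  generalize Nat.card F = q at *
  have a1 : 9 ≤ q ^ 2 := Nat.pow_le_pow_left h3 2
  have a2 : 81 ≤ q ^ 4 := Nat.pow_le_pow_left h3 4
  have a3 : 8 ^ 2 ≤ (q ^ 2 - 1) ^ 2 := Nat.pow_le_pow_left (by omega) 2
  have a4 : 81 * 10 * 8 ^ 2 ≤ q ^ 4 * (q ^ 2 + 1) * (q ^ 2 - 1) ^ 2 :=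
    Nat.mul_le_mul (Nat.mul_le_mul a2 (by omega)) a3
  omega

theorem ker_le_frame {G : Type*} [Group G] {π : unitary (M F) →* G}
    (hker : ∀ g, π g = 1 ↔ g.1 = 1 ∨ g.1 = -1) : π.ker ≤ frame F := by
  intro g hg
  rcases (hker g).1 hg with h | h
  · exact ⟨1, 1, fun i => by rw [h]; simp⟩
  · exact ⟨1, 1, fun i => by rw [h]; simp⟩

theorem isCoatom_map_frame {G : Type*} [Group G] {π : unitary (M F) →* G}
    (hπ : Function.Surjective π) (hker : ∀ g, π g = 1 ↔ g.1 = 1 ∨ g.1 = -1)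
    (h2 : ¬IsSquare (2 : F)) (hq : Odd (Nat.card F)) (hp : (Nat.card F).Prime) :
    IsCoatom ((frame F).map π) := by
  have hcomap : ((frame F).map π).comap π = frame F := by
    rw [Subgroup.comap_map_eq, sup_eq_left]
    exact ker_le_frame hker
  constructor
  · intro h
    rw [h, Subgroup.comap_top] at hcomap
    exact frame_ne_top h2 hq hcomap.symm
  · intro L hL
    have hle : frame F ≤ L.comap π := Subgroup.map_le_iff_le_comap.1 hL.le
    have hmap := Subgroup.map_comap_eq_self_of_surjective hπ L
    rcases le_frame_or_eq_top hle hp (exists_natCast_eq hp) h2 with h | h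
    · exact absurd (hmap ▸ Subgroup.map_mono h) hL.not_ge
    · rw [← hmap, h, Subgroup.map_top_of_surjective π hπ]

end Maximality

end PSp4

/-- for `q` an odd prime power and `|F| = q`, the group
`PSp₄(F) = Sp(4, F) ⧸ center` has a maximal subgroup `H` of odd index of shape `2⁴.A₅`
(i.e. admitting a normal subgroup `N` of order `16` of exponent dividing `2` with
`H ⧸ N ≅ A₅`) iff `q` is prime and `q ≡ ±3 (mod 8)`. -/
theorem psp4_maximal_odd_index_2pow4_A5_iff (q : ℕ) (hq_odd : Odd q) (hq_pp : IsPrimePow q)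
    (F : Type) [Field F] [Fintype F] (hF : Fintype.card F = q) :
    (∃ H : Subgroup (Matrix.symplecticGroup (Fin 2) F ⧸
        Subgroup.center (Matrix.symplecticGroup (Fin 2) F)),
        IsCoatom H ∧ Odd H.index ∧
          ∃ N : Subgroup H, ∃ _ : N.Normal, Nat.card N = 16 ∧ (∀ g ∈ N, g * g = 1) ∧
            Nonempty ((H ⧸ N) ≃* alternatingGroup (Fin 5))) ↔
      Nat.Prime q ∧ (q % 8 = 3 ∨ q % 8 = 5) := by
  have hcard : Nat.card F = q := by rw [Nat.card_eq_fintype_card, hF]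
  subst hcard
  have : NeZero (2 : F) := ⟨Ring.two_ne_zero fun h => by
    have := FiniteField.even_card_iff_char_two.1 h
    rw [← Nat.card_eq_fintype_card] at this
    exact (Nat.not_even_iff_odd.2 hq_odd) (Nat.even_iff.2 this)⟩
  obtain ⟨π, hπ, hker⟩ := PSp4.exists_projection (F := F)
  constructor
  · rintro ⟨H, hH, hodd, N, _, hN, hN2, hA⟩
    exact PSp4.forward π hπ hker hq_odd hH hodd hN hN2 hA
  · rintro ⟨hp, hmod⟩
    have h2 : ¬IsSquare (2 : F) := by
      rw [FiniteField.isSquare_two_iff, ← Nat.card_eq_fintype_card]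
      tauto
    refine ⟨(PSp4.frame F).map π, PSp4.isCoatom_map_frame hπ hker h2 hq_odd hp, ?_,
      PSp4.frame_shape π hker h2⟩
    rw [Subgroup.index_map, sup_eq_left.2 (PSp4.ker_le_frame hker),
      MonoidHom.range_eq_top.2 hπ, Subgroup.index_top, mul_one]
    exact (PSp4.odd_index_iff (PSp4.card_frame h2) hq_odd).2 hmod
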